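/- arXiv:1909.03874 — 5 statements merged into one kernel-verified Lean document; each statement's English description precedes it below -/
import Mathlib

section
/- Fix partitions μ and ν, an integer k ≥ 0, let λ = Φ(μ,ν,k) and m = k(k+1)/2. For pairs of partitions (μ̃,ν̃) with μ̃ ⊆ μ and ν̃ ⊆ ν write λ̃ = Φ(μ̃,ν̃,k). Then for every 0 ≤ j ≤ |μ|+|ν|: (i) coeff_m(He_{λ̃}) ≠ 0 for all such pairs, and (ii) coeff_{|λ|−2j}(He_λ) = C(|μ|+|ν|, j) · Σ_{(μ̃,ν̃): μ̃⊆μ, ν̃⊆ν, |μ̃|+|ν̃| = |μ|+|ν|−j} [ F²_{(μ̃,ν̃)} · F²_{(μ,ν)/(μ̃,ν̃)} / F²_{(μ,ν)} ] · coeff_m(He_λ) / coeff_m(He_{λ̃}), where F²_{(μ,ν)/(μ̃,ν̃)} := C(|μ|−|μ̃| + |ν|−|ν̃|, |μ|−|μ̃|) · F_{μ/μ̃} · F_{ν/ν̃} and F²_{(μ̃,ν̃)} := F²_{(μ̃,ν̃)/(∅,∅)}. -/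
/-- A partition: a weakly decreasing list of positive integers. -/
def IsPartition (l : List ℕ) : Prop :=
  l.Pairwise (· ≥ ·) ∧ ∀ x ∈ l, 0 < x

/-- The degree vector of a partition: `n_i = λ_i + ℓ(λ) − i` (here `i` is 0-indexed). -/
def degVec (l : List ℕ) (i : Fin l.length) : ℕ :=
  l.get i + (l.length - 1 - (i : ℕ))

/-- The Vandermonde determinant `Δ(n_λ) = ∏_{i<j} (n_j − n_i)` of the degree vector. -/
noncomputable def vanderQ (l : List ℕ) : ℚ :=
  ∏ i : Fin l.length, ∏ j : Fin l.length,
    if (i : ℕ) < (j : ℕ) then ((degVec l j : ℚ) - (degVec l i : ℚ)) else 1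

/-- The Wronskian Hermite polynomial `He_λ = Wr[He_{n_1},…,He_{n_ℓ}] / Δ(n_λ)`. -/
noncomputable def HeW (l : List ℕ) : Polynomial ℚ :=
  Polynomial.C (vanderQ l)⁻¹ *
    (Matrix.of fun i j : Fin l.length =>
      (⇑Polynomial.derivative)^[(i : ℕ)]
        ((Polynomial.hermite (degVec l j)).map (Int.castRingHom ℚ))).det

/-- The content sum `c(λ) = Σ_{(i,j)∈λ} (j − i)`. -/
def contentSum (l : List ℕ) : ℤ :=
  ∑ i : Fin l.length, ∑ j ∈ Finset.Icc 1 (l.get i), ((j : ℤ) - ((i : ℕ) + 1))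

/-- `Phi μ ν k` is the partition with 2-core `(k,k−1,…,2,1)` and 2-quotient `(μ,ν)`:
form the set `D` of `N = 2ℓ(μ) + 2ℓ(ν) + k` distinct naturals
`{2(a_i + ℓ(ν))} ∪ {2t : t < ℓ(ν)} ∪ {2(b_j + ℓ(μ) + k) + 1} ∪ {2t+1 : t < ℓ(μ)+k}`
(where `a`, `b` are the degree vectors of `μ`, `ν`), sort it decreasingly as
`d_1 > … > d_N`, and take the parts `d_i − (N − i)`, discarding zero parts. -/
def Phi (μ ν : List ℕ) (k : ℕ) : List ℕ :=
  let D : Finset ℕ :=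
    ((Finset.univ : Finset (Fin μ.length)).image fun i => 2 * (degVec μ i + ν.length)) ∪
    ((Finset.range ν.length).image fun t => 2 * t) ∪
    ((Finset.univ : Finset (Fin ν.length)).image fun j =>
        2 * (degVec ν j + μ.length + k) + 1) ∪
    ((Finset.range (μ.length + k)).image fun t => 2 * t + 1)
  let s := D.sort (· ≤ ·)
  (((List.range s.length).map fun t => s.getD t 0 - t).reverse).filter
    fun x => decide (0 < x)


/-- The `i`-th part of a partition list (0 beyond the length). -/
def partAt (l : List ℕ) (i : ℕ) : ℕ := l.getD i 0

/-- Containment of Young diagrams: `a ⊆ b` iff every part of `a` is at most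
the corresponding part of `b`. -/
def SubP (a b : List ℕ) : Prop := ∀ i, partAt a i ≤ partAt b i

/-- `a ⋖ b` in Young's lattice: `a ⊆ b` and `|b| = |a| + 1`. -/
def Covers (a b : List ℕ) : Prop := SubP a b ∧ a.sum + 1 = b.sum

/-- `numPaths a b` is the number of saturated chains from `a` to `b` in Young's
lattice, i.e. the skew standard-tableau count `F_{b/a}` (0 if `a ⊄ b`, and
`F_b` when `a = ∅`). -/
noncomputable def numPaths (a b : List ℕ) : ℕ :=
  Nat.card {c : Fin (b.sum - a.sum + 1) → List ℕ //
    c 0 = a ∧ c (Fin.last _) = b ∧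
    ∀ i : Fin (b.sum - a.sum),
      IsPartition (c i.castSucc) ∧ IsPartition (c i.succ) ∧
        Covers (c i.castSucc) (c i.succ)}

/-- `F²_{(a,b)/(∅,∅)}`, the number of directed paths from `(∅,∅)` to `(a,b)`
in `𝕐 × 𝕐`. -/
noncomputable def F2 (a b : List ℕ) : ℕ :=
  (a.sum + b.sum).choose a.sum * numPaths [] a * numPaths [] b

/-- `F²_{(x,y)/(a,b)}`, the number of directed paths from `(a,b)` to `(x,y)`
in `𝕐 × 𝕐`. -/
noncomputable def F2rel (a b x y : List ℕ) : ℕ :=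
  ((x.sum - a.sum) + (y.sum - b.sum)).choose (x.sum - a.sum) *
    numPaths a x * numPaths b y

/-!
Write `h_n = He_n / n!`. Since `h_n' = h_{n-1}`, the Wronskian of the `He_{n_j}` is, up to a
constant, the Jacobi–Trudi determinant `W(d) = det (h_{d_j - i})` at the beads `d = n_λ`, and
`X h_n' = n h_n + h_{n-2}` gives `X W(d)' = |λ| W(d) + (L₂ W)(d)`, where `L_s` sums over all ways of
lowering one bead by `s`. Comparing coefficients, that of `X^{|λ| - 2j}` in `W(d)` is
`(-1/2)^j / j!` times `L₂^j` applied to the leading coefficients `det (1 / (d_j - i)!)`.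

Moving a bead by two keeps its parity, so on the two-runner abacus of `Φ(μ, ν, k)` the operator `L₂`
is the sum of two commuting copies of `L₁`, one for `μ` and one for `ν`. Since the determinant
vanishes when two beads collide or one becomes negative, each copy of `L₁` only removes a corner in
Young's lattice. By the binomial theorem `L₂^j` thus counts pairs of paths, and for `j = |μ| + |ν|`
only `(∅, ∅)` is reached, which expresses the remaining determinants by the coefficients at `m`.
-/

namespace WronskianHermite

open Polynomial Matrix
open Finset.HasAntidiagonal (antidiagonal mem_antidiagonal)

section Lowering

variable (ι M : Type*) {M' : Type*} [Fintype ι] [DecidableEq ι] [AddCommGroup M] [AddCommGroup M']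

/-- The operator on functions of bead configurations `d : ι → ℤ` that sums over all ways of lowering
one bead by `s`. -/
def lower (s : ℤ) : Module.End ℤ ((ι → ℤ) → M) where
  toFun f d := ∑ j, f (d - Pi.single j s)
  map_add' f g := by ext d; simp [Finset.sum_add_distrib]
  map_smul' c f := by ext d; simp [Finset.smul_sum]

variable {ι M}

theorem lower_apply (s : ℤ) (f : (ι → ℤ) → M) (d : ι → ℤ) :
    lower ι M s f d = ∑ j, f (d - Pi.single j s) := rfl

theorem lower_comp_addMonoidHom (φ : M →+ M') (s : ℤ) (f : (ι → ℤ) → M) :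
    lower ι M' s (φ ∘ f) = φ ∘ lower ι M s f := by
  ext d
  simp [lower_apply]

end Lowering

section JacobiTrudi

variable {R : Type*} [CommRing R] {N : ℕ}

/-- The Jacobi–Trudi determinant of a sequence `g` at the beads `d`. -/
def jacobiTrudi (g : ℤ → R) (d : Fin N → ℤ) : R :=
  (of fun i j : Fin N => g (d j - i)).det

/-- The bead configuration with one more bead that encodes the same partition. -/
def shiftBeads (d : Fin N → ℤ) : Fin (N + 1) → ℤ :=
  Fin.snoc (fun i => d i + 1) 0

theorem jacobiTrudi_comp_perm (g : ℤ → R) (d : Fin N → ℤ) (σ : Equiv.Perm (Fin N)) :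
    jacobiTrudi g (d ∘ σ) = (Equiv.Perm.sign σ : ℤ) * jacobiTrudi g d :=
  det_permute' σ (of fun i j : Fin N => g (d j - i))

theorem jacobiTrudi_eq_zero_of_neg {g : ℤ → R} (hg : ∀ n < 0, g n = 0) {d : Fin N → ℤ} {j : Fin N}
    (hj : d j < 0) : jacobiTrudi g d = 0 :=
  det_eq_zero_of_column_eq_zero j fun i => hg _ (by omega)

theorem jacobiTrudi_shiftBeads {g : ℤ → R} (hg₀ : g 0 = 1) (hg : ∀ n < 0, g n = 0)
    (d : Fin N → ℤ) : jacobiTrudi g (shiftBeads d) = (-1) ^ N * jacobiTrudi g d := by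
  rw [jacobiTrudi, det_succ_column _ (Fin.last N), Fin.sum_univ_succ, Finset.sum_eq_zero]
  · have hminor : ((of fun i j : Fin (N + 1) => g (shiftBeads d j - i)).submatrix
        (Fin.succAbove 0) (Fin.succAbove (Fin.last N))) = of fun i j : Fin N => g (d j - i) := by
      ext i j
      simp [shiftBeads]
    rw [hminor]
    simp [shiftBeads, hg₀, jacobiTrudi]
  · intro i _
    simp [shiftBeads, hg (-1 + -(i : ℤ)) (by omega)]

/-- The size of the partition encoded by the beads `d`. -/
def excess (d : Fin N → ℤ) : ℤ :=
  ∑ j, d j - ∑ i : Fin N, (i : ℤ)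

theorem excess_comp_perm (d : Fin N → ℤ) (σ : Equiv.Perm (Fin N)) : excess (d ∘ σ) = excess d := by
  simp only [excess, Function.comp_apply, Equiv.sum_comp]

theorem excess_sub_single (d : Fin N → ℤ) (j : Fin N) (s : ℤ) :
    excess (d - Pi.single j s) = excess d - s := by
  simp only [excess, Pi.sub_apply, Finset.sum_sub_distrib, Finset.sum_pi_single', Finset.mem_univ,
    if_true]
  ring

theorem mul_derivative_prod {s : ℤ} {c : R[X]} {g : ℤ → R[X]}
    (hg : ∀ n, c * derivative (g n) = n • g n + g (n - s)) (u : Fin N → ℤ) :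
    c * derivative (∏ j, g (u j)) =
      (∑ j, u j) • ∏ j, g (u j) + ∑ j, ∏ i, g ((u - Pi.single j s : Fin N → ℤ) i) := by
  rw [derivative_prod_finset, Finset.mul_sum, Finset.sum_smul, ← Finset.sum_add_distrib]
  refine Finset.sum_congr rfl fun j _ => ?_
  have hlower : ∏ i, g ((u - Pi.single j s : Fin N → ℤ) i) =
      g (u j - s) * ∏ i ∈ Finset.univ.erase j, g (u i) := by
    rw [← Finset.mul_prod_erase _ _ (Finset.mem_univ j), Pi.sub_apply, Pi.single_eq_same]
    refine congrArg _ (Finset.prod_congr rfl fun i hi => ?_)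
    rw [Pi.sub_apply, Pi.single_eq_of_ne (Finset.ne_of_mem_erase hi), sub_zero]
  rw [hlower, ← Finset.mul_prod_erase _ _ (Finset.mem_univ j), mul_left_comm, hg]
  simp only [zsmul_eq_mul]
  ring

theorem mul_derivative_jacobiTrudi {s : ℤ} {c : R[X]} {g : ℤ → R[X]}
    (hg : ∀ n, c * derivative (g n) = n • g n + g (n - s)) (d : Fin N → ℤ) :
    c * derivative (jacobiTrudi g d) =
      excess d • jacobiTrudi g d + lower (Fin N) R[X] s (jacobiTrudi g) d := by
  have hterm (σ : Equiv.Perm (Fin N)) : c * derivative (∏ j, g (d j - (σ j : ℕ))) =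
      excess d • ∏ j, g (d j - (σ j : ℕ)) +
        ∑ j, ∏ i, g ((d - Pi.single j s : Fin N → ℤ) i - (σ i : ℕ)) := by
    have hsum : ∑ j, (d j - ((σ j : ℕ) : ℤ)) = excess d := by
      rw [Finset.sum_sub_distrib, Equiv.sum_comp σ fun i : Fin N => ((i : ℕ) : ℤ), excess]
    rw [mul_derivative_prod hg fun j => d j - (σ j : ℕ), hsum]
    simp only [Pi.sub_apply, sub_right_comm]
  simp only [jacobiTrudi, lower_apply, det_apply, of_apply, derivative_sum, derivative_smul,
    Finset.mul_sum, mul_smul_comm, hterm, smul_add, Finset.sum_add_distrib, Finset.smul_sum]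
  rw [Finset.sum_comm (γ := Fin N)]
  simp only [smul_comm (excess d)]

end JacobiTrudi

section Hermite

open scoped Nat

/-- The sequence `1 / n!`, extended by zero to negative `n`. -/
def invFactorial : ℤ → ℚ
  | .ofNat n => (n ! : ℚ)⁻¹
  | .negSucc _ => 0

/-- The Appell sequence `He_n / n!`, extended by zero to negative `n`. -/
noncomputable def dividedHermite : ℤ → ℚ[X]
  | .ofNat n => C (n ! : ℚ)⁻¹ * (hermite n).map (Int.castRingHom ℚ)
  | .negSucc _ => 0

theorem invFactorial_natCast (n : ℕ) : invFactorial n = (n ! : ℚ)⁻¹ := rfl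

theorem dividedHermite_natCast (n : ℕ) :
    dividedHermite n = C (n ! : ℚ)⁻¹ * (hermite n).map (Int.castRingHom ℚ) := rfl

theorem invFactorial_of_neg : ∀ n < 0, invFactorial n = 0
  | .negSucc _, _ => rfl

theorem dividedHermite_of_neg : ∀ n < 0, dividedHermite n = 0
  | .negSucc _, _ => rfl

theorem invFactorial_zero : invFactorial 0 = 1 := by
  rw [← Nat.cast_zero, invFactorial_natCast, Nat.factorial_zero, Nat.cast_one, inv_one]

theorem dividedHermite_zero : dividedHermite 0 = 1 := by
  rw [← Nat.cast_zero, dividedHermite_natCast]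
  simp

theorem derivative_hermite_succ (n : ℕ) :
    derivative (hermite (n + 1)) = (n + 1 : ℤ[X]) * hermite n := by
  induction n with
  | zero => simp
  | succ n ih =>
    rw [hermite_succ (n + 1), derivative_sub, derivative_mul, ih, derivative_mul]
    simp only [derivative_X, derivative_add, derivative_natCast, derivative_one, hermite_succ n]
    push_cast
    ring

theorem derivative_dividedHermite :
    ∀ n : ℤ, derivative (dividedHermite n) = dividedHermite (n - 1)
  | .negSucc n => by
    rw [dividedHermite_of_neg _ (Int.negSucc_lt_zero n), dividedHermite_of_neg _ (by omega),
      derivative_zero]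
  | .ofNat 0 => by simp [dividedHermite_zero, dividedHermite_of_neg]
  | .ofNat (n + 1) => by
    have hn : (n + 1 : ℚ) ≠ 0 := by positivity
    rw [Int.ofNat_eq_natCast, Nat.cast_succ, add_sub_cancel_right, ← Nat.cast_succ,
      dividedHermite_natCast, dividedHermite_natCast, derivative_C_mul, derivative_map,
      derivative_hermite_succ, Polynomial.map_mul, ← mul_assoc]
    congr 1
    simp only [Polynomial.map_add, Polynomial.map_natCast, Polynomial.map_one]
    rw [← C_eq_natCast, ← C_1, ← C_add, ← C_mul, Nat.factorial_succ]
    push_cast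
    field_simp

theorem X_mul_dividedHermite (n : ℕ) :
    X * dividedHermite n = (n + 1 : ℤ) • dividedHermite (n + 1) + dividedHermite (n - 1) := by
  have hn : (n + 1 : ℚ) ≠ 0 := by positivity
  rw [← derivative_dividedHermite, ← Nat.cast_succ, dividedHermite_natCast, dividedHermite_natCast,
    hermite_succ, derivative_C_mul, derivative_map, Nat.factorial_succ, Polynomial.map_sub,
    Polynomial.map_mul, map_X, zsmul_eq_mul, ← C_eq_intCast, ← mul_assoc (C _) (C _), ← C_mul]
  have hfact : ((n.succ : ℤ) : ℚ) * (((n + 1) * n ! : ℕ) : ℚ)⁻¹ = (n ! : ℚ)⁻¹ := by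
    push_cast
    field_simp
  rw [hfact]
  ring

theorem X_mul_derivative_dividedHermite (n : ℤ) :
    X * derivative (dividedHermite n) = n • dividedHermite n + dividedHermite (n - 2) := by
  rw [derivative_dividedHermite]
  rcases lt_or_ge 0 n with hn | hn
  · obtain ⟨m, rfl⟩ : ∃ m : ℕ, n = m + 1 := ⟨(n - 1).toNat, by omega⟩
    rw [add_sub_cancel_right, X_mul_dividedHermite]
    congr 2
    ring
  · rw [dividedHermite_of_neg (n - 1) (by omega), dividedHermite_of_neg (n - 2) (by omega)]
    rcases hn.eq_or_lt with rfl | hn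
    · simp
    · simp [dividedHermite_of_neg n hn]

theorem coeff_prod_sum_of_natDegree_le {R ι : Type*} [CommSemiring R] (s : Finset ι)
    (f : ι → R[X]) (n : ι → ℕ) (h : ∀ i ∈ s, (f i).natDegree ≤ n i) :
    (∏ i ∈ s, f i).coeff (∑ i ∈ s, n i) = ∏ i ∈ s, (f i).coeff (n i) := by
  induction s using Finset.cons_induction with
  | empty => simp
  | cons a s ha ih =>
    rw [Finset.forall_mem_cons] at h
    rw [Finset.prod_cons, Finset.sum_cons, Finset.prod_cons, ← ih h.2]
    exact coeff_mul_add_eq_of_natDegree_le h.1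
      ((natDegree_prod_le s f).trans (Finset.sum_le_sum h.2))

theorem coeff_prod_dividedHermite {N p : ℕ} (u : Fin N → ℤ) (hu : ∑ j, u j = p) :
    (∏ j, dividedHermite (u j)).coeff p = ∏ j, invFactorial (u j) := by
  by_cases hneg : ∃ j, u j < 0
  · obtain ⟨j, hj⟩ := hneg
    rw [Finset.prod_eq_zero (Finset.mem_univ j) (dividedHermite_of_neg _ hj),
      Finset.prod_eq_zero (Finset.mem_univ j) (invFactorial_of_neg _ hj), coeff_zero]
  · push Not at hneg
    lift u to Fin N → ℕ using hneg
    obtain rfl : ∑ j, u j = p := by zify; exact hu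
    have hdeg (j) : (dividedHermite (u j)).natDegree ≤ u j := by
      rw [dividedHermite_natCast]
      exact (natDegree_C_mul_le _ _).trans (natDegree_map_le.trans (natDegree_hermite).le)
    rw [coeff_prod_sum_of_natDegree_le _ _ _ fun j _ => hdeg j]
    refine Finset.prod_congr rfl fun j _ => ?_
    rw [dividedHermite_natCast, coeff_C_mul, coeff_map, coeff_hermite_self, map_one, mul_one,
      invFactorial_natCast]

theorem coeff_excess_jacobiTrudi_dividedHermite {N p : ℕ} {d : Fin N → ℤ} (hd : excess d = p) :
    (jacobiTrudi dividedHermite d).coeff p = jacobiTrudi invFactorial d := by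
  simp only [jacobiTrudi, det_apply, of_apply, finsetSum_coeff, coeff_smul]
  refine Finset.sum_congr rfl fun σ _ => ?_
  rw [coeff_prod_dividedHermite]
  rw [← hd, excess, Finset.sum_sub_distrib, Equiv.sum_comp σ fun i : Fin N => ((i : ℕ) : ℤ)]

theorem coeff_X_mul_derivative {R : Type*} [Semiring R] (q : R[X]) :
    ∀ p : ℕ, (X * derivative q).coeff p = p * q.coeff p
  | 0 => by simp
  | p + 1 => by rw [coeff_X_mul, coeff_derivative, ← Nat.cast_succ, Nat.cast_comm]

theorem coeff_jacobiTrudi_dividedHermite {N : ℕ} (p K : ℕ) {d : Fin N → ℤ}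
    (hd : excess d = p + 2 * K) :
    (jacobiTrudi dividedHermite d).coeff p =
      (-1 / 2) ^ K / K ! * (lower (Fin N) ℚ 2 ^ K) (jacobiTrudi invFactorial) d := by
  induction K generalizing d with
  | zero => simpa using coeff_excess_jacobiTrudi_dividedHermite (by simpa using hd)
  | succ K ih =>
    have hlower (j) : (jacobiTrudi dividedHermite (d - Pi.single j 2)).coeff p =
        (-1 / 2) ^ K / K ! * (lower (Fin N) ℚ 2 ^ K) (jacobiTrudi invFactorial)
          (d - Pi.single j 2) :=
      ih (by rw [excess_sub_single, hd]; push_cast; ring)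
    have heuler := congrArg (coeff · p)
      (mul_derivative_jacobiTrudi X_mul_derivative_dividedHermite d)
    simp only [coeff_X_mul_derivative, coeff_add, coeff_smul, lower_apply, finsetSum_coeff, hlower,
      ← Finset.mul_sum, hd] at heuler
    rw [zsmul_eq_mul] at heuler
    rw [pow_succ' (lower _ _ _), Module.End.mul_apply, lower_apply, Nat.factorial_succ]
    push_cast at heuler ⊢
    field_simp at heuler ⊢
    linear_combination (-1 / 2) * heuler

end Hermite

section NormalizedWronskian

open scoped Nat

variable {N N' : ℕ}

theorem iterate_derivative_dividedHermite (n i : ℕ) :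
    derivative^[i] (dividedHermite n) = dividedHermite (n - i) := by
  induction i with
  | zero => simp
  | succ i ih =>
    rw [Function.iterate_succ_apply', ih, derivative_dividedHermite, Nat.cast_succ, sub_sub]

theorem det_iterate_derivative_hermite (d : Fin N → ℕ) :
    (of fun i j : Fin N =>
      derivative^[i] ((hermite (d j)).map (Int.castRingHom ℚ))).det =
      C (∏ j, ((d j)! : ℚ)) * jacobiTrudi dividedHermite fun j => (d j : ℤ) := by
  rw [map_prod, jacobiTrudi, ← det_mul_row]
  congr 1
  ext1 i j
  have hfact : ((d j)! : ℚ) ≠ 0 := by positivity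
  rw [of_apply, of_apply, of_apply, ← iterate_derivative_dividedHermite, dividedHermite_natCast,
    ← iterate_derivative_C_mul, ← mul_assoc, ← C_mul, mul_inv_cancel₀ hfact, C_1, one_mul]

theorem factorial_mul_invFactorial_sub (n i : ℕ) :
    (n ! : ℚ) * invFactorial (n - i) = n.descFactorial i := by
  rcases lt_or_ge n i with h | h
  · rw [invFactorial_of_neg _ (by omega), Nat.descFactorial_of_lt h, mul_zero, Nat.cast_zero]
  · have hfact : ((n - i)! : ℚ) ≠ 0 := by positivity
    rw [← Nat.cast_sub h, invFactorial_natCast, ← Nat.factorial_mul_descFactorial h, Nat.cast_mul]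
    field_simp

theorem det_vandermonde_natCast (d : Fin N → ℕ) :
    (vandermonde fun j => (d j : ℚ)).det =
      (∏ j, ((d j)! : ℚ)) * jacobiTrudi invFactorial fun j => (d j : ℤ) := by
  rw [det_eval_matrixOfPolynomials_eq_det_vandermonde _ (fun i => descPochhammer ℚ i)
    (fun i => descPochhammer_natDegree ℚ i) (fun i => monic_descPochhammer ℚ i),
    ← det_transpose, jacobiTrudi, ← det_mul_row]
  congr 1
  ext1 i j
  rw [transpose_apply, of_apply, of_apply, of_apply, descPochhammer_eval_eq_descFactorial,
    factorial_mul_invFactorial_sub]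

theorem vanderQ_eq_det_vandermonde (l : List ℕ) :
    vanderQ l = (vandermonde fun j => (degVec l j : ℚ)).det := by
  rw [vanderQ, det_vandermonde]
  refine Finset.prod_congr rfl fun i _ => ?_
  rw [← Finset.prod_filter]
  exact Finset.prod_congr (by ext j; simp) fun _ _ => rfl

theorem jacobiTrudi_invFactorial_ne_zero {d : Fin N → ℤ} (hd : Function.Injective d)
    (hd₀ : ∀ j, 0 ≤ d j) : jacobiTrudi invFactorial d ≠ 0 := by
  lift d to Fin N → ℕ using hd₀
  have hinj : Function.Injective fun j => (d j : ℚ) := fun i j h => hd (by simpa using h)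
  exact right_ne_zero_of_mul (det_vandermonde_natCast d ▸ det_vandermonde_ne_zero_iff.2 hinj)

/-- The Wronskian Hermite polynomial of the partition encoded by the beads `d`, which may contain
redundant beads and appear in any order. -/
noncomputable def normalizedWronskian (d : Fin N → ℤ) : ℚ[X] :=
  C (jacobiTrudi invFactorial d)⁻¹ * jacobiTrudi dividedHermite d

theorem HeW_eq_normalizedWronskian_degVec (l : List ℕ) :
    HeW l = normalizedWronskian fun j => (degVec l j : ℤ) := by
  have hfact : ∏ j, ((degVec l j)! : ℚ) ≠ 0 := Finset.prod_ne_zero_iff.2 fun j _ => by positivity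
  rw [HeW, normalizedWronskian, det_iterate_derivative_hermite, vanderQ_eq_det_vandermonde,
    det_vandermonde_natCast, ← mul_assoc, ← C_mul]
  congr 2
  field_simp

theorem normalizedWronskian_comp_perm (d : Fin N → ℤ) (σ : Equiv.Perm (Fin N)) :
    normalizedWronskian (d ∘ σ) = normalizedWronskian d := by
  rcases Int.units_eq_one_or (Equiv.Perm.sign σ) with h | h <;>
    simp [normalizedWronskian, jacobiTrudi_comp_perm, h]

theorem normalizedWronskian_shiftBeads (d : Fin N → ℤ) :
    normalizedWronskian (shiftBeads d) = normalizedWronskian d := by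
  rcases N.even_or_odd with h | h <;>
    simp [normalizedWronskian, h.neg_one_pow,
      jacobiTrudi_shiftBeads invFactorial_zero invFactorial_of_neg,
      jacobiTrudi_shiftBeads dividedHermite_zero dividedHermite_of_neg]

theorem coeff_normalizedWronskian (p K : ℕ) {d : Fin N → ℤ} (hd : excess d = p + 2 * K) :
    (normalizedWronskian d).coeff p =
      (-1 / 2) ^ K / K ! * (lower (Fin N) ℚ 2 ^ K) (jacobiTrudi invFactorial) d /
        jacobiTrudi invFactorial d := by
  rw [normalizedWronskian, coeff_C_mul, coeff_jacobiTrudi_dividedHermite p K hd, inv_mul_eq_div]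

theorem exists_equiv_of_range_eq {ι ι' α : Type*} {d : ι → α} {d' : ι' → α}
    (hd : Function.Injective d) (hd' : Function.Injective d') (h : Set.range d = Set.range d') :
    ∃ e : ι ≃ ι', d = d' ∘ e :=
  ⟨(Equiv.ofInjective d hd).trans ((Equiv.setCongr h).trans (Equiv.ofInjective d' hd').symm), by
    ext i
    simp [Equiv.apply_ofInjective_symm]⟩

theorem normalizedWronskian_eq_of_range_eq {d : Fin N → ℤ} {d' : Fin N' → ℤ}
    (hd : Function.Injective d) (hd' : Function.Injective d') (h : Set.range d = Set.range d') :
    normalizedWronskian d = normalizedWronskian d' := by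
  obtain ⟨e, rfl⟩ := exists_equiv_of_range_eq hd hd' h
  obtain rfl : N = N' := by simpa using Fintype.card_congr e
  exact normalizedWronskian_comp_perm d' e

theorem excess_eq_of_range_eq {d : Fin N → ℤ} {d' : Fin N' → ℤ}
    (hd : Function.Injective d) (hd' : Function.Injective d') (h : Set.range d = Set.range d') :
    excess d = excess d' := by
  obtain ⟨e, rfl⟩ := exists_equiv_of_range_eq hd hd' h
  obtain rfl : N = N' := by simpa using Fintype.card_congr e
  exact excess_comp_perm d' e

end NormalizedWronskian

section Partitions

variable {a b c l : List ℕ} {n : ℕ}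

theorem partAt_eq_zero {i : ℕ} (h : l.length ≤ i) : partAt l i = 0 :=
  List.getD_eq_default _ _ h

theorem partAt_eq_getElem {i : ℕ} (h : i < l.length) : partAt l i = l[i] :=
  List.getD_eq_getElem _ _ h

theorem partAt_antitone (hl : l.Pairwise (· ≥ ·)) : Antitone (partAt l) := by
  intro i j hij
  rcases lt_or_ge j l.length with hj | hj
  · rw [partAt_eq_getElem hj, partAt_eq_getElem (hij.trans_lt hj)]
    rcases hij.eq_or_lt with rfl | hlt
    · exact le_rfl
    · exact List.pairwise_iff_getElem.1 hl i j _ hj hlt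
  · rw [partAt_eq_zero hj]
    exact Nat.zero_le _

theorem partAt_pos_iff (hl : ∀ x ∈ l, 0 < x) {i : ℕ} : 0 < partAt l i ↔ i < l.length := by
  refine ⟨fun h => ?_, fun h => ?_⟩
  · by_contra hi
    exact h.ne' (partAt_eq_zero (not_lt.1 hi))
  · rw [partAt_eq_getElem h]
    exact hl _ (List.getElem_mem h)

theorem partAt_injOn : Set.InjOn partAt {l | IsPartition l} := by
  intro a ha b hb h
  have hlen : a.length = b.length := eq_of_forall_lt_iff fun i => by
    rw [← partAt_pos_iff ha.2, ← partAt_pos_iff hb.2, h]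
  refine List.ext_getElem hlen fun i hia hib => ?_
  rw [← partAt_eq_getElem hia, ← partAt_eq_getElem hib, h]

theorem sum_partAt (h : l.length ≤ n) : ∑ i : Fin n, partAt l i = l.sum := by
  induction l generalizing n with
  | nil => simp [partAt]
  | cons x l ih =>
    obtain ⟨n, rfl⟩ := Nat.exists_eq_add_of_le' ((Nat.le_add_left 1 _).trans h)
    rw [Fin.sum_univ_succ, List.sum_cons, ← ih (Nat.le_of_succ_le_succ h)]
    rfl

theorem isPartition_nil : IsPartition [] := by simp [IsPartition]

theorem isPartition_filter_pos (hl : l.Pairwise (· ≥ ·)) :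
    IsPartition (l.filter fun x => decide (0 < x)) :=
  ⟨hl.filter _, fun _ hx => of_decide_eq_true (List.mem_filter.1 hx).2⟩

theorem partAt_filter_pos (hl : l.Pairwise (· ≥ ·)) :
    partAt (l.filter fun x => decide (0 < x)) = partAt l := by
  induction l with
  | nil => rfl
  | cons x l ih =>
    obtain ⟨hx, hl'⟩ := List.pairwise_cons.1 hl
    funext i
    rcases x.eq_zero_or_pos with rfl | hpos
    · have hzero : partAt (0 :: l) i = 0 :=
        Nat.eq_zero_of_le_zero ((partAt_antitone hl (Nat.zero_le i)).trans_eq rfl)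
      rw [hzero, List.filter_cons_of_neg (by simp), ih hl']
      exact Nat.eq_zero_of_le_zero (hzero ▸ (partAt_antitone hl (Nat.le_succ i)))
    · rw [List.filter_cons_of_pos (by simpa using hpos)]
      cases i with
      | zero => rfl
      | succ i => exact congrFun (ih hl') i

theorem exists_isPartition_partAt_eq {p : ℕ → ℕ} (hp : Antitone p) (hn : p n = 0) :
    ∃ l, IsPartition l ∧ partAt l = p := by
  have hsorted : ((List.range n).map p).Pairwise (· ≥ ·) := by
    rw [List.pairwise_map]
    exact List.pairwise_lt_range.imp fun h => hp h.le
  refine ⟨_, isPartition_filter_pos hsorted, (partAt_filter_pos hsorted).trans ?_⟩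
  funext i
  rcases lt_or_ge i n with h | h
  · rw [partAt_eq_getElem (by simpa using h)]
    simp
  · rw [partAt_eq_zero (by simpa using h)]
    exact (Nat.eq_zero_of_le_zero (hn ▸ hp h)).symm

theorem subP_refl (a : List ℕ) : SubP a a := fun _ => le_rfl

theorem subP_trans (hab : SubP a b) (hbc : SubP b c) : SubP a c :=
  fun i => (hab i).trans (hbc i)

theorem length_le_of_subP (ha : IsPartition a) (h : SubP a b) : a.length ≤ b.length := by
  by_contra! hlen
  have hpos := ((partAt_pos_iff ha.2).2 hlen).trans_le (h b.length)
  exact hpos.ne' (partAt_eq_zero le_rfl)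

/-- The first-column hook lengths of `l`, padded with zero parts to `n` rows, as beads. -/
def betaNumbers (n : ℕ) (l : List ℕ) (i : Fin n) : ℤ :=
  partAt l i + (n - 1 - i : ℤ)

theorem betaNumbers_nonneg (n : ℕ) (l : List ℕ) (i : Fin n) : 0 ≤ betaNumbers n l i := by
  unfold betaNumbers
  omega

theorem betaNumbers_strictAnti (n : ℕ) (hl : l.Pairwise (· ≥ ·)) :
    StrictAnti (betaNumbers n l) := by
  intro i j hij
  have hpart := partAt_antitone hl (Fin.le_def.1 hij.le)
  unfold betaNumbers
  omega

theorem betaNumbers_injOn (n : ℕ) :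
    Set.InjOn (betaNumbers n) {l | IsPartition l ∧ l.length ≤ n} := by
  intro a ha b hb h
  refine partAt_injOn ha.1 hb.1 (funext fun i => ?_)
  rcases lt_or_ge i n with hi | hi
  · have hbeta := congrFun h ⟨i, hi⟩
    simp only [betaNumbers] at hbeta
    omega
  · rw [partAt_eq_zero (ha.2.trans hi), partAt_eq_zero (hb.2.trans hi)]

theorem excess_betaNumbers (hl : l.length ≤ n) : excess (betaNumbers n l) = l.sum := by
  have hrev : ∑ i : Fin n, (n - 1 - i : ℤ) = ∑ i : Fin n, (i : ℤ) := by
    rw [← Equiv.sum_comp Fin.revPerm]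
    refine Finset.sum_congr rfl fun i _ => ?_
    rw [Fin.revPerm_apply, Fin.val_rev]
    omega
  rw [excess, ← sum_partAt hl]
  simp only [betaNumbers, Finset.sum_add_distrib, hrev, Nat.cast_sum]
  ring

theorem betaNumbers_succ (hl : l.length ≤ n) :
    betaNumbers (n + 1) l = shiftBeads (betaNumbers n l) := by
  funext i
  refine Fin.lastCases ?_ (fun i => ?_) i
  · simp [betaNumbers, shiftBeads, partAt_eq_zero hl]
  · simp only [betaNumbers, shiftBeads, Fin.snoc_castSucc, Fin.val_castSucc, Nat.cast_succ]
    ring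

theorem finite_setOf_isPartition_and_subP (b : List ℕ) :
    {a | IsPartition a ∧ SubP a b}.Finite := by
  have hlen : {a | IsPartition a ∧ SubP a b} ⊆ {a | IsPartition a ∧ a.length ≤ b.length} :=
    fun _ ⟨ha, hab⟩ => ⟨ha, length_le_of_subP ha hab⟩
  have hinj := (betaNumbers_injOn b.length).mono hlen
  refine Set.Finite.of_finite_image ((Set.finite_Icc 0 (betaNumbers b.length b)).subset ?_) hinj
  rintro _ ⟨a, ⟨-, hab⟩, rfl⟩
  exact ⟨betaNumbers_nonneg _ _, fun i => add_le_add_left (Nat.cast_le.2 (hab i)) _⟩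

/-- The partitions contained in `b`. -/
noncomputable def subpartitions (b : List ℕ) : Finset (List ℕ) :=
  (finite_setOf_isPartition_and_subP b).toFinset

theorem mem_subpartitions : a ∈ subpartitions b ↔ IsPartition a ∧ SubP a b := by
  simp [subpartitions]

/-- The covering relation of Young's lattice, between partitions. -/
def YoungCovers (a b : List ℕ) : Prop :=
  IsPartition a ∧ IsPartition b ∧ Covers a b

theorem finite_setOf_youngCovers (b : List ℕ) : {a | YoungCovers a b}.Finite :=
  (finite_setOf_isPartition_and_subP b).subset fun _ h => ⟨h.1, h.2.2.1⟩

/-- The partitions covered by `b` in Young's lattice. -/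
noncomputable def lowerCovers (b : List ℕ) : Finset (List ℕ) :=
  (finite_setOf_youngCovers b).toFinset

theorem mem_lowerCovers : a ∈ lowerCovers b ↔ YoungCovers a b := by
  simp [lowerCovers]

theorem exists_eq_sub_single {ι : Type*} [Fintype ι] [DecidableEq ι] {d d' : ι → ℤ} (hle : d' ≤ d)
    (hsum : ∑ i, d' i + 1 = ∑ i, d i) : ∃ j, d' = d - Pi.single j 1 := by
  obtain ⟨j, -, hj⟩ : ∃ j ∈ Finset.univ, d' j < d j := Finset.exists_lt_of_sum_lt (by omega)
  have hle' (i : ι) : d' i ≤ (d - Pi.single j 1 : ι → ℤ) i := by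
    rcases eq_or_ne i j with rfl | hij
    · simpa using Int.le_sub_one_of_lt hj
    · simpa [hij] using hle i
  refine ⟨j, funext fun i => (Finset.sum_eq_sum_iff_of_le fun i _ => hle' i).1 ?_ i
    (Finset.mem_univ i)⟩
  simp [Finset.sum_sub_distrib, ← hsum]

theorem YoungCovers.exists_betaNumbers_eq_sub_single (h : YoungCovers a b) (hb : b.length ≤ n) :
    ∃ j, betaNumbers n a = betaNumbers n b - Pi.single j 1 := by
  obtain ⟨ha, -, hsub, hsum⟩ := h
  refine exists_eq_sub_single (fun i => add_le_add_left (Nat.cast_le.2 (hsub i)) _) ?_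
  have hexc := excess_betaNumbers ((length_le_of_subP ha hsub).trans hb)
  have hexc' := excess_betaNumbers hb
  unfold excess at hexc hexc'
  omega

theorem exists_youngCovers_of_partAt_succ_lt {j : Fin n} (hb : IsPartition b) (hbn : b.length ≤ n)
    (hj : partAt b (j + 1) < partAt b j) :
    ∃ a, YoungCovers a b ∧ betaNumbers n a = betaNumbers n b - Pi.single j 1 := by
  obtain ⟨a, ha, hpart⟩ : ∃ a, IsPartition a ∧ partAt a = partAt b - Pi.single (j : ℕ) 1 := by
    refine exists_isPartition_partAt_eq (n := b.length) (antitone_nat_of_succ_le fun i => ?_) ?_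
    · have hi : partAt b (i + 1) ≤ partAt b i := partAt_antitone hb.1 (Nat.le_succ i)
      simp only [Pi.sub_apply, Pi.single_apply]
      split_ifs with hij <;> subst_vars <;> omega
    · rw [Pi.sub_apply, partAt_eq_zero le_rfl, Nat.zero_sub]
  have hsub : SubP a b := fun i => hpart ▸ Nat.sub_le _ _
  have hbeta : betaNumbers n a = betaNumbers n b - Pi.single j 1 := by
    funext i
    simp only [betaNumbers, hpart, Pi.sub_apply, Pi.single_apply, Fin.ext_iff]
    split_ifs with hij
    · rw [hij, Nat.cast_sub (Nat.one_le_of_lt hj)]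
      ring
    · simp
  refine ⟨a, ⟨ha, hb, hsub, ?_⟩, hbeta⟩
  have hexc := excess_sub_single (betaNumbers n b) j 1
  rw [← hbeta, excess_betaNumbers hbn, excess_betaNumbers ((length_le_of_subP ha hsub).trans hbn)]
    at hexc
  omega

end Partitions

section Chains

variable {α : Type*} {r : α → α → Prop} {s : α → Finset α} {n : ℕ} {a b : α}

/-- The chains of length `n` from `a` to `b` for the relation `r`. -/
def chains (r : α → α → Prop) (n : ℕ) (a b : α) : Set (Fin (n + 1) → α) :=
  {c | c 0 = a ∧ c (Fin.last n) = b ∧ ∀ i : Fin n, r (c i.castSucc) (c i.succ)}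

/-- The number of chains of length `n` from `a` to `b` for the relation `r`, with junk value `0` if
there are infinitely many. -/
noncomputable def numChains (r : α → α → Prop) (n : ℕ) (a b : α) : ℕ :=
  Nat.card (chains r n a b)

theorem snoc_mem_chains_iff {c : Fin (n + 1) → α} :
    (Fin.snoc c b : Fin (n + 2) → α) ∈ chains r (n + 1) a b ↔
      c ∈ chains r n a (c (Fin.last n)) ∧ r (c (Fin.last n)) b := by
  simp only [chains, Set.mem_ofPred_eq, Fin.forall_fin_succ', Fin.succ_last, Fin.succ_castSucc,
    Fin.snoc_castSucc, Fin.snoc_last, true_and, ← Fin.castSucc_zero, and_assoc]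

theorem chains_zero (r : α → α → Prop) (a b : α) :
    chains r 0 a b = {c | a = b ∧ c = fun _ => a} := by
  ext c
  constructor
  · rintro ⟨rfl, h, -⟩
    exact ⟨h, funext fun i => congrArg c (Fin.fin_one_eq_zero i)⟩
  · rintro ⟨rfl, rfl⟩
    exact ⟨rfl, rfl, fun i => i.elim0⟩

/-- Removing the last element of a chain, which leaves a chain ending at a predecessor of `b`. -/
noncomputable def chainsSuccEquiv (hs : ∀ a b, a ∈ s b ↔ r a b) (n : ℕ) (a b : α) :
    (Σ x : s b, chains r n a x) ≃ chains r (n + 1) a b :=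
  Equiv.ofBijective (fun p => ⟨Fin.snoc p.2 b, by
      obtain ⟨⟨x, hx⟩, c, hca, hcx, hc⟩ := p
      obtain rfl : c (Fin.last n) = x := hcx
      exact snoc_mem_chains_iff.2 ⟨⟨hca, rfl, hc⟩, (hs _ b).1 hx⟩⟩) <| by
    constructor
    · rintro ⟨⟨x, hx⟩, c, hca, hcx, hc⟩ ⟨⟨y, hy⟩, d, hda, hdy, hd⟩ h
      have hsnoc : (Fin.snoc c b : Fin (n + 2) → α) = Fin.snoc d b := congrArg Subtype.val h
      obtain rfl : c = d := (Fin.snoc_injective2 hsnoc).1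
      obtain rfl : x = y := hcx.symm.trans hdy
      rfl
    · rintro ⟨c, hc⟩
      obtain ⟨c, rfl⟩ : ∃ c', c = Fin.snoc c' b :=
        ⟨Fin.init c, by rw [← hc.2.1, Fin.snoc_init_self]⟩
      rw [snoc_mem_chains_iff, ← hs] at hc
      exact ⟨⟨⟨_, hc.2⟩, c, hc.1⟩, rfl⟩

theorem finite_chains (hs : ∀ a b, a ∈ s b ↔ r a b) (n : ℕ) (a b : α) :
    Finite (chains r n a b) := by
  induction n generalizing b with
  | zero =>
    rw [chains_zero]
    exact ((Set.finite_singleton _).subset fun _ h => h.2).to_subtype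
  | succ n ih => exact Finite.of_equiv _ (chainsSuccEquiv hs n a b)

open Classical in
theorem numChains_zero (r : α → α → Prop) (a b : α) :
    numChains r 0 a b = if a = b then 1 else 0 := by
  rw [numChains, chains_zero]
  split_ifs with h <;> simp [h]

theorem numChains_succ (hs : ∀ a b, a ∈ s b ↔ r a b) (n : ℕ) (a b : α) :
    numChains r (n + 1) a b = ∑ x ∈ s b, numChains r n a x := by
  have (x : s b) := finite_chains hs n a x
  rw [numChains, ← Nat.card_congr (chainsSuccEquiv hs n a b), Nat.card_sigma]
  exact Finset.sum_coe_sort (s b) (numChains r n a)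

end Chains

section YoungLattice

variable {a b : List ℕ} {m n : ℕ}

theorem sum_le_of_subP (hab : SubP a b) : a.sum ≤ b.sum := by
  rw [← sum_partAt (le_max_left a.length b.length), ← sum_partAt (le_max_right a.length b.length)]
  exact Finset.sum_le_sum fun i _ => hab i

theorem eq_nil_of_sum_eq_zero (hb : IsPartition b) (h : b.sum = 0) : b = [] :=
  List.eq_nil_iff_forall_not_mem.2 fun x hx => (hb.2 x hx).ne' (List.sum_eq_zero_iff.1 h x hx)

theorem exists_youngCovers (hb : IsPartition b) (h : b.sum ≠ 0) : ∃ a, YoungCovers a b := by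
  obtain ⟨n, hn⟩ : ∃ n, b.length = n + 1 :=
    Nat.exists_eq_succ_of_ne_zero fun hlen => h (by simp [List.length_eq_zero_iff.1 hlen])
  have hlast : partAt b (n + 1) < partAt b n :=
    (partAt_eq_zero hn.le).trans_lt ((partAt_pos_iff hb.2).2 (by omega))
  obtain ⟨a, ha, -⟩ := exists_youngCovers_of_partAt_succ_lt (j := Fin.last n) hb hn.le hlast
  exact ⟨a, ha⟩

theorem subP_and_sum_add_eq_of_numChains_ne_zero (h : numChains YoungCovers m a b ≠ 0) :
    SubP a b ∧ a.sum + m = b.sum := by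
  induction m generalizing b with
  | zero =>
    obtain rfl : a = b := by
      by_contra hab
      exact h (by rw [numChains_zero, if_neg hab])
    exact ⟨subP_refl a, rfl⟩
  | succ m ih =>
    rw [numChains_succ fun _ _ => mem_lowerCovers] at h
    obtain ⟨x, hx, hchain⟩ := Finset.exists_ne_zero_of_sum_ne_zero h
    obtain ⟨-, -, hxb, hsum⟩ := mem_lowerCovers.1 hx
    obtain ⟨hax, hsum'⟩ := ih hchain
    exact ⟨subP_trans hax hxb, by omega⟩

theorem numPaths_eq_numChains (a b : List ℕ) :
    numPaths a b = numChains YoungCovers (b.sum - a.sum) a b := rfl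

theorem numPaths_nil_pos (hb : IsPartition b) : 0 < numPaths [] b := by
  rw [numPaths_eq_numChains, List.sum_nil, Nat.sub_zero]
  induction hm : b.sum generalizing b with
  | zero =>
    obtain rfl := eq_nil_of_sum_eq_zero hb hm
    simp [numChains_zero]
  | succ m ih =>
    obtain ⟨a, ha⟩ := exists_youngCovers hb (hm.trans_ne m.succ_ne_zero)
    have hsum : a.sum = m := Nat.succ_injective (ha.2.2.2.trans hm)
    rw [numChains_succ fun _ _ => mem_lowerCovers]
    exact (ih ha.1 hsum).trans_le
      (Finset.single_le_sum (fun _ _ => Nat.zero_le _) (mem_lowerCovers.2 ha))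

end YoungLattice

section Branching

variable {ι M : Type*} [DecidableEq ι] [AddCommGroup M]

/-- Functions of bead configurations that, like Jacobi–Trudi determinants, are alternating in the
beads and vanish when a bead is negative. -/
structure IsBeadAlternating (f : (ι → ℤ) → M) : Prop where
  map_swap : ∀ (d : ι → ℤ) {i j : ι}, i ≠ j → f (d ∘ Equiv.swap i j) = -f d
  map_of_neg : ∀ (d : ι → ℤ) {j : ι}, d j < 0 → f d = 0

variable {f : (ι → ℤ) → M}

theorem IsBeadAlternating.map_eq_zero_of_eq [IsAddTorsionFree M] (hf : IsBeadAlternating f)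
    {d : ι → ℤ} {i j : ι} (hij : i ≠ j) (h : d i = d j) : f d = 0 := by
  have hswap : d ∘ Equiv.swap i j = d := by
    rw [Equiv.comp_swap_eq_update, h, Function.update_eq_self, ← h, Function.update_eq_self]
  have hneg := hf.map_swap d hij
  rw [hswap] at hneg
  exact self_eq_neg.1 hneg

variable [Fintype ι]

theorem isBeadAlternating_lower (hf : IsBeadAlternating f) {s : ℤ} (hs : 0 ≤ s) :
    IsBeadAlternating (lower ι M s f) where
  map_swap d i j hij := by
    rw [lower_apply, lower_apply, ← Equiv.sum_comp (Equiv.swap i j), ← Finset.sum_neg_distrib]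
    refine Finset.sum_congr rfl fun x _ => ?_
    rw [← hf.map_swap _ hij]
    congr 1
    ext y
    simp [Pi.single_apply, Equiv.swap_apply_eq_iff]
  map_of_neg d j hj := Finset.sum_eq_zero fun i _ => hf.map_of_neg _ (j := j) <| by
    have hsingle : (0 : ι → ℤ) ≤ Pi.single i s := Pi.single_nonneg.2 hs
    exact (sub_le_self d hsingle j).trans_lt hj

theorem isBeadAlternating_lower_pow (hf : IsBeadAlternating f) {s : ℤ} (hs : 0 ≤ s) (m : ℕ) :
    IsBeadAlternating ((lower ι M s ^ m) f) := by
  induction m with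
  | zero => exact hf
  | succ m ih =>
    rw [pow_succ', Module.End.mul_apply]
    exact isBeadAlternating_lower ih hs

theorem isBeadAlternating_jacobiTrudi {R : Type*} [CommRing R] {g : ℤ → R} (hg : ∀ n < 0, g n = 0)
    (N : ℕ) : IsBeadAlternating (jacobiTrudi g (N := N)) where
  map_swap d i j hij := by simp [jacobiTrudi_comp_perm, Equiv.Perm.sign_swap hij]
  map_of_neg _ _ hj := jacobiTrudi_eq_zero_of_neg hg hj

variable [IsAddTorsionFree M] {n : ℕ} {f : (Fin n → ℤ) → M} {b : List ℕ}

theorem IsBeadAlternating.map_sub_single_eq_zero (hf : IsBeadAlternating f) (hbn : b.length ≤ n)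
    {j : Fin n} (hj : partAt b (j + 1) = partAt b j) :
    f (betaNumbers n b - Pi.single j 1) = 0 := by
  rcases (Nat.succ_le_of_lt j.2).lt_or_eq with h | h
  · have hne : (⟨j + 1, h⟩ : Fin n) ≠ j := fun h' => by simp [Fin.ext_iff] at h'
    refine hf.map_eq_zero_of_eq hne ?_
    rw [Pi.sub_apply, Pi.sub_apply, Pi.single_eq_same, Pi.single_eq_of_ne hne]
    simp only [betaNumbers, hj]
    push_cast
    ring
  · refine hf.map_of_neg _ (j := j) ?_
    rw [partAt_eq_zero (by omega)] at hj
    simp only [betaNumbers, Pi.sub_apply, Pi.single_eq_same]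
    omega

theorem lower_betaNumbers (hf : IsBeadAlternating f) (hb : IsPartition b) (hbn : b.length ≤ n) :
    lower (Fin n) M 1 f (betaNumbers n b) = ∑ a ∈ lowerCovers b, f (betaNumbers n a) := by
  have hinj : Function.Injective fun j => betaNumbers n b - Pi.single j 1 := by
    intro i j h
    by_contra hij
    simpa [hij] using congrFun h i
  rw [lower_apply, ← Finset.sum_image (f := f) hinj.injOn]
  refine (Finset.sum_of_injOn (betaNumbers n) ?_ ?_ ?_ fun _ _ => rfl).symm
  · refine (betaNumbers_injOn n).mono fun a ha => ?_
    have hcov := mem_lowerCovers.1 ha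
    exact ⟨hcov.1, (length_le_of_subP hcov.1 hcov.2.2.1).trans hbn⟩
  · intro a ha
    obtain ⟨j, hj⟩ := (mem_lowerCovers.1 ha).exists_betaNumbers_eq_sub_single hbn
    exact Finset.mem_coe.2 (Finset.mem_image.2 ⟨j, Finset.mem_univ j, hj.symm⟩)
  · intro d hd hdcov
    obtain ⟨j, -, rfl⟩ := Finset.mem_image.1 hd
    refine hf.map_sub_single_eq_zero hbn ?_
    by_contra hj
    obtain ⟨a, ha, hbeta⟩ := exists_youngCovers_of_partAt_succ_lt hb hbn
      ((partAt_antitone hb.1 (Nat.le_succ j)).lt_of_ne hj)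
    exact hdcov ⟨a, mem_lowerCovers.2 ha, hbeta⟩

theorem lower_pow_betaNumbers (hf : IsBeadAlternating f) (m : ℕ) (hb : IsPartition b)
    (hbn : b.length ≤ n) :
    (lower (Fin n) M 1 ^ m) f (betaNumbers n b) =
      ∑ a ∈ subpartitions b, numChains YoungCovers m a b • f (betaNumbers n a) := by
  induction m generalizing b with
  | zero =>
    have hmem : b ∈ subpartitions b := mem_subpartitions.2 ⟨hb, subP_refl b⟩
    simp [numChains_zero, hmem]
  | succ m ih =>
    have hcov {x : List ℕ} (hx : x ∈ lowerCovers b) :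
        (lower (Fin n) M 1 ^ m) f (betaNumbers n x) =
          ∑ a ∈ subpartitions b, numChains YoungCovers m a x • f (betaNumbers n a) := by
      obtain ⟨hxp, -, hxb, -⟩ := mem_lowerCovers.1 hx
      rw [ih hxp ((length_le_of_subP hxp hxb).trans hbn)]
      refine Finset.sum_subset (fun a ha => ?_) fun a ha hax => ?_
      · obtain ⟨hap, hax⟩ := mem_subpartitions.1 ha
        exact mem_subpartitions.2 ⟨hap, subP_trans hax hxb⟩
      · have hzero : numChains YoungCovers m a x = 0 := by
          by_contra hne
          exact hax (mem_subpartitions.2 ⟨(mem_subpartitions.1 ha).1,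
            (subP_and_sum_add_eq_of_numChains_ne_zero hne).1⟩)
        rw [hzero, zero_smul]
    rw [pow_succ', Module.End.mul_apply,
      lower_betaNumbers (isBeadAlternating_lower_pow hf zero_le_one m) hb hbn,
      Finset.sum_congr rfl fun x hx => hcov hx, Finset.sum_comm]
    simp only [← Finset.sum_smul, numChains_succ fun _ _ => mem_lowerCovers]

end Branching

section TwoQuotient

variable {n₁ n₂ k : ℕ} {M : Type*} [AddCommGroup M]

/-- The bead configuration of the abacus with two runners carrying `α` and `β`: the beads of `α` go
to even positions and those of `β` to odd ones. -/
def interleave (α : Fin n₁ → ℤ) (β : Fin n₂ → ℤ) : Fin (n₁ + n₂) → ℤ :=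
  Fin.append (fun i => 2 * α i) fun i => 2 * β i + 1

theorem castAdd_ne_natAdd (i : Fin n₁) (j : Fin n₂) : Fin.castAdd n₂ i ≠ Fin.natAdd n₁ j :=
  Fin.ne_of_lt (i.2.trans_le (Nat.le_add_right n₁ j))

theorem range_interleave (α : Fin n₁ → ℤ) (β : Fin n₂ → ℤ) :
    Set.range (interleave α β) = (2 * ·) '' Set.range α ∪ (2 * · + 1) '' Set.range β := by
  rw [← Set.range_comp, ← Set.range_comp, ← Set.Sum.elim_range,
    ← finSumFinEquiv.surjective.range_comp]
  exact congrArg Set.range Fin.append_comp_sumElim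

theorem interleave_injective {α : Fin n₁ → ℤ} {β : Fin n₂ → ℤ} (hα : Function.Injective α)
    (hβ : Function.Injective β) : Function.Injective (interleave α β) := by
  refine Fin.append_injective_iff.2 ⟨fun i j h => hα ?_, fun i j h => hβ ?_, fun i j => ?_⟩ <;>
    grind

theorem interleave_nonneg {α : Fin n₁ → ℤ} {β : Fin n₂ → ℤ} (hα : ∀ i, 0 ≤ α i)
    (hβ : ∀ i, 0 ≤ β i) (i : Fin (n₁ + n₂)) : 0 ≤ interleave α β i := by
  refine Fin.addCases (fun i => ?_) (fun i => ?_) i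
  · simpa [interleave] using hα i
  · have := hβ i
    simp only [interleave, Fin.append_right]
    omega

theorem sum_interleave (α : Fin n₁ → ℤ) (β : Fin n₂ → ℤ) :
    ∑ x, interleave α β x = 2 * ∑ i, α i + (2 * ∑ i, β i + n₂) := by
  simp [interleave, Fin.sum_univ_add, Finset.sum_add_distrib, Finset.mul_sum]

theorem excess_interleave (α : Fin n₁ → ℤ) (β : Fin (n₁ + k) → ℤ) :
    excess (interleave α β) = 2 * (excess α + excess β) + (k * (k + 1) / 2 : ℕ) := by
  have hgauss (n : ℕ) : (∑ i : Fin n, (i : ℤ)) * 2 = n * (n - 1) := by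
    induction n with
    | zero => rfl
    | succ n ih =>
      simp only [Fin.sum_univ_castSucc, Fin.val_castSucc, Fin.val_last, add_mul, ih]
      push_cast
      ring
  have htri : (k * (k + 1) / 2 : ℕ) * (2 : ℤ) = k * (k + 1) :=
    mod_cast Nat.div_mul_cancel (Nat.even_mul_succ_self k).two_dvd
  have h₁ := hgauss n₁
  have h₂ := hgauss (n₁ + k)
  have h₃ := hgauss (n₁ + (n₁ + k))
  simp only [Nat.cast_add] at h₂ h₃
  refine mul_right_cancel₀ (two_ne_zero' ℤ) ?_
  rw [excess, excess, excess, sum_interleave, Nat.cast_add]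
  linear_combination 2 * h₁ + 2 * h₂ - h₃ - htri

theorem interleave_comp_swap_left (α : Fin n₁ → ℤ) (β : Fin n₂ → ℤ) (i j : Fin n₁) :
    interleave (α ∘ Equiv.swap i j) β =
      interleave α β ∘ Equiv.swap (Fin.castAdd n₂ i) (Fin.castAdd n₂ j) := by
  ext x
  refine Fin.addCases (fun x => ?_) (fun x => ?_) x
  · simp [interleave, (Fin.castAdd_injective n₁ n₂).swap_apply]
  · rw [Function.comp_apply, Equiv.swap_apply_of_ne_of_ne (castAdd_ne_natAdd i x).symm
      (castAdd_ne_natAdd j x).symm, interleave, interleave, Fin.append_right, Fin.append_right]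

theorem interleave_comp_swap_right (α : Fin n₁ → ℤ) (β : Fin n₂ → ℤ) (i j : Fin n₂) :
    interleave α (β ∘ Equiv.swap i j) =
      interleave α β ∘ Equiv.swap (Fin.natAdd n₁ i) (Fin.natAdd n₁ j) := by
  ext x
  refine Fin.addCases (fun x => ?_) (fun x => ?_) x
  · rw [Function.comp_apply, Equiv.swap_apply_of_ne_of_ne (castAdd_ne_natAdd x i)
      (castAdd_ne_natAdd x j), interleave, interleave, Fin.append_left, Fin.append_left]
  · simp [interleave, (Fin.natAdd_injective n₂ n₁).swap_apply]

theorem interleave_sub_single_left (α : Fin n₁ → ℤ) (β : Fin n₂ → ℤ) (j : Fin n₁) (s : ℤ) :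
    interleave (α - Pi.single j s) β =
      interleave α β - Pi.single (Fin.castAdd n₂ j) (2 * s) := by
  ext x
  refine Fin.addCases (fun i => ?_) (fun i => ?_) x
  · simp [interleave, Pi.single_apply, mul_sub]
  · simp [interleave, (castAdd_ne_natAdd j i).symm]

theorem interleave_sub_single_right (α : Fin n₁ → ℤ) (β : Fin n₂ → ℤ) (j : Fin n₂) (s : ℤ) :
    interleave α (β - Pi.single j s) =
      interleave α β - Pi.single (Fin.natAdd n₁ j) (2 * s) := by
  ext x
  refine Fin.addCases (fun i => ?_) (fun i => ?_) x
  · simp [interleave, castAdd_ne_natAdd i j]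
  · simp [interleave, Pi.single_apply, mul_sub, sub_add_eq_add_sub]

variable {f : (Fin (n₁ + n₂) → ℤ) → M}

theorem isBeadAlternating_interleave_left (hf : IsBeadAlternating f) :
    IsBeadAlternating fun (α : Fin n₁ → ℤ) (β : Fin n₂ → ℤ) => f (interleave α β) where
  map_swap α i j hij := by
    ext β
    have hne := (Fin.castAdd_injective n₁ n₂).ne hij
    simp only [interleave_comp_swap_left, hf.map_swap _ hne, Pi.neg_apply]
  map_of_neg α i hi := by
    ext β
    refine hf.map_of_neg _ (j := Fin.castAdd n₂ i) ?_
    rw [interleave, Fin.append_left]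
    omega

theorem isBeadAlternating_interleave_right (hf : IsBeadAlternating f) (α : Fin n₁ → ℤ) :
    IsBeadAlternating fun β : Fin n₂ → ℤ => f (interleave α β) where
  map_swap β i j hij := by
    have hne := (Fin.natAdd_injective n₂ n₁).ne hij
    rw [interleave_comp_swap_right, hf.map_swap _ hne]
  map_of_neg β i hi := by
    refine hf.map_of_neg _ (j := Fin.natAdd n₁ i) ?_
    rw [interleave, Fin.append_right]
    omega

theorem lower_two_interleave (f : (Fin (n₁ + n₂) → ℤ) → M) (α : Fin n₁ → ℤ) (β : Fin n₂ → ℤ) :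
    lower (Fin (n₁ + n₂)) M 2 f (interleave α β) =
      lower (Fin n₁) M 1 (fun α => f (interleave α β)) α +
        lower (Fin n₂) M 1 (fun β => f (interleave α β)) β := by
  simp only [lower_apply, Fin.sum_univ_add, interleave_sub_single_left,
    interleave_sub_single_right, mul_one]

theorem lower_two_pow_interleave (K : ℕ) (f : (Fin (n₁ + n₂) → ℤ) → M) (α : Fin n₁ → ℤ)
    (β : Fin n₂ → ℤ) :
    (lower (Fin (n₁ + n₂)) M 2 ^ K) f (interleave α β) =
      ∑ p ∈ antidiagonal K, K.choose p.1 •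
        (lower (Fin n₂) M 1 ^ p.2)
          ((lower (Fin n₁) ((Fin n₂ → ℤ) → M) 1 ^ p.1) (fun α β => f (interleave α β)) α) β := by
  set A := lower (Fin n₁) ((Fin n₂ → ℤ) → M) 1
  set B := (lower (Fin n₂) M 1).compLeft (Fin n₁ → ℤ)
  have hcomm : Commute A B := LinearMap.ext fun G =>
    lower_comp_addMonoidHom (lower (Fin n₂) M 1).toAddMonoidHom 1 G
  have hB (j : ℕ) (G : (Fin n₁ → ℤ) → (Fin n₂ → ℤ) → M) (α : Fin n₁ → ℤ) :
      (B ^ j) G α = (lower (Fin n₂) M 1 ^ j) (G α) := by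
    induction j with
    | zero => rfl
    | succ j ih =>
      rw [pow_succ', pow_succ', Module.End.mul_apply, Module.End.mul_apply, ← ih]
      rfl
  have hsum : (fun (α : Fin n₁ → ℤ) (β : Fin n₂ → ℤ) =>
      (lower (Fin (n₁ + n₂)) M 2 ^ K) f (interleave α β)) =
        ((A + B) ^ K) fun α β => f (interleave α β) := by
    induction K with
    | zero => rfl
    | succ K ih =>
      rw [pow_succ' (A + B), Module.End.mul_apply, ← ih]
      ext α β
      rw [pow_succ', Module.End.mul_apply, lower_two_interleave]
      simp [A, B, lower_apply]
  refine (congrFun₂ hsum α β).trans ?_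
  rw [hcomm.add_pow']
  simp only [LinearMap.sum_apply, Finset.sum_apply, LinearMap.smul_apply, Pi.smul_apply]
  refine Finset.sum_congr rfl fun p _ => ?_
  rw [(hcomm.pow_pow p.1 p.2).eq, Module.End.mul_apply, hB]

end TwoQuotient

section Phi

variable {μ ν l : List ℕ} {k n : ℕ}

theorem betaNumbers_length (l : List ℕ) :
    betaNumbers l.length l = fun i => (degVec l i : ℤ) := by
  ext i
  rw [betaNumbers, partAt_eq_getElem i.2, degVec, List.get_eq_getElem]
  omega

theorem HeW_eq_normalizedWronskian (hl : l.length ≤ n) :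
    HeW l = normalizedWronskian (betaNumbers n l) := by
  induction n, hl using Nat.le_induction with
  | base => rw [HeW_eq_normalizedWronskian_degVec, betaNumbers_length]
  | succ n hn ih => rw [ih, betaNumbers_succ hn, normalizedWronskian_shiftBeads]

theorem mem_range_shiftBeads {N : ℕ} {d : Fin N → ℤ} {y : ℤ} :
    y ∈ Set.range (shiftBeads d) ↔ y = 0 ∨ y - 1 ∈ Set.range d := by
  simp [shiftBeads, eq_sub_iff_add_eq]

theorem mem_range_betaNumbers_add (hl : l.length ≤ n) (r : ℕ) {y : ℤ} :
    y ∈ Set.range (betaNumbers (n + r) l) ↔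
      (0 ≤ y ∧ y < r) ∨ y - r ∈ Set.range (betaNumbers n l) := by
  induction r generalizing y with
  | zero => simp [Int.le_antisymm_iff]
  | succ r ih =>
    rw [← add_assoc, betaNumbers_succ (hl.trans (Nat.le_add_right n r)), mem_range_shiftBeads, ih,
      sub_sub, add_comm 1, ← Nat.cast_succ, ← or_assoc]
    refine or_congr_left ?_
    omega

/-- The partition whose set of first-column hook lengths, possibly padded, is `D`. -/
def ofBeads (D : Finset ℕ) : List ℕ :=
  let s := D.sort (· ≤ ·)
  (((List.range s.length).map fun t => s.getD t 0 - t).reverse).filter fun x => decide (0 < x)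

/-- The positions of the beads on the abacus with two runners that carry `μ` and `ν`, with `k` more
beads on the odd runner. -/
def quotientBeads (μ ν : List ℕ) (k : ℕ) : Finset ℕ :=
  ((Finset.univ : Finset (Fin μ.length)).image fun i => 2 * (degVec μ i + ν.length)) ∪
  ((Finset.range ν.length).image fun t => 2 * t) ∪
  ((Finset.univ : Finset (Fin ν.length)).image fun j => 2 * (degVec ν j + μ.length + k) + 1) ∪
  ((Finset.range (μ.length + k)).image fun t => 2 * t + 1)

theorem Phi_eq_ofBeads (μ ν : List ℕ) (k : ℕ) : Phi μ ν k = ofBeads (quotientBeads μ ν k) := rfl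

theorem add_sub_le_of_strictMono {N : ℕ} {f : Fin N → ℕ} (hf : StrictMono f) {i j : Fin N}
    (h : i ≤ j) : f i + (j - i : ℕ) ≤ f j := by
  have hcard : (Finset.Icc i j).card ≤ (Finset.Icc (f i) (f j)).card := by
    refine Finset.card_le_card_of_injOn f (fun x hx => ?_) hf.injective.injOn
    obtain ⟨hix, hxj⟩ := Finset.mem_Icc.1 hx
    exact Finset.mem_Icc.2 ⟨hf.monotone hix, hf.monotone hxj⟩
  rw [Fin.card_Icc, Nat.card_Icc] at hcard
  have hfij := hf.monotone h
  omega

theorem getD_sort {D : Finset ℕ} (t : Fin D.card) :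
    (D.sort (· ≤ ·)).getD t 0 = D.orderEmbOfFin rfl t := by
  rw [List.getD_eq_getElem _ _ (by simp), Finset.orderEmbOfFin_apply]
  rfl

theorem pairwise_ofBeads_parts (D : Finset ℕ) :
    (((List.range (D.sort (· ≤ ·)).length).map
      fun t => (D.sort (· ≤ ·)).getD t 0 - t).reverse).Pairwise (· ≥ ·) := by
  rw [List.pairwise_reverse, List.pairwise_map]
  refine List.pairwise_lt_range.imp_of_mem fun {i j} hi hj hij => ?_
  rw [List.mem_range, Finset.length_sort] at hi hj
  have hle := add_sub_le_of_strictMono (D.orderEmbOfFin rfl).strictMono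
    (i := ⟨i, hi⟩) (j := ⟨j, hj⟩) hij.le
  rw [← getD_sort, ← getD_sort] at hle
  dsimp only at hle ⊢
  omega

theorem isPartition_ofBeads (D : Finset ℕ) : IsPartition (ofBeads D) :=
  isPartition_filter_pos (pairwise_ofBeads_parts D)

theorem isPartition_Phi (μ ν : List ℕ) (k : ℕ) : IsPartition (Phi μ ν k) :=
  isPartition_ofBeads _

theorem length_ofBeads_le (D : Finset ℕ) : (ofBeads D).length ≤ D.card :=
  (List.length_filter_le _ _).trans_eq (by simp)

theorem betaNumbers_ofBeads (D : Finset ℕ) (i : Fin D.card) :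
    betaNumbers D.card (ofBeads D) i = D.orderEmbOfFin rfl i.rev := by
  have hpart : partAt (ofBeads D) i = D.orderEmbOfFin rfl i.rev - (i.rev : ℕ) := by
    rw [ofBeads, partAt_filter_pos (pairwise_ofBeads_parts D), partAt_eq_getElem (by simp),
      ← getD_sort]
    simp [Fin.val_rev, Nat.sub_sub, add_comm 1]
  have hle : (i.rev : ℕ) ≤ D.orderEmbOfFin rfl i.rev :=
    le_of_add_le_right (add_sub_le_of_strictMono (D.orderEmbOfFin rfl).strictMono
      (i := ⟨0, i.pos⟩) (j := i.rev) (Nat.zero_le _))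
  have hrev : (i.rev : ℕ) = D.card - (i + 1) := Fin.val_rev i
  rw [betaNumbers, hpart]
  omega

theorem range_betaNumbers_ofBeads (D : Finset ℕ) :
    Set.range (betaNumbers D.card (ofBeads D)) = (↑) '' (D : Set ℕ) := by
  have hcomp : betaNumbers D.card (ofBeads D) = (↑) ∘ D.orderEmbOfFin rfl ∘ Fin.rev :=
    funext (betaNumbers_ofBeads D)
  rw [hcomp, Set.range_comp, Fin.rev_surjective.range_comp, Finset.range_orderEmbOfFin]

theorem range_interleave_betaNumbers (μ ν : List ℕ) (k : ℕ) :
    Set.range (interleave (betaNumbers (μ.length + ν.length) μ)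
      (betaNumbers (ν.length + (μ.length + k)) ν)) = (↑) '' (quotientBeads μ ν k : Set ℕ) := by
  ext y
  simp only [range_interleave, Set.mem_union, Set.mem_image,
    mem_range_betaNumbers_add (l := μ) le_rfl, mem_range_betaNumbers_add (l := ν) le_rfl,
    betaNumbers_length, quotientBeads, Finset.coe_union, Finset.coe_image, Finset.coe_univ,
    Set.image_univ, Finset.coe_range, Set.mem_range, Set.mem_Iio]
  constructor
  · rintro (⟨z, ⟨hz, hzr⟩ | ⟨i, hi⟩, rfl⟩ | ⟨z, ⟨hz, hzr⟩ | ⟨i, hi⟩, rfl⟩)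
    · exact ⟨_, Or.inl (Or.inl (Or.inr ⟨z.toNat, by omega, rfl⟩)), by omega⟩
    · exact ⟨_, Or.inl (Or.inl (Or.inl ⟨i, rfl⟩)), by omega⟩
    · exact ⟨_, Or.inr ⟨z.toNat, by omega, rfl⟩, by omega⟩
    · exact ⟨_, Or.inl (Or.inr ⟨i, rfl⟩), by omega⟩
  · rintro ⟨_, ((⟨i, rfl⟩ | ⟨t, ht, rfl⟩) | ⟨i, rfl⟩) | ⟨t, ht, rfl⟩, rfl⟩
    · exact Or.inl ⟨_, Or.inr ⟨i, (add_sub_cancel_right _ (ν.length : ℤ)).symm⟩, by omega⟩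
    · exact Or.inl ⟨t, Or.inl ⟨by omega, by omega⟩, by omega⟩
    · exact Or.inr ⟨_, Or.inr ⟨i, (add_sub_cancel_right _ ((μ.length + k : ℕ) : ℤ)).symm⟩,
        by omega⟩
    · exact Or.inr ⟨t, Or.inl ⟨by omega, by omega⟩, by omega⟩

theorem mem_range_interleave_betaNumbers_add {n₁ n₂ : ℕ} (hμ : μ.length ≤ n₁) (hν : ν.length ≤ n₂)
    (r : ℕ) {y : ℤ} :
    y ∈ Set.range (interleave (betaNumbers (n₁ + r) μ) (betaNumbers (n₂ + r) ν)) ↔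
      (0 ≤ y ∧ y < 2 * r) ∨
        y - 2 * r ∈ Set.range (interleave (betaNumbers n₁ μ) (betaNumbers n₂ ν)) := by
  simp only [range_interleave, Set.mem_union, Set.mem_image, mem_range_betaNumbers_add hμ,
    mem_range_betaNumbers_add hν]
  constructor
  · rintro (⟨z, hz | hz, rfl⟩ | ⟨z, hz | hz, rfl⟩)
    · exact Or.inl (by omega)
    · exact Or.inr (Or.inl ⟨_, hz, by ring⟩)
    · exact Or.inl (by omega)
    · exact Or.inr (Or.inr ⟨_, hz, by ring⟩)
  · rintro (hy | ⟨z, hz, hy⟩ | ⟨z, hz, hy⟩)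
    · rcases y.even_or_odd' with ⟨z, rfl | rfl⟩
      · exact Or.inl ⟨z, Or.inl (by omega), rfl⟩
      · exact Or.inr ⟨z, Or.inl (by omega), rfl⟩
    · exact Or.inl ⟨z + r, Or.inr (by rwa [add_sub_cancel_right]), by omega⟩
    · exact Or.inr ⟨z + r, Or.inr (by rwa [add_sub_cancel_right]), by omega⟩

theorem exists_range_betaNumbers_Phi_eq (hn : μ.length + ν.length ≤ n) (k : ℕ) :
    ∃ N, (Phi μ ν k).length ≤ N ∧ Set.range (betaNumbers N (Phi μ ν k)) =
      Set.range (interleave (betaNumbers n μ) (betaNumbers (n + k) ν)) := by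
  obtain ⟨r, rfl⟩ := Nat.exists_eq_add_of_le hn
  have hlen := length_ofBeads_le (quotientBeads μ ν k)
  refine ⟨(quotientBeads μ ν k).card + 2 * r, hlen.trans (Nat.le_add_right _ _),
    Set.ext fun y => ?_⟩
  have hcomm : μ.length + ν.length + r + k = ν.length + (μ.length + k) + r := by omega
  rw [hcomm, mem_range_interleave_betaNumbers_add (by omega) (by omega),
    range_interleave_betaNumbers, Phi_eq_ofBeads, mem_range_betaNumbers_add hlen,
    range_betaNumbers_ofBeads, Nat.cast_mul, Nat.cast_ofNat]

theorem HeW_Phi (hμ : IsPartition μ) (hν : IsPartition ν) (hn : μ.length + ν.length ≤ n) (k : ℕ) :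
    HeW (Phi μ ν k) =
      normalizedWronskian (interleave (betaNumbers n μ) (betaNumbers (n + k) ν)) := by
  obtain ⟨N, hN, hrange⟩ := exists_range_betaNumbers_Phi_eq hn k
  rw [HeW_eq_normalizedWronskian hN]
  exact normalizedWronskian_eq_of_range_eq
    (betaNumbers_strictAnti N (isPartition_Phi μ ν k).1).injective
    (interleave_injective (betaNumbers_strictAnti n hμ.1).injective
      (betaNumbers_strictAnti _ hν.1).injective) hrange

theorem sum_Phi (hμ : IsPartition μ) (hν : IsPartition ν) (k : ℕ) :
    (Phi μ ν k).sum = 2 * (μ.sum + ν.sum) + k * (k + 1) / 2 := by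
  obtain ⟨N, hN, hrange⟩ := exists_range_betaNumbers_Phi_eq (le_refl (μ.length + ν.length)) k
  have hexc := excess_eq_of_range_eq
    (betaNumbers_strictAnti N (isPartition_Phi μ ν k).1).injective
    (interleave_injective (betaNumbers_strictAnti _ hμ.1).injective
      (betaNumbers_strictAnti _ hν.1).injective) hrange
  rw [excess_betaNumbers hN, excess_interleave, excess_betaNumbers (by omega),
    excess_betaNumbers (by omega)] at hexc
  exact_mod_cast hexc

end Phi

section PathFormula

variable {n₁ n₂ : ℕ} {μ ν a b : List ℕ}

/-- The pairs of partitions contained in `(μ, ν)` that have `K` boxes less than `(μ, ν)`. -/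
noncomputable def subpairs (μ ν : List ℕ) (K : ℕ) : Finset (List ℕ × List ℕ) :=
  (subpartitions μ ×ˢ subpartitions ν).filter
    fun p => p.1.sum + p.2.sum + K = μ.sum + ν.sum

theorem mem_subpairs {K : ℕ} {p : List ℕ × List ℕ} :
    p ∈ subpairs μ ν K ↔ IsPartition p.1 ∧ IsPartition p.2 ∧ SubP p.1 μ ∧ SubP p.2 ν ∧
      p.1.sum + p.2.sum + K = μ.sum + ν.sum := by
  rw [subpairs, Finset.mem_filter, Finset.mem_product, mem_subpartitions, mem_subpartitions]
  tauto

theorem subP_nil (a : List ℕ) : SubP [] a := fun _ => Nat.zero_le _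

theorem subpairs_sum_add_sum (μ ν : List ℕ) :
    subpairs μ ν (μ.sum + ν.sum) = {([], [])} := by
  ext ⟨a, b⟩
  rw [mem_subpairs, Finset.mem_singleton, Prod.mk.injEq]
  constructor
  · rintro ⟨ha, hb, -, -, hsum⟩
    dsimp only at hsum
    exact ⟨eq_nil_of_sum_eq_zero ha (by omega), eq_nil_of_sum_eq_zero hb (by omega)⟩
  · rintro ⟨rfl, rfl⟩
    exact ⟨isPartition_nil, isPartition_nil, subP_nil μ, subP_nil ν, zero_add _⟩

theorem sum_choose_mul_numChains (haμ : SubP a μ) (hbν : SubP b ν) (K : ℕ) :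
    ∑ i ∈ antidiagonal K,
        K.choose i.1 * (numChains YoungCovers i.1 a μ * numChains YoungCovers i.2 b ν) =
      if a.sum + b.sum + K = μ.sum + ν.sum then F2rel a b μ ν else 0 := by
  have ha := sum_le_of_subP haμ
  have hb := sum_le_of_subP hbν
  have hvanish {i : ℕ × ℕ} (hi : i ≠ (μ.sum - a.sum, ν.sum - b.sum)) :
      K.choose i.1 * (numChains YoungCovers i.1 a μ * numChains YoungCovers i.2 b ν) = 0 := by
    by_contra hne
    obtain ⟨hne₁, hne₂⟩ := mul_ne_zero_iff.1 (right_ne_zero_of_mul hne)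
    have h₁ := (subP_and_sum_add_eq_of_numChains_ne_zero hne₁).2
    have h₂ := (subP_and_sum_add_eq_of_numChains_ne_zero hne₂).2
    exact hi (Prod.ext (by omega) (by omega))
  split_ifs with hK
  · obtain rfl : μ.sum - a.sum + (ν.sum - b.sum) = K := by omega
    rw [Finset.sum_eq_single_of_mem _ (mem_antidiagonal.2 rfl) fun i _ => hvanish,
      F2rel, mul_assoc, numPaths_eq_numChains, numPaths_eq_numChains]
  · refine Finset.sum_eq_zero fun i hi => hvanish fun h => hK ?_
    rw [mem_antidiagonal, h] at hi
    dsimp only at hi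
    omega

theorem lower_two_pow_interleave_betaNumbers {M : Type*} [AddCommGroup M] [IsAddTorsionFree M]
    {f : (Fin (n₁ + n₂) → ℤ) → M} (hf : IsBeadAlternating f) (hμ : IsPartition μ)
    (hν : IsPartition ν) (hμn : μ.length ≤ n₁) (hνn : ν.length ≤ n₂) (K : ℕ) :
    (lower _ M 2 ^ K) f (interleave (betaNumbers n₁ μ) (betaNumbers n₂ ν)) =
      ∑ p ∈ subpairs μ ν K, F2rel p.1 p.2 μ ν •
        f (interleave (betaNumbers n₁ p.1) (betaNumbers n₂ p.2)) := by
  have hbranch (i : ℕ × ℕ) :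
      (lower (Fin n₂) M 1 ^ i.2) ((lower (Fin n₁) ((Fin n₂ → ℤ) → M) 1 ^ i.1)
          (fun α β => f (interleave α β)) (betaNumbers n₁ μ)) (betaNumbers n₂ ν) =
        ∑ p ∈ subpartitions μ ×ˢ subpartitions ν,
          (numChains YoungCovers i.1 p.1 μ * numChains YoungCovers i.2 p.2 ν) •
            f (interleave (betaNumbers n₁ p.1) (betaNumbers n₂ p.2)) := by
    rw [lower_pow_betaNumbers (isBeadAlternating_interleave_left hf) _ hμ hμn, map_sum,
      Finset.sum_apply, Finset.sum_product]
    refine Finset.sum_congr rfl fun a _ => ?_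
    rw [map_nsmul, Pi.smul_apply,
      lower_pow_betaNumbers (isBeadAlternating_interleave_right hf _) _ hν hνn, Finset.smul_sum]
    simp only [mul_smul]
  simp only [lower_two_pow_interleave, hbranch, Finset.smul_sum]
  rw [Finset.sum_comm, subpairs, Finset.sum_filter]
  refine Finset.sum_congr rfl fun p hp => ?_
  obtain ⟨h₁, h₂⟩ := Finset.mem_product.1 hp
  simp only [← mul_smul, ← Finset.sum_smul]
  rw [sum_choose_mul_numChains (mem_subpartitions.1 h₁).2 (mem_subpartitions.1 h₂).2, ite_smul,
    zero_smul]

end PathFormula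

section Coefficients

open scoped Nat

variable {μ ν a b : List ℕ} {k n K m : ℕ}

/-- The determinant `det (1 / (d_j - i)!)` for `Phi a b k`, up to sign, with the beads `d` read off
an abacus with `n` beads on the even runner and `n + k` beads on the odd one. -/
def abacusDet (n k : ℕ) (a b : List ℕ) : ℚ :=
  jacobiTrudi invFactorial (interleave (betaNumbers n a) (betaNumbers (n + k) b))

theorem abacusDet_ne_zero (ha : IsPartition a) (hb : IsPartition b) (n k : ℕ) :
    abacusDet n k a b ≠ 0 :=
  jacobiTrudi_invFactorial_ne_zero
    (interleave_injective (betaNumbers_strictAnti _ ha.1).injective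
      (betaNumbers_strictAnti _ hb.1).injective)
    (interleave_nonneg (betaNumbers_nonneg n a) (betaNumbers_nonneg (n + k) b))

theorem coeff_HeW_Phi (hμ : IsPartition μ) (hν : IsPartition ν) (hn : μ.length + ν.length ≤ n)
    (hm : (Phi μ ν k).sum = m + 2 * K) :
    (HeW (Phi μ ν k)).coeff m =
      (-1 / 2) ^ K / K ! * (∑ p ∈ subpairs μ ν K, F2rel p.1 p.2 μ ν * abacusDet n k p.1 p.2) /
        abacusDet n k μ ν := by
  have hexc : excess (interleave (betaNumbers n μ) (betaNumbers (n + k) ν)) = m + 2 * K := by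
    rw [excess_interleave, excess_betaNumbers (by omega), excess_betaNumbers (by omega)]
    rw [sum_Phi hμ hν] at hm
    exact_mod_cast hm
  rw [HeW_Phi hμ hν hn, coeff_normalizedWronskian m K hexc,
    lower_two_pow_interleave_betaNumbers
      (isBeadAlternating_jacobiTrudi invFactorial_of_neg _) hμ hν (by omega) (by omega)]
  simp only [nsmul_eq_mul, abacusDet]

theorem coeff_HeW_Phi_core (hμ : IsPartition μ) (hν : IsPartition ν)
    (hn : μ.length + ν.length ≤ n) (k : ℕ) :
    (HeW (Phi μ ν k)).coeff (k * (k + 1) / 2) =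
      (-1 / 2) ^ (μ.sum + ν.sum) / (μ.sum + ν.sum)! * (F2 μ ν * abacusDet n k [] []) /
        abacusDet n k μ ν := by
  rw [coeff_HeW_Phi hμ hν hn ((sum_Phi hμ hν k).trans (add_comm _ _)), subpairs_sum_add_sum,
    Finset.sum_singleton]
  rfl

theorem F2_ne_zero (ha : IsPartition a) (hb : IsPartition b) : F2 a b ≠ 0 :=
  (Nat.mul_pos (Nat.mul_pos (Nat.choose_pos (Nat.le_add_right _ _)) (numPaths_nil_pos ha))
    (numPaths_nil_pos hb)).ne'

theorem coeff_HeW_Phi_core_ne_zero (hμ : IsPartition μ) (hν : IsPartition ν) (k : ℕ) :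
    (HeW (Phi μ ν k)).coeff (k * (k + 1) / 2) ≠ 0 := by
  rw [coeff_HeW_Phi_core hμ hν le_rfl]
  have hpow : (-1 / 2 : ℚ) ^ (μ.sum + ν.sum) ≠ 0 := pow_ne_zero _ (by norm_num)
  exact div_ne_zero
    (mul_ne_zero (div_ne_zero hpow (Nat.cast_ne_zero.2 (Nat.factorial_ne_zero _)))
      (mul_ne_zero (Nat.cast_ne_zero.2 (F2_ne_zero hμ hν))
        (abacusDet_ne_zero isPartition_nil isPartition_nil _ k)))
    (abacusDet_ne_zero hμ hν _ k)

theorem choose_mul_F2_div_mul_coeff_div_coeff (hμ : IsPartition μ) (hν : IsPartition ν)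
    (ha : IsPartition a) (hb : IsPartition b) (hn : μ.length + ν.length ≤ n)
    (hn' : a.length + b.length ≤ n) (hsum : a.sum + b.sum + K = μ.sum + ν.sum) (k : ℕ) :
    ((μ.sum + ν.sum).choose K : ℚ) * (F2 a b / F2 μ ν *
        ((HeW (Phi μ ν k)).coeff (k * (k + 1) / 2) / (HeW (Phi a b k)).coeff (k * (k + 1) / 2))) =
      (-1 / 2) ^ K / K ! * (abacusDet n k a b / abacusDet n k μ ν) := by
  rw [coeff_HeW_Phi_core hμ hν hn, coeff_HeW_Phi_core ha hb hn', ← hsum,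
    ← Nat.choose_symm_add, Nat.cast_add_choose, pow_add]
  have hdet := abacusDet_ne_zero hμ hν n k
  have hdet' := abacusDet_ne_zero ha hb n k
  have hdet₀ := abacusDet_ne_zero isPartition_nil isPartition_nil n k
  have hF2 : (F2 μ ν : ℚ) ≠ 0 := Nat.cast_ne_zero.2 (F2_ne_zero hμ hν)
  have hF2' : (F2 a b : ℚ) ≠ 0 := Nat.cast_ne_zero.2 (F2_ne_zero ha hb)
  field_simp

end Coefficients

end WronskianHermite

open WronskianHermite

/-- Hook-length/paths formula for the coefficients of Wronskian Hermite polynomials: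
for `λ = Φ(μ,ν,k)` and `m = k(k+1)/2`, (i) `coeff_m(He_{λ̃}) ≠ 0` for every pair of
subpartitions `(μ̃,ν̃)` of `(μ,ν)` (with `λ̃ = Φ(μ̃,ν̃,k)`), and (ii)
`coeff_{|λ|−2j}(He_λ) = C(|μ|+|ν|,j) · Σ_{(μ̃,ν̃) <_j (μ,ν)}
  (F²_{(μ̃,ν̃)} F²_{(μ,ν)/(μ̃,ν̃)} / F²_{(μ,ν)}) · coeff_m(He_λ)/coeff_m(He_{λ̃})`. -/
theorem wronskianHermite_coeff_paths_formula (μ ν : List ℕ)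
    (hμ : IsPartition μ) (hν : IsPartition ν) (k j : ℕ)
    (hj : j ≤ μ.sum + ν.sum) :
    (∀ μ' ν' : List ℕ, IsPartition μ' → IsPartition ν' → SubP μ' μ → SubP ν' ν →
        (HeW (Phi μ' ν' k)).coeff (k * (k + 1) / 2) ≠ 0) ∧
    (HeW (Phi μ ν k)).coeff ((Phi μ ν k).sum - 2 * j) =
      ((μ.sum + ν.sum).choose j : ℚ) *
        ∑ᶠ p ∈ {p : List ℕ × List ℕ | IsPartition p.1 ∧ IsPartition p.2 ∧
            SubP p.1 μ ∧ SubP p.2 ν ∧ p.1.sum + p.2.sum + j = μ.sum + ν.sum},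
          (F2 p.1 p.2 : ℚ) * (F2rel p.1 p.2 μ ν : ℚ) / (F2 μ ν : ℚ) *
            ((HeW (Phi μ ν k)).coeff (k * (k + 1) / 2) /
              (HeW (Phi p.1 p.2 k)).coeff (k * (k + 1) / 2)) := by
  refine ⟨fun μ' ν' hμ' hν' _ _ => coeff_HeW_Phi_core_ne_zero hμ' hν' k, ?_⟩
  have hset : {p : List ℕ × List ℕ | IsPartition p.1 ∧ IsPartition p.2 ∧ SubP p.1 μ ∧ SubP p.2 ν ∧
      p.1.sum + p.2.sum + j = μ.sum + ν.sum} = subpairs μ ν j :=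
    Set.ext fun _ => mem_subpairs.symm
  have hsum : (Phi μ ν k).sum = (Phi μ ν k).sum - 2 * j + 2 * j := by
    rw [sum_Phi hμ hν]
    omega
  rw [hset, finsum_mem_coe_finset, coeff_HeW_Phi hμ hν le_rfl hsum, mul_div_assoc, Finset.sum_div,
    Finset.mul_sum, Finset.mul_sum]
  refine Finset.sum_congr rfl fun p hp => ?_
  obtain ⟨ha, hb, haμ, hbν, hpj⟩ := mem_subpairs.1 hp
  have hterm := choose_mul_F2_div_mul_coeff_div_coeff hμ hν ha hb le_rfl
    (add_le_add (length_le_of_subP ha haμ) (length_le_of_subP hb hbν)) hpj k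
  linear_combination -(F2rel p.1 p.2 μ ν : ℚ) * hterm
end

section
/- Let n ≥ 1 and let x_1, x_2, …, x_n be pairwise distinct complex numbers. Then Σ_{j=1}^{n} x_j(x_j − 1) · ∏_{i≠j} (x_j − x_i − 2)/(x_j − x_i) = Σ_{j=1}^{n} (x_j − n + j)(x_j − n − j + 1). -/
/-!
The weights `w_j = ∏_{i ≠ j} (x_j - x_i - c) / (x_j - x_i)` are, up to the factor `-c`, the residues
of the rational function `∏ᵢ (z - x_i - c) / (z - x_i)`, which tends to `1` at infinity; hence
`∏ᵢ (z - x_i - c) / (z - x_i) = 1 - c ∑ⱼ w_j / (z - x_j)`. When a node `a` is added, this expansion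
at `z = a` is the weight of the new node, and its polar part combines with the change of the old
weights into the divided differences `(x_j ^ k - a ^ k) / (x_j - a)`. So the `k`-th moment
`∑ⱼ w_j x_j ^ k` obeys a recursion involving only lower moments, which gives the moments of order
`0`, `1`, `2` in closed form; with `c = 2`, the left-hand side of the identity is the difference of
the last two.
-/

open Finset Polynomial

theorem degree_nodal_sub_nodal_lt {ι R : Type*} [CommRing R] [Nontrivial R] (s : Finset ι)
    (x y : ι → R) : (Lagrange.nodal s x - Lagrange.nodal s y).degree < #s := by
  rw [← Lagrange.degree_nodal (v := x)]
  refine degree_sub_lt_left ?_ Lagrange.nodal_ne_zero ?_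
  · rw [Lagrange.degree_nodal, Lagrange.degree_nodal]
  · rw [Lagrange.nodal_monic.leadingCoeff, Lagrange.nodal_monic.leadingCoeff]

section ShiftWeight

variable {ι K : Type*} [DecidableEq ι] [Field K] {c : K} {x : ι → K} {s : Finset ι} {a j : ι}

/-- The weight `∏_{i ≠ j} (x_j - x_i - c) / (x_j - x_i)` of the node `x j` among the nodes indexed
by `s`. For `c ≠ 0` and distinct nodes it is `-1 / c` times the residue of
`∏ᵢ (z - x_i - c) / (z - x_i)` at `z = x_j`. -/
def shiftWeight (c : K) (x : ι → K) (s : Finset ι) (j : ι) : K :=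
  ∏ i ∈ s.erase j, (x j - x i - c) / (x j - x i)

theorem shiftWeight_insert_self (ha : a ∉ s) :
    shiftWeight c x (insert a s) a = ∏ i ∈ s, (x a - x i - c) / (x a - x i) := by
  rw [shiftWeight, erase_insert ha]

theorem shiftWeight_insert_of_ne (ha : a ∉ s) (haj : a ≠ j) :
    shiftWeight c x (insert a s) j =
      (x j - x a - c) / (x j - x a) * shiftWeight c x s j := by
  rw [shiftWeight, erase_insert_of_ne haj, prod_insert fun h ↦ ha (mem_of_mem_erase h), shiftWeight]

theorem nodalWeight_mul_eval_nodal_add_const (hj : j ∈ s) :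
    Lagrange.nodalWeight s x j * (Lagrange.nodal s fun i ↦ x i + c).eval (x j) =
      -c * shiftWeight c x s j := by
  simp only [Lagrange.nodalWeight, Lagrange.eval_nodal, shiftWeight, div_eq_mul_inv,
    prod_mul_distrib, ← mul_prod_erase s _ hj, ← sub_sub]
  ring

theorem prod_sub_sub_div_sub_eq_one_sub_sum (hx : Set.InjOn x s) {z : K} (hz : ∀ i ∈ s, z ≠ x i) :
    ∏ i ∈ s, (z - x i - c) / (z - x i) = 1 - c * ∑ j ∈ s, shiftWeight c x s j / (z - x j) := by
  set P := Lagrange.nodal s fun i ↦ x i + c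
  set Q := Lagrange.nodal s x
  have hQz : Q.eval z ≠ 0 := Lagrange.eval_nodal_not_at_node hz
  have hinterp : P - Q = Lagrange.interpolate s x fun j ↦ P.eval (x j) :=
    Lagrange.eq_interpolate_of_eval_eq _ hx (degree_nodal_sub_nodal_lt s _ _) fun j hj ↦ by
      rw [eval_sub, Lagrange.eval_nodal_at_node hj, sub_zero]
  have hPQ : P.eval z - Q.eval z =
      Q.eval z * (-c * ∑ j ∈ s, shiftWeight c x s j / (z - x j)) := by
    rw [← eval_sub, hinterp, Lagrange.eval_interpolate_not_at_node _ hz, mul_sum _ _ (-c)]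
    congr 1
    refine sum_congr rfl fun j hj ↦ ?_
    rw [mul_right_comm, nodalWeight_mul_eval_nodal_add_const hj]
    ring
  calc ∏ i ∈ s, (z - x i - c) / (z - x i)
      = P.eval z / Q.eval z := by
        simp only [P, Q, Lagrange.eval_nodal, prod_div_distrib, sub_sub]
    _ = 1 - c * ∑ j ∈ s, shiftWeight c x s j / (z - x j) := by
        rw [div_eq_iff hQz]
        linear_combination hPQ

theorem sum_shiftWeight_insert_mul_pow (ha : a ∉ s) (hx : Set.InjOn x (insert a s : Finset ι))
    (k : ℕ) :
    ∑ j ∈ insert a s, shiftWeight c x (insert a s) j * x j ^ k =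
      ∑ j ∈ s, shiftWeight c x s j * x j ^ k + x a ^ k -
        c * ∑ p ∈ range k, (∑ j ∈ s, shiftWeight c x s j * x j ^ p) * x a ^ (k - 1 - p) := by
  have hne : ∀ j ∈ s, x a ≠ x j := fun j hj h ↦
    ha (hx (mem_insert_self a s) (mem_insert_of_mem hj) h ▸ hj)
  have hxs : Set.InjOn x s := hx.mono (coe_subset.2 (subset_insert a s))
  have hold : ∀ j ∈ s, shiftWeight c x (insert a s) j * x j ^ k =
      shiftWeight c x s j * x j ^ k + c * x a ^ k * (shiftWeight c x s j / (x a - x j)) -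
        c * ∑ p ∈ range k, shiftWeight c x s j * x j ^ p * x a ^ (k - 1 - p) := fun j hj ↦ by
    have hja : x j - x a ≠ 0 := sub_ne_zero.2 (hne j hj).symm
    simp only [mul_assoc, ← mul_sum]
    rw [shiftWeight_insert_of_ne ha (ne_of_mem_of_not_mem hj ha).symm, ← neg_sub (x j) (x a),
      eq_div_of_mul_eq hja (geom_sum₂_mul (x j) (x a) k)]
    field_simp
    ring
  rw [sum_insert ha, shiftWeight_insert_self ha, prod_sub_sub_div_sub_eq_one_sub_sum hxs hne,
    sum_congr rfl hold, sum_sub_distrib, sum_add_distrib, ← mul_sum, ← mul_sum, sum_comm]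
  simp only [sum_mul]
  ring

theorem sum_shiftWeight (hx : Set.InjOn x s) : ∑ j ∈ s, shiftWeight c x s j = #s := by
  induction s using Finset.induction_on with
  | empty => simp
  | insert a s ha ih =>
    have hrec := sum_shiftWeight_insert_mul_pow (c := c) ha hx 0
    simp only [pow_zero, mul_one, range_zero, sum_empty, mul_zero, sub_zero] at hrec
    rw [hrec, ih (hx.mono (by simp)), card_insert_of_notMem ha, Nat.cast_succ]

theorem sum_shiftWeight_mul (hx : Set.InjOn x s) :
    ∑ j ∈ s, shiftWeight c x s j * x j = ∑ j ∈ s, x j - c * (#s).choose 2 := by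
  induction s using Finset.induction_on with
  | empty => simp
  | insert a s ha ih =>
    have hxs : Set.InjOn x s := hx.mono (by simp)
    have hrec := sum_shiftWeight_insert_mul_pow (c := c) ha hx 1
    simp only [pow_one, pow_zero, mul_one, sum_range_one, Nat.sub_self, sum_shiftWeight hxs,
      ih hxs] at hrec
    rw [hrec, sum_insert ha, card_insert_of_notMem ha, Nat.choose_succ_succ', Nat.choose_one_right]
    push_cast
    ring

theorem sum_shiftWeight_mul_sq (hx : Set.InjOn x s) :
    ∑ j ∈ s, shiftWeight c x s j * x j ^ 2 =
      ∑ j ∈ s, x j ^ 2 - c * (#s - 1) * ∑ j ∈ s, x j + c ^ 2 * (#s).choose 3 := by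
  induction s using Finset.induction_on with
  | empty => simp
  | insert a s ha ih =>
    have hxs : Set.InjOn x s := hx.mono (by simp)
    have hrec := sum_shiftWeight_insert_mul_pow (c := c) ha hx 2
    simp only [sum_range_succ, range_zero, sum_empty, zero_add, pow_zero, pow_one, mul_one,
      Nat.add_one_sub_one, Nat.sub_zero, Nat.sub_self, sum_shiftWeight hxs,
      sum_shiftWeight_mul hxs, ih hxs] at hrec
    rw [hrec, sum_insert ha, sum_insert ha, card_insert_of_notMem ha, Nat.choose_succ_succ']
    push_cast
    ring

end ShiftWeight

theorem cast_mul_sub_one_eq_two_mul_choose {R : Type*} [Ring R] (n : ℕ) :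
    (n : R) * (n - 1) = 2 * n.choose 2 := by
  rw [← Nat.cast_descFactorial_two, Nat.descFactorial_eq_factorial_mul_choose, Nat.factorial_two,
    Nat.cast_mul, Nat.cast_two]

theorem sum_sub_sub_one_mul_add {R : Type*} [CommRing R] (n : ℕ) :
    ∑ j : Fin n, ((n : R) - j - 1) * (n + j) = 2 * n.choose 2 + 4 * n.choose 3 := by
  induction n with
  | zero => simp
  | succ n ih =>
    have hstep (j : Fin n) : ((n + 1 : R) - j - 1) * (n + 1 + j) =
        (n - j - 1) * (n + j) + 2 * n := by ring
    simp only [Fin.sum_univ_castSucc, Fin.val_castSucc, Fin.val_last, Nat.cast_add_one, hstep,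
      sum_add_distrib, ih, sum_const, card_univ, Fintype.card_fin, nsmul_eq_mul,
      Nat.choose_succ_succ' n, Nat.choose_one_right]
    push_cast
    linear_combination 2 * cast_mul_sub_one_eq_two_mul_choose (R := R) n

theorem sum_prod_shift_identity_general {K : Type*} [Field K] (d : K) {n : ℕ} {x : Fin n → K}
    (hx : Function.Injective x) :
    ∑ j, x j * (x j - d) * ∏ i ∈ univ.erase j, (x j - x i - 2 * d) / (x j - x i) =
      ∑ j : Fin n, (x j - d * (n - j - 1)) * (x j - d * (n + j)) := by
  have hleft (j : Fin n) :
      x j * (x j - d) * ∏ i ∈ univ.erase j, (x j - x i - 2 * d) / (x j - x i) =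
        shiftWeight (2 * d) x univ j * x j ^ 2 - d * (shiftWeight (2 * d) x univ j * x j) := by
    rw [shiftWeight]
    ring
  have hright (j : Fin n) : (x j - d * (n - j - 1)) * (x j - d * (n + j)) =
      x j ^ 2 - d * (2 * n - 1) * x j + d ^ 2 * ((n - j - 1) * (n + j)) := by
    ring
  simp only [hleft, hright, sum_sub_distrib, sum_add_distrib, ← mul_sum,
    sum_shiftWeight_mul hx.injOn, sum_shiftWeight_mul_sq hx.injOn, sum_sub_sub_one_mul_add,
    card_univ, Fintype.card_fin]
  ring

/-- A combinatorial identity for pairwise distinct complex numbers `x_1,…,x_n`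
(indexed here by `Fin n`, so `x_j` for 1-indexed `j` is `x ⟨j-1⟩`):
`Σ_j x_j(x_j − 1) ∏_{i≠j} (x_j − x_i − 2)/(x_j − x_i)
  = Σ_j (x_j − n + j)(x_j − n − j + 1)`. -/
theorem sum_prod_shift_identity (n : ℕ) (hn : 1 ≤ n) (x : Fin n → ℂ)
    (hx : Function.Injective x) :
    ∑ j : Fin n, x j * (x j - 1) *
        ∏ i ∈ Finset.univ.erase j, (x j - x i - 2) / (x j - x i) =
      ∑ j : Fin n, (x j - (n : ℂ) + ((j : ℕ) : ℂ) + 1) *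
        (x j - (n : ℂ) - ((j : ℕ) : ℂ)) := by
  simpa only [mul_one, one_mul, sub_add, sub_sub] using sum_prod_shift_identity_general 1 hx
end

section
/- Let α be a real number. For an integer n ≥ 0 define the monic Laguerre polynomial L̂_n^{(α)} ∈ ℝ[X] by L̂_n^{(α)}(x) = Σ_{j=0}^{n} (−1)^{n−j} · C(n,j) · (∏_{t=j+1}^{n} (α + t)) · x^j. Then for every integer m ≥ 0 and every integer i ≥ 1, the (i−1)-st derivative satisfies (d/dX)^{i−1} L̂_m^{(α)} = Σ_{l=0}^{i−1} (−1)^l · C(i−1, l) · L̂_m^{(α+l)} as polynomials in ℝ[X]. -/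
/-- The monic Laguerre polynomial `L̂_n^{(α)}(x) = (−1)^n n! L_n^{(α)}(x)
  = Σ_{j=0}^{n} (−1)^{n−j} C(n,j) (∏_{t=j+1}^{n} (α + t)) x^j`. -/
noncomputable def laguerreM (α : ℝ) (n : ℕ) : Polynomial ℝ :=
  ∑ j ∈ Finset.range (n + 1),
    Polynomial.C ((-1 : ℝ) ^ (n - j) * (n.choose j : ℝ) *
        ∏ t ∈ Finset.Icc (j + 1) n, (α + (t : ℝ))) *
      Polynomial.X ^ j

/-!
Differentiation in `X` acts on the family `α ↦ L̂_n^{(α)}` as minus the forward difference with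
step `1` in the parameter: `(d/dX) L̂_n^{(α)} = L̂_n^{(α)} - L̂_n^{(α+1)}`. Comparing coefficients,
this comes down to the forward difference of a product of consecutive shifts `α + t`, in which all
but the two extreme factors are common. An additive operator on the values commutes with forward
differences in the parameter, so the relation iterates, and the binomial expansion of the iterated
forward difference gives the sum.
-/

open Finset Polynomial
open scoped fwdDiff

section fwdDiff

variable {M G R : Type*} [AddCommMonoid M] [AddCommGroup G]

theorem map_fwdDiff_iter {H : Type*} [AddCommGroup H] (φ : G →+ H) (h : M) (f : M → G) (k : ℕ)
    (a : M) : φ ((Δ_[h])^[k] f a) = (Δ_[h])^[k] (φ ∘ f) a := by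
  simp only [fwdDiff_iter_eq_sum_shift, map_sum, map_zsmul, Function.comp_apply]

theorem iterate_eq_pow_smul_fwdDiff_iter_of_comp_eq [Semiring R] [Module R G] {D : G →ₗ[R] G}
    {h : M} {f : M → G} {c : R} (hD : D ∘ f = c • Δ_[h] f) (k : ℕ) (a : M) :
    D^[k] (f a) = c ^ k • (Δ_[h])^[k] f a := by
  induction k with
  | zero => simp
  | succ k ih =>
    calc D^[k + 1] (f a)
        = c ^ k • D ((Δ_[h])^[k] f a) := by rw [Function.iterate_succ_apply', ih, map_smul]
      _ = c ^ k • (Δ_[h])^[k] (c • Δ_[h] f) a := by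
        rw [← hD]
        exact congrArg _ (map_fwdDiff_iter D.toAddMonoidHom h f k a)
      _ = c ^ (k + 1) • (Δ_[h])^[k + 1] f a := by
        rw [fwdDiff_iter_const_smul, Pi.smul_apply, smul_smul, ← pow_succ,
          Function.iterate_succ_apply]

theorem neg_one_pow_smul_fwdDiff_iter_eq_sum_shift [Ring R] [Module R G] (h : M) (f : M → G)
    (k : ℕ) (a : M) :
    (-1 : R) ^ k • (Δ_[h])^[k] f a =
      ∑ l ∈ range (k + 1), ((-1 : R) ^ l * (k.choose l : R)) • f (a + l • h) := by
  rw [fwdDiff_iter_eq_sum_shift, smul_sum]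
  refine sum_congr rfl fun l hl ↦ ?_
  have hlk : l ≤ k := mem_range_succ_iff.mp hl
  have same_parity : Even (k + (k - l)) ↔ Even l := by grind
  have sign : (-1 : R) ^ k * (-1) ^ (k - l) = (-1) ^ l := by
    rw [← pow_add, neg_one_pow_congr same_parity]
  rw [← Int.cast_smul_eq_zsmul R, smul_smul, ← sign, mul_assoc]
  push_cast
  rfl

theorem fwdDiff_prod_Ico_add [CommRing R] {k n : ℕ} (hkn : k ≤ n) (a : R) :
    Δ_[1] (fun x : R ↦ ∏ t ∈ Ico k n, (x + t)) a = (n - k) * ∏ t ∈ Ico (k + 1) n, (a + t) := by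
  obtain rfl | hlt := hkn.eq_or_lt
  · simp [fwdDiff]
  have shifted : ∏ t ∈ Ico k n, (a + 1 + t) = (∏ t ∈ Ico (k + 1) n, (a + t)) * (a + n) := by
    rw [← prod_Ico_succ_top (Nat.succ_le_of_lt hlt) fun t ↦ a + (t : R),
      ← prod_Ico_add' (fun t : ℕ ↦ a + (t : R)) k n 1]
    exact prod_congr rfl fun t _ ↦ by push_cast; ring
  rw [fwdDiff, shifted, prod_eq_prod_Ico_succ_bot hlt]
  ring

end fwdDiff

theorem cast_choose_succ_mul_cast_succ {R : Type*} [Ring R] (n k : ℕ) :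
    (n.choose (k + 1) : R) * (k + 1) = n.choose k * (n - k) := by
  obtain hnk | hkn := lt_or_ge n k
  · simp [Nat.choose_eq_zero_of_lt hnk, Nat.choose_eq_zero_of_lt (hnk.trans k.lt_succ_self)]
  · rw [← Nat.cast_sub hkn]
    exact_mod_cast congrArg (Nat.cast : ℕ → R) (n.choose_succ_right_eq k)

theorem coeff_laguerreM (α : ℝ) (n j : ℕ) :
    (laguerreM α n).coeff j =
      (-1) ^ (n - j) * (n.choose j : ℝ) * ∏ t ∈ Icc (j + 1) n, (α + t) := by
  simp only [laguerreM, finsetSum_coeff, coeff_C_mul_X_pow, sum_ite_eq, mem_range_succ_iff,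
    ite_eq_left_iff, not_le]
  intro hnj
  simp [Nat.choose_eq_zero_of_lt hnj]

theorem coeff_fwdDiff_laguerreM (α : ℝ) (n j : ℕ) :
    (Δ_[1] (laguerreM · n) α).coeff j =
      (-1) ^ (n - j) * (n.choose j * (n - j) : ℝ) * ∏ t ∈ Icc (j + 2) n, (α + t) := by
  rw [fwdDiff, coeff_sub, coeff_laguerreM, coeff_laguerreM]
  obtain hnj | hjn := lt_or_ge n j
  · simp [Nat.choose_eq_zero_of_lt hnj]
  have prod_sub_prod := fwdDiff_prod_Ico_add (Nat.add_le_add_right hjn 1) α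
  simp only [fwdDiff, Ico_add_one_right_eq_Icc] at prod_sub_prod
  rw [← mul_sub, prod_sub_prod]
  push_cast
  ring

theorem derivative_laguerreM (α : ℝ) (n : ℕ) :
    derivative (laguerreM α n) = -Δ_[1] (laguerreM · n) α := by
  ext j
  rw [coeff_derivative, coeff_neg, coeff_laguerreM, coeff_fwdDiff_laguerreM,
    ← cast_choose_succ_mul_cast_succ]
  obtain hnj | hjn := le_or_gt n j
  · simp [Nat.choose_eq_zero_of_lt (Nat.lt_succ_of_le hnj)]
  · rw [show n - j = n - (j + 1) + 1 by lia]
    ring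

/-- Derivatives of monic Laguerre polynomials:
`(d/dX)^{i−1} L̂_m^{(α)} = Σ_{l=0}^{i−1} (−1)^l C(i−1,l) L̂_m^{(α+l)}`. -/
theorem iterate_derivative_laguerreM (α : ℝ) (m : ℕ) (i : ℕ) (hi : 1 ≤ i) :
    (⇑Polynomial.derivative)^[i - 1] (laguerreM α m) =
      ∑ l ∈ Finset.range i,
        ((-1 : ℝ) ^ l * ((i - 1).choose l : ℝ)) • laguerreM (α + (l : ℝ)) m := by
  obtain ⟨k, rfl⟩ := Nat.exists_eq_add_of_le' hi
  have derivative_comp : derivative ∘ (laguerreM · m) = (-1 : ℝ) • Δ_[1] (laguerreM · m) := by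
    ext1 a
    simpa using derivative_laguerreM a m
  rw [Nat.add_sub_cancel, iterate_eq_pow_smul_fwdDiff_iter_of_comp_eq derivative_comp,
    neg_one_pow_smul_fwdDiff_iter_eq_sum_shift]
  simp only [nsmul_one]
end

section
/- Let μ and ν be partitions with degree vectors (n_1,…,n_{ℓ(μ)}) and (m_1,…,m_{ℓ(ν)}) respectively. For α ∈ ℝ, consider the ℓ(μ)+ℓ(ν) smooth functions on ℝ given by f_i(x) = L̂_{n_i}^{(α)}(x) for 1 ≤ i ≤ ℓ(μ), and h_j(x) = e^x · L̂_{m_j}^{(α)}(−x) for 1 ≤ j ≤ ℓ(ν). Define W(α, x) as the determinant of the (ℓ(μ)+ℓ(ν)) × (ℓ(μ)+ℓ(ν)) matrix whose (r, c)-entry is the (r−1)-st derivative at x of the c-th function (the functions ordered f_1,…,f_{ℓ(μ)}, h_1,…,h_{ℓ(ν)}), and set Ω̂_α(x) := ((−1)^{m_1+…+m_{ℓ(ν)}} / (Δ(n_μ) · Δ(m_ν))) · e^{−ℓ(ν)·x} · W(α, x), where Δ(n_μ) = ∏_{i<i'} (n_{i'} − n_i) and Δ(m_ν) = ∏_{j<j'}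 (m_{j'} − m_j). Then for every x ∈ ℝ, Ω̂_α(αx)/α^{|μ|+|ν|} tends to (x − 1)^{|μ|} · (x + 1)^{|ν|} both as α → +∞ and as α → −∞. -/
/-- The Vandermonde determinant `∏_{i<j} (n_j − n_i)` of the degree vector, over `ℝ`. -/
noncomputable def vanderR (l : List ℕ) : ℝ :=
  ∏ i : Fin l.length, ∏ j : Fin l.length,
    if (i : ℕ) < (j : ℕ) then ((degVec l j : ℝ) - (degVec l i : ℝ)) else 1

/-- The list of functions `f_1,…,f_{ℓ(μ)}, h_1,…,h_{ℓ(ν)}` with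
`f_i(x) = L̂_{n_i}^{(α)}(x)` and `h_j(x) = eˣ · L̂_{m_j}^{(α)}(−x)`. -/
noncomputable def omegaFun (μ ν : List ℕ) (α : ℝ)
    (c : Fin (μ.length + ν.length)) : ℝ → ℝ :=
  if h : (c : ℕ) < μ.length then
    fun x => (laguerreM α (degVec μ ⟨c, h⟩)).eval x
  else
    fun x => Real.exp x *
      (laguerreM α (degVec ν ⟨(c : ℕ) - μ.length, by
        have := c.isLt; omega⟩)).eval (-x)

/-- The polynomial `Ω̂_α(x) = ((−1)^{Σ m_j}/(Δ(n_μ)Δ(m_ν))) e^{−ℓ(ν)x}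
  · Wr[f_1,…,f_{ℓ(μ)}, h_1,…,h_{ℓ(ν)}](x)`, the Wronskian being the determinant
whose `(r,c)` entry is the `(r−1)`-st derivative of the `c`-th function at `x`. -/
noncomputable def OmegaHat (μ ν : List ℕ) (α : ℝ) (x : ℝ) : ℝ :=
  ((-1 : ℝ) ^ (∑ j : Fin ν.length, degVec ν j) / (vanderR μ * vanderR ν)) *
    Real.exp (-(ν.length : ℝ) * x) *
    (Matrix.of fun r c : Fin (μ.length + ν.length) =>
        iteratedDeriv (r : ℕ) (omegaFun μ ν α c) x).det

/-!
Replacing `y` by `α y` turns the Laguerre polynomials into `α ^ n` times polynomials tending to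
`(y - 1) ^ n` as `|α| → ∞`, and `exp y` into `exp (α y)`. The point is that the Wronskian of
`p_1, …, p_l, exp (α y) q_1, …, exp (α y) q_k` separates in this limit: multiplied by
`α ^ (-k l) exp (-k α x)` it tends to `Wr[p] * Wr[q]`. To see this, replace the rows `(d/dx) ^ r` by
`P(d/dx)` with `P` running over a basis of polynomials divisible by `(X - α) ^ k` or by `X ^ l`.
Since `P(d/dx)(exp (α y) q) = exp (α y) P(d/dx + α) q`, dividing the first `l` columns by `α ^ k`
and the others by `α ^ l` makes the matrix block diagonal in the limit, and the determinant of the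
change of basis is the resultant of `X ^ l` and `(X - α) ^ k`. Finally, the Wronskian of the powers
`(y + b) ^ n_c` is a Vandermonde determinant times a power of `x + b`.
-/

open Polynomial Filter Bornology Topology ContDiff

section BasisChange

variable {R : Type*} [CommRing R]

lemma linearMap_apply_eq_sum_coeff_mul (φ : R[X] →ₗ[R] R) {N : ℕ} {P : R[X]}
    (hP : P.natDegree < N) : φ P = ∑ j : Fin N, P.coeff j * φ (X ^ (j : ℕ)) := by
  conv_lhs =>
    rw [P.as_sum_range' N hP, map_sum, ← Fin.sum_univ_eq_sum_range fun j ↦ φ (monomial j _)]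
  exact Finset.sum_congr rfl fun j _ ↦ by rw [← smul_X_eq_monomial, map_smul, smul_eq_mul]

lemma det_apply_sumElim_mul_monic {ι : Type*} [Fintype ι] [DecidableEq ι] {k : ℕ}
    (a : ι → R[X]) (P : R[X]) (p : Fin k → R[X]) (hdeg : ∀ s, (p s).natDegree = s)
    (hmonic : ∀ s, (p s).Monic) (φ : ι ⊕ Fin k → R[X] →ₗ[R] R) :
    (Matrix.of fun r c ↦ φ c (Sum.elim a (fun s : Fin k ↦ P * p s) r)).det =
      (Matrix.of fun r c ↦ φ c (Sum.elim a (fun s : Fin k ↦ P * X ^ (s : ℕ)) r)).det := by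
  let U : Matrix (Fin k) (Fin k) R := (Matrix.of fun i j : Fin k ↦ (p j).coeff i).transpose
  have hU : (Matrix.fromBlocks (1 : Matrix ι ι R) 0 0 U).det = 1 := by
    rw [Matrix.det_fromBlocks_zero₂₁, Matrix.det_one, one_mul, Matrix.det_transpose,
      Matrix.det_matrixOfPolynomials p hdeg hmonic]
  conv_rhs => rw [← one_mul (Matrix.det _), ← hU, ← Matrix.det_mul]
  congr 1
  ext r c
  rw [Matrix.mul_apply, Fintype.sum_sum_type]
  rcases r with r | s
  · simp [Matrix.one_apply]
  · simpa [U] using linearMap_apply_eq_sum_coeff_mul (φ c ∘ₗ LinearMap.mulLeft R P)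
      (hdeg s ▸ s.2)

lemma det_apply_sylvester {l k : ℕ} {P Q : R[X]} (hP : P.natDegree ≤ l) (hQ : Q.natDegree ≤ k)
    (φ : Fin l ⊕ Fin k → R[X] →ₗ[R] R) :
    (Matrix.of fun r c ↦ φ c
      (Sum.elim (fun r : Fin l ↦ X ^ (r : ℕ) * Q) (fun s : Fin k ↦ P * X ^ (s : ℕ)) r)).det =
      resultant P Q l k * (Matrix.of fun r c ↦ φ c (X ^ (finSumFinEquiv r : ℕ))).det := by
  rw [resultant, ← Matrix.det_transpose (sylvester _ _ _ _),
    ← Matrix.det_submatrix_equiv_self finSumFinEquiv (sylvester _ _ _ _).transpose,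
    ← Matrix.det_mul]
  congr 1
  ext r c
  have hlt : (Sum.elim (fun r : Fin l ↦ X ^ (r : ℕ) * Q)
      (fun s : Fin k ↦ P * X ^ (s : ℕ)) r).natDegree < l + k := by
    rcases r with r | s
    · have := natDegree_mul_le (p := X ^ (r : ℕ)) (q := Q)
      have := natDegree_X_pow_le (R := R) r
      simp only [Sum.elim_inl]
      omega
    · have := natDegree_mul_le (p := P) (q := X ^ (s : ℕ))
      have := natDegree_X_pow_le (R := R) s
      simp only [Sum.elim_inr]
      omega
  rw [Matrix.of_apply, linearMap_apply_eq_sum_coeff_mul (φ c) hlt, Matrix.mul_apply,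
    ← finSumFinEquiv.sum_comp]
  refine Finset.sum_congr rfl fun j _ ↦ ?_
  simp only [Matrix.submatrix_apply, Matrix.transpose_apply, Matrix.of_apply]
  congr 1
  generalize finSumFinEquiv j = j
  rcases r with r | s
  · simp only [Sum.elim_inl, sylvester, Matrix.of_apply, finSumFinEquiv_apply_left,
      Fin.addCases_left, coeff_X_pow_mul', Set.mem_Icc]
    split_ifs <;> first | rfl | omega | exact coeff_eq_zero_of_natDegree_lt (by omega)
  · simp only [Sum.elim_inr, sylvester, Matrix.of_apply, finSumFinEquiv_apply_right,
      Fin.addCases_right, coeff_mul_X_pow', Set.mem_Icc]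
    split_ifs <;> first | rfl | omega | exact coeff_eq_zero_of_natDegree_lt (by omega)

/-- The polynomials `X ^ r * (X - a) ^ k` (`r < l`) and `X ^ l * (X - a) ^ s` (`s < k`). They form
a basis of the polynomials of degree `< l + k` when `a` is a unit. -/
noncomputable def splitBasis (l k : ℕ) (a : R) : Fin l ⊕ Fin k → R[X] :=
  Sum.elim (fun r ↦ X ^ (r : ℕ) * (X - C a) ^ k) (fun s ↦ X ^ l * (X - C a) ^ (s : ℕ))

lemma det_apply_splitBasis {l k : ℕ} (a : R) (φ : Fin l ⊕ Fin k → R[X] →ₗ[R] R) :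
    (Matrix.of fun r c ↦ φ c (splitBasis l k a r)).det =
      (-a) ^ (k * l) * (Matrix.of fun r c ↦ φ c (X ^ (finSumFinEquiv r : ℕ))).det := by
  nontriviality R
  have hdeg (j : ℕ) : ((X - C a) ^ j).natDegree = j := by simp [(monic_X_sub_C a).natDegree_pow]
  have hres : resultant (X ^ l) ((X - C a) ^ k) l k = (-a) ^ (k * l) := by
    rw [resultant_X_pow_left _ _ _ (hdeg k).le, coeff_zero_eq_eval_zero]
    simp [pow_mul]
  rw [← hres, ← det_apply_sylvester (natDegree_X_pow_le l) (hdeg k).le]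
  exact det_apply_sumElim_mul_monic _ _ _ (fun s ↦ hdeg s) (fun s ↦ (monic_X_sub_C a).pow s) φ

lemma taylor_splitBasis_inl {l k : ℕ} (a : R) (r : Fin l) :
    taylor a (splitBasis l k a (Sum.inl r)) = X ^ k * (X + C a) ^ (r : ℕ) := by
  simp [splitBasis, taylor_mul, taylor_pow, mul_comm]

lemma taylor_splitBasis_inr {l k : ℕ} (a : R) (s : Fin k) :
    taylor a (splitBasis l k a (Sum.inr s)) = X ^ (s : ℕ) * (X + C a) ^ l := by
  simp [splitBasis, taylor_mul, taylor_pow, mul_comm]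

end BasisChange

section Separation

variable {𝕜 : Type*} [NormedField 𝕜]

lemma tendsto_inv_pow_mul_apply_mul_X_add_C_pow {φ : 𝕜 → 𝕜[X] →ₗ[𝕜] 𝕜} {φ₀ : 𝕜[X] →ₗ[𝕜] 𝕜}
    (hφ : ∀ P, Tendsto (fun a ↦ φ a P) (cobounded 𝕜) (𝓝 (φ₀ P))) (u : 𝕜) (j : ℕ) (P : 𝕜[X]) :
    Tendsto (fun a ↦ (a ^ j)⁻¹ * φ a (P * (X + C (u * a)) ^ j)) (cobounded 𝕜)
      (𝓝 (u ^ j * φ₀ P)) := by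
  induction j generalizing P with
  | zero => simpa using hφ P
  | succ j ih =>
    have hlim := (tendsto_inv₀_cobounded.mul (ih (P * X))).add ((ih P).const_mul u)
    rw [zero_mul, zero_add, ← mul_assoc, ← pow_succ'] at hlim
    refine hlim.congr' ?_
    filter_upwards [eventually_ne_cobounded 0] with a ha
    have hexpand : P * (X + C (u * a)) ^ (j + 1) =
        P * X * (X + C (u * a)) ^ j + (u * a) • (P * (X + C (u * a)) ^ j) := by
      rw [smul_eq_C_mul]
      ring
    rw [hexpand, map_add, map_smul, smul_eq_mul]
    field_simp
    ring

lemma tendsto_inv_pow_mul_apply_mul_X_add_C_pow_of_lt {φ : 𝕜 → 𝕜[X] →ₗ[𝕜] 𝕜}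
    {φ₀ : 𝕜[X] →ₗ[𝕜] 𝕜} (hφ : ∀ P, Tendsto (fun a ↦ φ a P) (cobounded 𝕜) (𝓝 (φ₀ P))) (u : 𝕜)
    {j n : ℕ} (hj : j < n) (P : 𝕜[X]) :
    Tendsto (fun a ↦ (a ^ n)⁻¹ * φ a (P * (X + C (u * a)) ^ j)) (cobounded 𝕜) (𝓝 0) := by
  have hinv : Tendsto (fun a : 𝕜 ↦ a⁻¹ ^ (n - j)) (cobounded 𝕜) (𝓝 0) := by
    simpa [zero_pow (Nat.sub_ne_zero_of_lt hj)] using (tendsto_inv₀_cobounded (α := 𝕜)).pow (n - j)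
  have hlim := hinv.mul (tendsto_inv_pow_mul_apply_mul_X_add_C_pow hφ u j P)
  rw [zero_mul] at hlim
  refine hlim.congr fun a ↦ ?_
  rw [← mul_assoc, inv_pow, ← mul_inv, ← pow_add, Nat.sub_add_cancel hj.le]

variable {l k : ℕ} {φ : 𝕜 → Fin l → 𝕜[X] →ₗ[𝕜] 𝕜} {φ₀ : Fin l → 𝕜[X] →ₗ[𝕜] 𝕜}
  {ψ : 𝕜 → Fin k → 𝕜[X] →ₗ[𝕜] 𝕜} {ψ₀ : Fin k → 𝕜[X] →ₗ[𝕜] 𝕜}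

lemma tendsto_matrix_apply_splitBasis
    (hφ : ∀ c P, Tendsto (fun a ↦ φ a c P) (cobounded 𝕜) (𝓝 (φ₀ c P)))
    (hψ : ∀ c P, Tendsto (fun a ↦ ψ a c P) (cobounded 𝕜) (𝓝 (ψ₀ c P))) :
    Tendsto (fun a ↦ Matrix.of fun r c ↦
        Sum.elim (fun _ ↦ (a ^ k)⁻¹) (fun _ ↦ (a ^ l)⁻¹) c *
          Sum.elim (φ a) (fun c ↦ ψ a c ∘ₗ taylor a) c (splitBasis l k a r))
      (cobounded 𝕜)
      (𝓝 (Matrix.fromBlocks ((-1 : 𝕜) ^ k • Matrix.of fun r c : Fin l ↦ φ₀ c (X ^ (r : ℕ))) 0 0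
        (Matrix.of fun r c : Fin k ↦ ψ₀ c (X ^ (r : ℕ))))) := by
  refine tendsto_pi_nhds.2 fun r ↦ tendsto_pi_nhds.2 fun c ↦ ?_
  rcases r with r | s <;> rcases c with c | c
  · simpa [splitBasis, sub_eq_add_neg] using
      tendsto_inv_pow_mul_apply_mul_X_add_C_pow (hφ c) (-1) k (X ^ (r : ℕ))
  · simpa [taylor_splitBasis_inl] using
      tendsto_inv_pow_mul_apply_mul_X_add_C_pow_of_lt (hψ c) 1 r.2 (X ^ k)
  · simpa [splitBasis, sub_eq_add_neg] using
      tendsto_inv_pow_mul_apply_mul_X_add_C_pow_of_lt (hφ c) (-1) s.2 (X ^ l)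
  · simpa [taylor_splitBasis_inr] using
      tendsto_inv_pow_mul_apply_mul_X_add_C_pow (hψ c) 1 l (X ^ (s : ℕ))

lemma tendsto_det_apply_sumElim_taylor
    (hφ : ∀ c P, Tendsto (fun a ↦ φ a c P) (cobounded 𝕜) (𝓝 (φ₀ c P)))
    (hψ : ∀ c P, Tendsto (fun a ↦ ψ a c P) (cobounded 𝕜) (𝓝 (ψ₀ c P))) :
    Tendsto (fun a ↦ (a ^ (k * l))⁻¹ * (Matrix.of fun r c ↦
        Sum.elim (φ a) (fun c ↦ ψ a c ∘ₗ taylor a) c (X ^ (finSumFinEquiv r : ℕ))).det)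
      (cobounded 𝕜)
      (𝓝 ((Matrix.of fun r c : Fin l ↦ φ₀ c (X ^ (r : ℕ))).det *
        (Matrix.of fun r c : Fin k ↦ ψ₀ c (X ^ (r : ℕ))).det)) := by
  have hsign : (-1 : 𝕜) ^ (k * l) * (-1) ^ (k * l) = 1 := by rw [← mul_pow]; simp
  have hlim := ((continuous_id.matrix_det.tendsto _).comp
    (tendsto_matrix_apply_splitBasis hφ hψ)).const_mul ((-1 : 𝕜) ^ (k * l))
  simp only [id, Matrix.det_fromBlocks_zero₂₁, Matrix.det_smul, Fintype.card_fin, ← pow_mul,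
    ← mul_assoc, hsign, one_mul] at hlim
  refine hlim.congr' ?_
  filter_upwards [eventually_ne_cobounded 0] with a ha
  have hcols := Matrix.det_mul_row
    (Sum.elim (fun _ : Fin l ↦ (a ^ k)⁻¹) (fun _ : Fin k ↦ (a ^ l)⁻¹))
    (Matrix.of fun r c ↦
      Sum.elim (φ a) (fun c ↦ ψ a c ∘ₗ taylor a) c (splitBasis l k a r))
  rw [det_apply_splitBasis] at hcols
  simp only [Matrix.of_apply, Fintype.prod_sum_type, Sum.elim_inl, Sum.elim_inr, Finset.prod_const,
    Finset.card_univ, Fintype.card_fin, inv_pow, ← pow_mul, mul_comm l k] at hcols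
  rw [Function.comp_apply, hcols, neg_pow a]
  field_simp
  rw [pow_two, hsign, one_mul]

end Separation

section Wronskian

variable {𝕜 : Type*} [NontriviallyNormedField 𝕜] {l k : ℕ}

/-- The Wronskian determinant of a finite family of functions; Mathlib's `Polynomial.wronskian`
is the case of two polynomials. -/
noncomputable def wronskianDet (f : Fin l → 𝕜 → 𝕜) (x : 𝕜) : 𝕜 :=
  (Matrix.of fun r c : Fin l ↦ iteratedDeriv (r : ℕ) (f c) x).det

lemma wronskianDet_const_mul (v : Fin l → 𝕜) (f : Fin l → 𝕜 → 𝕜) (x : 𝕜) :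
    wronskianDet (fun c y ↦ v c * f c y) x = (∏ c, v c) * wronskianDet f x := by
  simp only [wronskianDet, iteratedDeriv_const_mul_field, ← Matrix.det_mul_row, Matrix.of_apply]

lemma wronskianDet_comp_const_mul {f : Fin l → 𝕜 → 𝕜} (hf : ∀ c, ContDiff 𝕜 l (f c)) (a x : 𝕜) :
    wronskianDet (fun c y ↦ f c (a * y)) x =
      a ^ (∑ r : Fin l, (r : ℕ)) * wronskianDet f (a * x) := by
  have hderiv (r c : Fin l) : iteratedDeriv r (fun y ↦ f c (a * y)) x =
      a ^ (r : ℕ) * iteratedDeriv r (f c) (a * x) := by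
    rw [iteratedDeriv_comp_const_mul ((hf c).of_le (mod_cast r.2.le))]
  simp only [wronskianDet, hderiv, ← Finset.prod_pow_eq_pow_sum, ← Matrix.det_mul_column,
    Matrix.of_apply]

lemma det_descFactorial_eq_det_vandermonde (R : Type*) [CommRing R] (n : Fin l → ℕ) :
    (Matrix.of fun r c : Fin l ↦ ((n c).descFactorial r : R)).det =
      (Matrix.vandermonde fun c ↦ (n c : R)).det := by
  suffices hℤ : (Matrix.of fun r c : Fin l ↦ ((n c).descFactorial r : ℤ)).det =
      (Matrix.vandermonde fun c ↦ (n c : ℤ)).det by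
    have := congrArg (Int.castRingHom R) hℤ
    rw [RingHom.map_det, RingHom.map_det] at this
    simpa [Matrix.vandermonde, Matrix.map] using this
  rw [Matrix.det_eval_matrixOfPolynomials_eq_det_vandermonde _ (fun i ↦ descPochhammer ℤ i)
    (fun i ↦ descPochhammer_natDegree ℤ i) (fun i ↦ monic_descPochhammer ℤ i),
    ← Matrix.det_transpose]
  simp only [descPochhammer_eval_eq_descFactorial]
  rfl

lemma det_descFactorial_mul_pow_sub {R : Type*} [CommRing R] (n : Fin l → ℕ) {N : ℕ}
    (hN : ∑ c, n c = N + ∑ r : Fin l, (r : ℕ)) (x : R) :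
    (Matrix.of fun r c : Fin l ↦ ((n c).descFactorial r : R) * x ^ (n c - r)).det =
      (Matrix.vandermonde fun c ↦ (n c : R)).det * x ^ N := by
  -- Over an indeterminate the powers of `X` in the rows can be cancelled, even when `x = 0`.
  suffices hX : (Matrix.of fun r c : Fin l ↦ ((n c).descFactorial r : R[X]) * X ^ (n c - r)).det =
      (Matrix.vandermonde fun c ↦ (n c : R[X])).det * X ^ N by
    have := congrArg (evalRingHom x) hX
    rw [map_mul, RingHom.map_det, RingHom.map_det] at this
    simpa [Matrix.vandermonde, Matrix.map] using this
  have hentry (r c : Fin l) : (X : R[X]) ^ (r : ℕ) *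
      (((n c).descFactorial r : R[X]) * X ^ (n c - r)) =
      X ^ n c * ((n c).descFactorial r : R[X]) := by
    rcases le_or_gt (r : ℕ) (n c) with hrc | hrc
    · rw [← pow_mul_pow_sub X hrc]
      ring
    · simp [Nat.descFactorial_eq_zero_iff_lt.2 hrc]
  have hrow := Matrix.det_mul_column (fun r : Fin l ↦ (X : R[X]) ^ (r : ℕ))
    (Matrix.of fun r c ↦ ((n c).descFactorial r : R[X]) * X ^ (n c - r))
  have hcol := Matrix.det_mul_row (fun c ↦ (X : R[X]) ^ n c)
    (Matrix.of fun r c : Fin l ↦ ((n c).descFactorial r : R[X]))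
  simp only [Matrix.of_apply, hentry, Finset.prod_pow_eq_pow_sum] at hrow hcol
  apply (isRegular_X_pow (R := R) (∑ r : Fin l, (r : ℕ))).left
  beta_reduce
  rw [← hrow, hcol, det_descFactorial_eq_det_vandermonde, hN]
  ring

lemma wronskianDet_add_pow (n : Fin l → ℕ) {N : ℕ} (hN : ∑ c, n c = N + ∑ r : Fin l, (r : ℕ))
    (b x : 𝕜) : wronskianDet (fun c y ↦ (y + b) ^ n c) x =
      (Matrix.vandermonde fun c ↦ (n c : 𝕜)).det * (x + b) ^ N := by
  have hderiv (r m : ℕ) : iteratedDeriv r (fun y : 𝕜 ↦ (y + b) ^ m) x =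
      m.descFactorial r * (x + b) ^ (m - r) := by
    rw [iteratedDeriv_comp_add_const r (fun y : 𝕜 ↦ y ^ m) b]
    exact iteratedDeriv_pow m r
  simp only [wronskianDet, hderiv, ← det_descFactorial_mul_pow_sub n hN]

/-- The functional `P ↦ (P(d/dx) f)(x)` on polynomials, encoding all derivatives of `f` at `x`. -/
noncomputable def jet (f : 𝕜 → 𝕜) (x : 𝕜) : 𝕜[X] →ₗ[𝕜] 𝕜 :=
  lsum fun j ↦ (LinearMap.mul 𝕜 𝕜).flip (iteratedDeriv j f x)

lemma jet_apply (f : 𝕜 → 𝕜) (x : 𝕜) (P : 𝕜[X]) :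
    jet f x P = P.sum fun j a ↦ a * iteratedDeriv j f x := by
  simp [jet, mul_comm]

lemma jet_X_pow (f : 𝕜 → 𝕜) (x : 𝕜) (r : ℕ) : jet f x (X ^ r) = iteratedDeriv r f x := by
  simp [jet_apply, ← monomial_one_right_eq_X_pow]

lemma tendsto_jet {ι : Type*} {F : Filter ι} {f : ι → 𝕜 → 𝕜} {f₀ : 𝕜 → 𝕜} {x : 𝕜}
    (hf : ∀ j, Tendsto (fun i ↦ iteratedDeriv j (f i) x) F (𝓝 (iteratedDeriv j f₀ x)))
    (P : 𝕜[X]) : Tendsto (fun i ↦ jet (f i) x P) F (𝓝 (jet f₀ x P)) := by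
  simp only [jet_apply]
  exact tendsto_finsetSum _ fun j _ ↦ (hf j).const_mul _

lemma jet_exp_mul {g : ℝ → ℝ} {x : ℝ} (hg : ContDiffAt ℝ ∞ g x) (a : ℝ) :
    jet (fun y ↦ Real.exp (a * y) * g y) x = Real.exp (a * x) • jet g x ∘ₗ taylor a := by
  refine (basisMonomials ℝ).ext fun r ↦ ?_
  have hexp : ContDiffAt ℝ r (fun y ↦ Real.exp (a * y)) x := by fun_prop
  simp only [coe_basisMonomials, monomial_one_right_eq_X_pow, LinearMap.smul_apply,
    LinearMap.comp_apply, taylor_X_pow, jet_X_pow, smul_eq_mul]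
  rw [iteratedDeriv_fun_mul hexp (hg.of_le (mod_cast le_top)), add_comm X, add_pow, map_sum,
    Finset.mul_sum]
  refine Finset.sum_congr rfl fun i _ ↦ ?_
  have hterm : C a ^ i * X ^ (r - i) * (r.choose i : ℝ[X]) =
      (a ^ i * r.choose i) • X ^ (r - i) := by
    rw [smul_eq_C_mul, C_mul, C_pow, C_eq_natCast]
    ring
  rw [hterm, map_smul, jet_X_pow, iteratedDeriv_exp_const_mul, smul_eq_mul]
  ring

lemma wronskianDet_append (f : Fin l → 𝕜 → 𝕜) (g : Fin k → 𝕜 → 𝕜) (x : 𝕜) :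
    wronskianDet (Fin.append f g) x = (Matrix.of fun r c : Fin l ⊕ Fin k ↦
      Sum.elim (fun c ↦ jet (f c) x) (fun c ↦ jet (g c) x) c (X ^ (finSumFinEquiv r : ℕ))).det := by
  rw [wronskianDet, ← Matrix.det_submatrix_equiv_self finSumFinEquiv]
  congr 1
  ext r c
  rcases c with c | c <;> simp [jet_X_pow]

theorem tendsto_wronskianDet_append_exp_mul {p : ℝ → Fin l → ℝ → ℝ} {p₀ : Fin l → ℝ → ℝ}
    {q : ℝ → Fin k → ℝ → ℝ} {q₀ : Fin k → ℝ → ℝ} {x : ℝ}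
    (hq : ∀ a c, ContDiffAt ℝ ∞ (q a c) x)
    (hp_lim : ∀ c j, Tendsto (fun a ↦ iteratedDeriv j (p a c) x) (cobounded ℝ)
      (𝓝 (iteratedDeriv j (p₀ c) x)))
    (hq_lim : ∀ c j, Tendsto (fun a ↦ iteratedDeriv j (q a c) x) (cobounded ℝ)
      (𝓝 (iteratedDeriv j (q₀ c) x))) :
    Tendsto (fun a ↦ (a ^ (k * l))⁻¹ * (Real.exp (-k * (a * x)) *
        wronskianDet (Fin.append (p a) fun c y ↦ Real.exp (a * y) * q a c y) x))
      (cobounded ℝ) (𝓝 (wronskianDet p₀ x * wronskianDet q₀ x)) := by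
  have hlim := tendsto_det_apply_sumElim_taylor (fun c ↦ tendsto_jet (hp_lim c))
    (fun c ↦ tendsto_jet (hq_lim c))
  simp only [jet_X_pow] at hlim
  refine hlim.congr fun a ↦ ?_
  have hcols := Matrix.det_mul_row
    (Sum.elim (fun _ : Fin l ↦ (1 : ℝ)) (fun _ : Fin k ↦ Real.exp (-(a * x))))
    (Matrix.of fun r c : Fin l ⊕ Fin k ↦ Sum.elim (fun c ↦ jet (p a c) x)
      (fun c ↦ jet (fun y ↦ Real.exp (a * y) * q a c y) x) c (X ^ (finSumFinEquiv r : ℕ)))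
  simp only [Matrix.of_apply, Fintype.prod_sum_type, Sum.elim_inl, Sum.elim_inr,
    Finset.prod_const_one, Finset.prod_const, Finset.card_univ, Fintype.card_fin, one_mul,
    ← Real.exp_nat_mul] at hcols
  rw [wronskianDet_append, neg_mul, ← mul_neg, ← hcols]
  congr 3
  ext r c
  rcases c with c | c
  · simp
  · simp [jet_exp_mul (hq a c), ← mul_assoc, ← Real.exp_add]

end Wronskian

section PolynomialEval

variable {𝕜 : Type*} [NontriviallyNormedField 𝕜] {n : WithTop ℕ∞}

lemma contDiff_eval (P : 𝕜[X]) : ContDiff 𝕜 n fun y ↦ P.eval y := by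
  simpa only [coe_aeval_eq_eval] using P.contDiff_aeval (𝕜 := 𝕜) n

lemma contDiff_eval_neg (P : 𝕜[X]) : ContDiff 𝕜 n fun y ↦ P.eval (-y) :=
  (contDiff_eval P).comp contDiff_neg

end PolynomialEval

section Laguerre

/-- The polynomial `α⁻ⁿ L̂_n^{(α)}(α X)` as a function of `ε = α⁻¹`; it extends continuously
to `ε = 0`. -/
noncomputable def scaledLaguerre (ε : ℝ) (n : ℕ) : ℝ[X] :=
  ∑ j ∈ Finset.range (n + 1),
    C ((-1) ^ (n - j) * n.choose j * ∏ t ∈ Finset.Icc (j + 1) n, (1 + ε * t)) * X ^ j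

lemma laguerreM_eval_mul {α : ℝ} (hα : α ≠ 0) (n : ℕ) (y : ℝ) :
    (laguerreM α n).eval (α * y) = α ^ n * (scaledLaguerre α⁻¹ n).eval y := by
  simp only [laguerreM, scaledLaguerre, eval_finsetSum, eval_mul, eval_C, eval_pow, eval_X,
    Finset.mul_sum]
  refine Finset.sum_congr rfl fun j hj ↦ ?_
  have hprod : ∏ t ∈ Finset.Icc (j + 1) n, (α + t) =
      α ^ (n - j) * ∏ t ∈ Finset.Icc (j + 1) n, (1 + α⁻¹ * t) := by
    have hcard : n - j = (Finset.Icc (j + 1) n).card := by simp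
    rw [hcard, ← Finset.prod_const, ← Finset.prod_mul_distrib]
    exact Finset.prod_congr rfl fun t _ ↦ by field_simp
  rw [hprod, ← pow_sub_mul_pow α (Finset.mem_range_succ_iff.1 hj)]
  ring

lemma scaledLaguerre_zero (n : ℕ) : scaledLaguerre 0 n = (X - 1) ^ n := by
  rw [scaledLaguerre, sub_eq_add_neg, add_pow]
  refine Finset.sum_congr rfl fun j _ ↦ ?_
  simp only [zero_mul, add_zero, Finset.prod_const_one, mul_one, map_mul, map_pow, map_neg, map_one,
    map_natCast]
  ring

lemma continuous_iteratedDeriv_scaledLaguerre (n j : ℕ) (x : ℝ) :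
    Continuous fun ε ↦ iteratedDeriv j (fun y ↦ (scaledLaguerre ε n).eval y) x := by
  simp only [scaledLaguerre, eval_finsetSum, eval_mul, eval_C, eval_pow, eval_X]
  simp (disch := fun_prop) only [iteratedDeriv_fun_sum, iteratedDeriv_const_mul_field]
  fun_prop

lemma tendsto_iteratedDeriv_scaledLaguerre_inv (n j : ℕ) (x : ℝ) :
    Tendsto (fun α ↦ iteratedDeriv j (fun y ↦ (scaledLaguerre α⁻¹ n).eval y) x) (cobounded ℝ)
      (𝓝 (iteratedDeriv j (fun y ↦ (y + -1) ^ n) x)) := by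
  have hlim := ((continuous_iteratedDeriv_scaledLaguerre n j x).tendsto 0).comp
    tendsto_inv₀_cobounded
  simpa [scaledLaguerre_zero, ← sub_eq_add_neg, Function.comp_def] using hlim

lemma tendsto_iteratedDeriv_scaledLaguerre_inv_neg (n j : ℕ) (x : ℝ) :
    Tendsto (fun α ↦ iteratedDeriv j (fun y ↦ (scaledLaguerre α⁻¹ n).eval (-y)) x) (cobounded ℝ)
      (𝓝 (iteratedDeriv j (fun y ↦ (-1) ^ n * (y + 1) ^ n) x)) := by
  have hreflect (y : ℝ) : (-1) ^ n * (y + 1) ^ n = (-y + -1) ^ n := by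
    rw [← mul_pow]
    ring
  simp only [hreflect]
  rw [iteratedDeriv_comp_neg j (fun y : ℝ ↦ (y + -1) ^ n)]
  refine ((tendsto_iteratedDeriv_scaledLaguerre_inv n j (-x)).const_smul _).congr fun α ↦ ?_
  rw [iteratedDeriv_comp_neg j fun y ↦ (scaledLaguerre α⁻¹ n).eval y]

variable {l k : ℕ}

/-- The family `omegaFun` for arbitrary degree vectors, which need not come from partitions. -/
noncomputable def laguerreFamily (n : Fin l → ℕ) (m : Fin k → ℕ) (α : ℝ) :
    Fin (l + k) → ℝ → ℝ :=
  Fin.append (fun c y ↦ (laguerreM α (n c)).eval y)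
    fun c y ↦ Real.exp y * (laguerreM α (m c)).eval (-y)

lemma contDiff_laguerreFamily {d : WithTop ℕ∞} (n : Fin l → ℕ) (m : Fin k → ℕ) (α : ℝ)
    (c : Fin (l + k)) : ContDiff ℝ d (laguerreFamily n m α c) := by
  refine Fin.addCases (fun c ↦ ?_) (fun c ↦ ?_) c
  · simpa [laguerreFamily] using contDiff_eval (laguerreM α (n c))
  · simpa [laguerreFamily] using Real.contDiff_exp.mul (contDiff_eval_neg (laguerreM α (m c)))

lemma laguerreFamily_mul {α : ℝ} (hα : α ≠ 0) (n : Fin l → ℕ) (m : Fin k → ℕ) (c : Fin (l + k))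
    (y : ℝ) : laguerreFamily n m α c (α * y) = α ^ Fin.append n m c *
      Fin.append (fun c y ↦ (scaledLaguerre α⁻¹ (n c)).eval y)
        (fun c y ↦ Real.exp (α * y) * (scaledLaguerre α⁻¹ (m c)).eval (-y)) c y := by
  refine Fin.addCases (fun c ↦ ?_) (fun c ↦ ?_) c
  · simp [laguerreFamily, laguerreM_eval_mul hα]
  · simp only [laguerreFamily, Fin.append_right, ← mul_neg, laguerreM_eval_mul hα]
    ring

lemma wronskianDet_laguerreFamily_div_pow {α : ℝ} (hα : α ≠ 0) {n : Fin l → ℕ} {m : Fin k → ℕ}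
    {N M : ℕ} (hN : ∑ c, n c = N + ∑ r : Fin l, (r : ℕ))
    (hM : ∑ c, m c = M + ∑ r : Fin k, (r : ℕ)) (x : ℝ) :
    wronskianDet (laguerreFamily n m α) (α * x) / α ^ (N + M) = (α ^ (k * l))⁻¹ *
      wronskianDet (Fin.append (fun c y ↦ (scaledLaguerre α⁻¹ (n c)).eval y)
        fun c y ↦ Real.exp (α * y) * (scaledLaguerre α⁻¹ (m c)).eval (-y)) x := by
  have hscale := wronskianDet_comp_const_mul (contDiff_laguerreFamily n m α) α x
  simp only [laguerreFamily_mul hα, wronskianDet_const_mul, Finset.prod_pow_eq_pow_sum] at hscale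
  have hrows : ∑ r : Fin (l + k), (r : ℕ) =
      ∑ r : Fin l, (r : ℕ) + ∑ r : Fin k, (r : ℕ) + k * l := by
    simp only [Fin.sum_univ_add, Fin.val_castAdd, Fin.val_natAdd, Finset.sum_add_distrib,
      Finset.sum_const, Finset.card_univ, Fintype.card_fin, smul_eq_mul]
    ring
  have hcols : ∑ c, Fin.append n m c =
      N + M + (∑ r : Fin l, (r : ℕ) + ∑ r : Fin k, (r : ℕ)) := by
    simp only [Fin.sum_univ_add, Fin.append_left, Fin.append_right, hN, hM]
    ring
  rw [hrows, hcols, pow_add _ (N + M), pow_add _ _ (k * l)] at hscale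
  have hpow := pow_ne_zero (∑ r : Fin l, (r : ℕ) + ∑ r : Fin k, (r : ℕ)) hα
  rw [div_eq_inv_mul, inv_mul_eq_iff_eq_mul₀ (pow_ne_zero _ hα), mul_left_comm,
    eq_inv_mul_iff_mul_eq₀ (pow_ne_zero _ hα)]
  apply mul_left_cancel₀ hpow
  linear_combination -hscale

theorem tendsto_wronskianDet_laguerreFamily {n : Fin l → ℕ} {m : Fin k → ℕ} {N M : ℕ}
    (hN : ∑ c, n c = N + ∑ r : Fin l, (r : ℕ)) (hM : ∑ c, m c = M + ∑ r : Fin k, (r : ℕ)) (x : ℝ) :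
    Tendsto (fun α ↦ Real.exp (-k * (α * x)) *
        wronskianDet (laguerreFamily n m α) (α * x) / α ^ (N + M)) (cobounded ℝ)
      (𝓝 ((Matrix.vandermonde fun c ↦ (n c : ℝ)).det * (x - 1) ^ N *
        ((-1) ^ (∑ c, m c) * ((Matrix.vandermonde fun c ↦ (m c : ℝ)).det * (x + 1) ^ M)))) := by
  have hlim := tendsto_wronskianDet_append_exp_mul
    (fun α c ↦ (contDiff_eval_neg (scaledLaguerre α⁻¹ (m c))).contDiffAt)
    (fun c j ↦ tendsto_iteratedDeriv_scaledLaguerre_inv (n c) j x)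
    (fun c j ↦ tendsto_iteratedDeriv_scaledLaguerre_inv_neg (m c) j x)
  rw [wronskianDet_const_mul, wronskianDet_add_pow n hN, wronskianDet_add_pow m hM,
    Finset.prod_pow_eq_pow_sum, ← sub_eq_add_neg] at hlim
  refine hlim.congr' ?_
  filter_upwards [eventually_ne_cobounded 0] with α hα
  rw [mul_div_assoc, wronskianDet_laguerreFamily_div_pow hα hN hM, mul_left_comm]

end Laguerre

section Partition

lemma sum_degVec (μ : List ℕ) : ∑ i, degVec μ i = μ.sum + ∑ r : Fin μ.length, (r : ℕ) := by
  have hrev : ∑ i : Fin μ.length, (μ.length - 1 - i) = ∑ r : Fin μ.length, (r : ℕ) := by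
    rw [Fin.sum_univ_eq_sum_range fun i ↦ μ.length - 1 - i, Finset.sum_range_reflect fun r ↦ r,
      Fin.sum_univ_eq_sum_range fun r ↦ r]
  simp [degVec, Finset.sum_add_distrib, hrev]

lemma vanderR_eq_det_vandermonde (μ : List ℕ) :
    vanderR μ = (Matrix.vandermonde fun i ↦ (degVec μ i : ℝ)).det := by
  simp only [vanderR, Matrix.det_vandermonde, Fin.val_fin_lt, ← Finset.prod_filter,
    Finset.filter_lt_eq_Ioi]

lemma vanderR_ne_zero {μ : List ℕ} (hμ : Function.Injective (degVec μ)) : vanderR μ ≠ 0 := by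
  rw [vanderR_eq_det_vandermonde, Matrix.det_vandermonde_ne_zero_iff]
  exact Nat.cast_injective.comp hμ

lemma strictAnti_degVec {μ : List ℕ} (hμ : μ.Pairwise (· ≥ ·)) : StrictAnti (degVec μ) := by
  intro i j hij
  have hle : μ.get j ≤ μ.get i := List.pairwise_iff_get.1 hμ i j hij
  unfold degVec
  omega

lemma omegaFun_eq_laguerreFamily (μ ν : List ℕ) (α : ℝ) :
    omegaFun μ ν α = laguerreFamily (degVec μ) (degVec ν) α := by
  funext c
  refine Fin.addCases (fun c ↦ ?_) (fun c ↦ ?_) c <;> simp [omegaFun, laguerreFamily]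

lemma omegaHat_eq_wronskianDet (μ ν : List ℕ) (α x : ℝ) :
    OmegaHat μ ν α x = (-1) ^ (∑ j, degVec ν j) / (vanderR μ * vanderR ν) *
      (Real.exp (-ν.length * x) *
        wronskianDet (laguerreFamily (degVec μ) (degVec ν) α) x) := by
  rw [OmegaHat, omegaFun_eq_laguerreFamily, mul_assoc, wronskianDet]

end Partition

theorem omegaHat_asymptotics_general (μ ν : List ℕ) (hμ : Function.Injective (degVec μ))
    (hν : Function.Injective (degVec ν)) (x : ℝ) :
    Tendsto (fun α : ℝ ↦ OmegaHat μ ν α (α * x) / α ^ (μ.sum + ν.sum)) (cobounded ℝ)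
      (𝓝 ((x - 1) ^ μ.sum * (x + 1) ^ ν.sum)) := by
  have hlim := (tendsto_wronskianDet_laguerreFamily (sum_degVec μ) (sum_degVec ν) x).const_mul
    ((-1) ^ (∑ j, degVec ν j) / (vanderR μ * vanderR ν))
  simp only [← vanderR_eq_det_vandermonde] at hlim
  have hsign : ((-1 : ℝ) ^ (∑ j, degVec ν j)) ^ 2 = 1 := by
    rw [← pow_mul, mul_comm, pow_mul, neg_one_sq, one_pow]
  have hvalue : (-1) ^ (∑ j, degVec ν j) / (vanderR μ * vanderR ν) *
      (vanderR μ * (x - 1) ^ μ.sum *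
        ((-1) ^ (∑ j, degVec ν j) * (vanderR ν * (x + 1) ^ ν.sum))) =
      (x - 1) ^ μ.sum * (x + 1) ^ ν.sum := by
    field_simp [vanderR_ne_zero hμ, vanderR_ne_zero hν]
    rw [hsign, one_mul]
  rw [hvalue] at hlim
  exact hlim.congr fun α ↦ by rw [omegaHat_eq_wronskianDet, mul_div_assoc _ (_ * _)]

/-- Asymptotic behaviour of the Wronskian Laguerre polynomial:
`Ω̂_α(αx)/α^{|μ|+|ν|} → (x−1)^{|μ|} (x+1)^{|ν|}` as `α → +∞` and as `α → −∞`. -/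
theorem omegaHat_asymptotics (μ ν : List ℕ)
    (hμ : IsPartition μ) (hν : IsPartition ν) (x : ℝ) :
    Filter.Tendsto (fun α : ℝ => OmegaHat μ ν α (α * x) / α ^ (μ.sum + ν.sum))
      Filter.atTop (nhds ((x - 1) ^ μ.sum * (x + 1) ^ ν.sum)) ∧
    Filter.Tendsto (fun α : ℝ => OmegaHat μ ν α (α * x) / α ^ (μ.sum + ν.sum))
      Filter.atBot (nhds ((x - 1) ^ μ.sum * (x + 1) ^ ν.sum)) := by
  have hlim := omegaHat_asymptotics_general μ ν (strictAnti_degVec hμ.1).injective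
    (strictAnti_degVec hν.1).injective x
  exact ⟨hlim.mono_left IsOrderBornology.atTop_le_cobounded,
    hlim.mono_left IsOrderBornology.atBot_le_cobounded⟩
end

section
/- Let λ be any partition. Then F_λ · c(λ) = C(|λ|, 2) · (F_{λ/(2)} − F_{λ/(1,1)}), where F_λ is the number of standard Young tableaux of shape λ, F_{λ/(2)} and F_{λ/(1,1)} are the numbers of saturated chains in Young's lattice from the partition (2), respectively (1,1), up to λ (each equal to 0 if the corresponding partition is not contained in λ), and c(λ) is the content sum of λ. -/
/-!
Encode a partition `λ` with at most `k` parts by the exponents `aᵢ = λᵢ - i`, and let an alternating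
Laurent polynomial in `x₀, …, x_{k-1}` record the number of chains from a fixed partition to `λ` as
its coefficient at `a`. Extending chains by one box is then multiplication `D` by `p₁ = ∑ xᵢ`:
lowering the exponent of a row without removable box produces two equal exponents, or an exponent
below `1 - k`, where all coefficients vanish. In particular `F_λ` is the coefficient of
`D ^ |λ| V` at `λ`, where `V` is the Vandermonde determinant.

Multiplying the coefficient at `λ` by `2 c(λ)` is an operator `C` which is quadratic in the
exponents, so its double commutator with `D` is multiplication by `2 p₂`, which commutes with `D`.
Hence, with `n = |λ|`,
`C D ^ n V = D ^ n C V + n D ^ (n - 1) [C, D] V + C(n, 2) D ^ (n - 2) (2 p₂ V)`.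
The first two terms vanish since `∅` and `(1)` have content sum `0`, and `p₂ V` has coefficient
`1` at `(2)` and `-1` at `(1, 1)`.
-/

section CommutatorExpansion

variable {R : Type*} [Ring R]

lemma choose_nsmul_pow_sub_mul (x : R) (n j : ℕ) :
    n.choose j • (x ^ (n - j) * x) = n.choose j • x ^ (n + 1 - j) := by
  rcases lt_or_ge n j with h | h
  · simp [Nat.choose_eq_zero_of_lt h]
  · rw [← pow_succ, Nat.sub_add_comm h]

lemma mul_pow_of_commute_lie_lie {c d : R} (h : Commute ⁅⁅c, d⁆, d⁆ d) (n : ℕ) :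
    c * d ^ n = d ^ n * c + n • (d ^ (n - 1) * ⁅c, d⁆)
      + n.choose 2 • (d ^ (n - 2) * ⁅⁅c, d⁆, d⁆) := by
  have hc : c * d = d * c + ⁅c, d⁆ := by rw [Ring.lie_def]; abel
  have hcd : ⁅c, d⁆ * d = d * ⁅c, d⁆ + ⁅⁅c, d⁆, d⁆ := by rw [Ring.lie_def ⁅c, d⁆ d]; abel
  induction n with
  | zero => simp
  | succ n ih =>
    have hn : n • (d ^ (n - 1) * d) = n • d ^ n := by
      simpa using choose_nsmul_pow_sub_mul d n 1
    calc c * d ^ (n + 1)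
        = d ^ n * (c * d) + n • (d ^ (n - 1) * (⁅c, d⁆ * d))
            + n.choose 2 • (d ^ (n - 2) * (⁅⁅c, d⁆, d⁆ * d)) := by
          rw [pow_succ, ← mul_assoc, ih]
          simp only [add_mul, smul_mul_assoc, mul_assoc]
      _ = d ^ n * d * c + d ^ n * ⁅c, d⁆
            + (n • (d ^ (n - 1) * d) * ⁅c, d⁆ + n • (d ^ (n - 1) * ⁅⁅c, d⁆, d⁆))
            + n.choose 2 • (d ^ (n - 2) * d) * ⁅⁅c, d⁆, d⁆ := by
          rw [hc, hcd, h.eq]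
          simp only [mul_add, smul_add, smul_mul_assoc, mul_assoc]
      _ = d ^ (n + 1) * c + (n + 1) • (d ^ n * ⁅c, d⁆)
            + (n + 1).choose 2 • (d ^ (n - 1) * ⁅⁅c, d⁆, d⁆) := by
          rw [hn, choose_nsmul_pow_sub_mul, ← pow_succ, Nat.choose_succ_succ' n 1,
            Nat.choose_one_right, Nat.add_sub_add_right n 1 1, add_smul, add_smul, one_smul,
            smul_mul_assoc, smul_mul_assoc]
          abel

end CommutatorExpansion

section Operators

variable {k : ℕ}

/-- The operator `f ↦ (a ↦ ∑ i, f (a - r eᵢ))`. If `f` is read as the formal Laurent series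
`∑ a, f a • x ^ a`, this is multiplication by the power sum `p_r = ∑ i, xᵢ ^ r`. -/
def powerSumOp (k r : ℕ) : Module.End ℤ ((Fin k → ℤ) → ℤ) :=
  ∑ i, LinearMap.funLeft ℤ ℤ (· - Pi.single i (r : ℤ))

/-- Twice the content sum, written in the coordinates `aᵢ = λᵢ - i` of `shiftedParts`. -/
def twiceContent (a : Fin k → ℤ) : ℤ := ∑ i : Fin k, (a i ^ 2 - a i - ((i : ℤ) ^ 2 + i))

/-- Multiplication by `twiceContent`. -/
def contentOp (k : ℕ) : Module.End ℤ ((Fin k → ℤ) → ℤ) := LinearMap.mulLeft ℤ twiceContent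

lemma powerSumOp_apply (r : ℕ) (f : (Fin k → ℤ) → ℤ) (a : Fin k → ℤ) :
    powerSumOp k r f a = ∑ i, f (a - Pi.single i (r : ℤ)) := by
  simp [powerSumOp]

lemma contentOp_apply (f : (Fin k → ℤ) → ℤ) (a : Fin k → ℤ) :
    contentOp k f a = twiceContent a * f a := rfl

lemma commute_powerSumOp (r s : ℕ) : Commute (powerSumOp k r) (powerSumOp k s) := by
  ext f a
  simp only [Module.End.mul_apply, powerSumOp_apply]
  rw [Finset.sum_comm]
  simp only [sub_right_comm]

lemma twiceContent_sub_twiceContent_sub_single (a : Fin k → ℤ) (i : Fin k) :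
    twiceContent a - twiceContent (a - Pi.single i 1) = 2 * a i - 2 := by
  unfold twiceContent
  rw [← Finset.sum_sub_distrib, Fintype.sum_eq_single i]
  · simp only [Pi.sub_apply, Pi.single_eq_same]
    ring
  · intro j hj
    simp [hj]

lemma lie_contentOp_powerSumOp_one_apply (f : (Fin k → ℤ) → ℤ) (a : Fin k → ℤ) :
    ⁅contentOp k, powerSumOp k 1⁆ f a = ∑ i, (2 * a i - 2) * f (a - Pi.single i 1) := by
  simp only [Ring.lie_def, LinearMap.sub_apply, Module.End.mul_apply, Pi.sub_apply,
    contentOp_apply, powerSumOp_apply, Nat.cast_one, Finset.mul_sum, ← Finset.sum_sub_distrib,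
    ← sub_mul, twiceContent_sub_twiceContent_sub_single]

lemma lie_lie_contentOp_powerSumOp_one :
    ⁅⁅contentOp k, powerSumOp k 1⁆, powerSumOp k 1⁆ = 2 • powerSumOp k 2 := by
  ext f a
  have hcoeff (i j : Fin k) :
      (2 * a i - 2) - (2 * (a - Pi.single j 1 : Fin k → ℤ) i - 2) = if i = j then 2 else 0 := by
    simp only [Pi.sub_apply, Pi.single_apply]
    split_ifs <;> ring
  rw [Ring.lie_def, LinearMap.sub_apply, Module.End.mul_apply, Module.End.mul_apply, Pi.sub_apply,
    lie_contentOp_powerSumOp_one_apply, powerSumOp_apply]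
  simp only [powerSumOp_apply, lie_contentOp_powerSumOp_one_apply, Nat.cast_one, Finset.mul_sum,
    LinearMap.smul_apply, Pi.smul_apply]
  rw [Finset.sum_comm, ← Finset.sum_sub_distrib, Finset.smul_sum]
  refine Finset.sum_congr rfl fun j _ => ?_
  simp only [sub_right_comm a (Pi.single j 1), ← Finset.sum_sub_distrib, ← sub_mul, hcoeff]
  simp [sub_sub, ← Pi.single_add]

lemma contentOp_mul_powerSumOp_one_pow (n : ℕ) :
    contentOp k * powerSumOp k 1 ^ n =
      powerSumOp k 1 ^ n * contentOp k
        + n • (powerSumOp k 1 ^ (n - 1) * ⁅contentOp k, powerSumOp k 1⁆)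
        + n.choose 2 • (powerSumOp k 1 ^ (n - 2) * (2 • powerSumOp k 2)) := by
  rw [← lie_lie_contentOp_powerSumOp_one]
  refine mul_pow_of_commute_lie_lie ?_ n
  rw [lie_lie_contentOp_powerSumOp_one]
  exact (commute_powerSumOp 2 1).smul_left 2

lemma twiceContent_mul_powerSumOp_one_pow_apply (n : ℕ) (f : (Fin k → ℤ) → ℤ) (a : Fin k → ℤ) :
    twiceContent a * (powerSumOp k 1 ^ n) f a =
      (powerSumOp k 1 ^ n) (contentOp k f) a
        + n * (powerSumOp k 1 ^ (n - 1)) (⁅contentOp k, powerSumOp k 1⁆ f) a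
        + 2 * (n.choose 2 * (powerSumOp k 1 ^ (n - 2)) (powerSumOp k 2 f) a) := by
  have h := congrFun (LinearMap.congr_fun (contentOp_mul_powerSumOp_one_pow (k := k) n) f) a
  simp only [LinearMap.add_apply, LinearMap.smul_apply, Module.End.mul_apply, Pi.add_apply,
    Pi.smul_apply, map_nsmul, contentOp_apply] at h
  simpa only [nsmul_eq_mul, Nat.cast_ofNat, mul_left_comm] using h

end Operators

section SkewFunctions

variable {k : ℕ}

/-- The functions on `ℤᵏ` that are alternating under permutation of the coordinates and vanish
unless every coordinate is at least `1 - k`, the smallest value taken by a coordinate of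
`shiftedParts k l`. -/
def skewFunctions (k : ℕ) : Submodule ℤ ((Fin k → ℤ) → ℤ) where
  carrier := {f | (∀ (σ : Equiv.Perm (Fin k)) a, f (a ∘ σ) = σ.sign * f a) ∧
    ∀ a j, a j < 1 - (k : ℤ) → f a = 0}
  add_mem' hf hg := ⟨fun σ a => by simp [hf.1, hg.1, mul_add],
    fun a j h => by simp [hf.2 a j h, hg.2 a j h]⟩
  zero_mem' := by simp
  smul_mem' c f hf := ⟨fun σ a => by simp [hf.1, mul_left_comm],
    fun a j h => by simp [hf.2 a j h]⟩

lemma eq_zero_of_mem_skewFunctions {f : (Fin k → ℤ) → ℤ} (hf : f ∈ skewFunctions k)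
    {a : Fin k → ℤ} {i j : Fin k} (hij : i ≠ j) (h : a i = a j) : f a = 0 := by
  have hswap : a ∘ Equiv.swap i j = a := by
    rw [Equiv.comp_swap_eq_update, h, Function.update_eq_self, ← h, Function.update_eq_self]
  have := hf.1 (Equiv.swap i j) a
  simp only [hswap, Equiv.Perm.sign_swap hij, Units.val_neg, Units.val_one, neg_one_mul] at this
  exact self_eq_neg.1 this

lemma powerSumOp_mem_skewFunctions (r : ℕ) {f : (Fin k → ℤ) → ℤ} (hf : f ∈ skewFunctions k) :
    powerSumOp k r f ∈ skewFunctions k := by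
  refine ⟨fun σ a => ?_, fun a j h => ?_⟩
  · have hcomp (i : Fin k) : (a - Pi.single (σ i) (r : ℤ)) ∘ σ = a ∘ σ - Pi.single i (r : ℤ) := by
      ext j
      simp [Pi.single_apply]
    rw [powerSumOp_apply, powerSumOp_apply, Finset.mul_sum]
    refine Eq.trans ?_ (Equiv.sum_comp σ _)
    simp only [← hf.1 σ, hcomp]
  · rw [powerSumOp_apply]
    refine Finset.sum_eq_zero fun i _ => hf.2 _ j ?_
    have : 0 ≤ (Pi.single i (r : ℤ) : Fin k → ℤ) j := by
      rw [Pi.single_apply]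
      split_ifs <;> simp
    rw [Pi.sub_apply]
    linarith

lemma twiceContent_comp_perm (a : Fin k → ℤ) (σ : Equiv.Perm (Fin k)) :
    twiceContent (a ∘ σ) = twiceContent a := by
  unfold twiceContent
  rw [Finset.sum_sub_distrib, Finset.sum_sub_distrib (fun i => a i ^ 2 - a i)]
  exact congrArg (· - _) (Equiv.sum_comp σ fun i => a i ^ 2 - a i)

lemma contentOp_mem_skewFunctions {f : (Fin k → ℤ) → ℤ} (hf : f ∈ skewFunctions k) :
    contentOp k f ∈ skewFunctions k := by
  refine ⟨fun σ a => ?_, fun a j h => ?_⟩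
  · rw [contentOp_apply, contentOp_apply, hf.1, twiceContent_comp_perm, mul_left_comm]
  · rw [contentOp_apply, hf.2 a j h, mul_zero]

lemma lie_contentOp_powerSumOp_mem_skewFunctions (r : ℕ) {f : (Fin k → ℤ) → ℤ}
    (hf : f ∈ skewFunctions k) : ⁅contentOp k, powerSumOp k r⁆ f ∈ skewFunctions k :=
  sub_mem (contentOp_mem_skewFunctions (powerSumOp_mem_skewFunctions r hf))
    (powerSumOp_mem_skewFunctions r (contentOp_mem_skewFunctions hf))

/-- The coefficients of the Vandermonde determinant `det (xᵢ ^ (-j))`: the alternating function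
supported on the permutations of `(0, -1, …, 1 - k)`. It starts the count of chains from `∅`. -/
def vandermondeCoeff (k : ℕ) (a : Fin k → ℤ) : ℤ :=
  Matrix.det (Matrix.of fun i j : Fin k => if a i = -(j : ℤ) then (1 : ℤ) else 0)

lemma vandermondeCoeff_mem_skewFunctions : vandermondeCoeff k ∈ skewFunctions k := by
  refine ⟨fun σ a => Matrix.det_permute σ (Matrix.of fun i j => if a i = -(j : ℤ) then 1 else 0),
    fun a j h => ?_⟩
  refine Matrix.det_eq_zero_of_row_eq_zero j fun x => ?_
  simp only [Matrix.of_apply, ite_eq_right_iff]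
  omega

lemma vandermondeCoeff_eq_zero_of_pos {a : Fin k → ℤ} {i : Fin k} (h : 0 < a i) :
    vandermondeCoeff k a = 0 := by
  refine Matrix.det_eq_zero_of_row_eq_zero i fun x => ?_
  simp only [Matrix.of_apply, ite_eq_right_iff]
  omega

lemma vandermondeCoeff_neg_val : vandermondeCoeff k (fun i => -(i : ℤ)) = 1 := by
  unfold vandermondeCoeff
  convert Matrix.det_one (n := Fin k) (R := ℤ)
  ext i j
  simp [Matrix.one_apply, Fin.ext_iff]

end SkewFunctions

section Chains

variable {α : Type*} {r : α → α → Prop}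

/-- Chains `a = c₀, c₁, …, cₙ = b` of `n` consecutive `r`-steps. For `r = YoungStep` these are the
saturated chains counted by `numPaths`. -/
def StepChain (r : α → α → Prop) (n : ℕ) (a b : α) : Type _ :=
  {c : Fin (n + 1) → α // c 0 = a ∧ c (Fin.last n) = b ∧ ∀ i : Fin n, r (c i.castSucc) (c i.succ)}

namespace StepChain

lemma sigma_ext {n : ℕ} {a b : α} {p q : Σ m : {m // r m b}, StepChain r n a m}
    (h : p.2.1 = q.2.1) : p = q := by
  obtain ⟨⟨m, hm⟩, c, hc⟩ := p
  obtain ⟨⟨m', hm'⟩, c', hc'⟩ := q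
  obtain rfl : c = c' := h
  obtain rfl : m = m' := hc.2.1.symm.trans hc'.2.1
  rfl

/-- Splitting off the last step of a chain. -/
def succEquiv (r : α → α → Prop) (n : ℕ) (a b : α) :
    StepChain r (n + 1) a b ≃ Σ m : {m // r m b}, StepChain r n a m where
  toFun c := ⟨⟨c.1 (Fin.last n).castSucc, by simpa [c.2.2.1] using c.2.2.2 (Fin.last n)⟩,
    Fin.init c.1, c.2.1, rfl, fun i => c.2.2.2 i.castSucc⟩
  invFun p := ⟨Fin.snoc (α := fun _ => α) p.2.1 b, by
    obtain ⟨⟨m, hm⟩, c, hc₀, hcm, hc⟩ := p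
    refine ⟨by simpa using hc₀, by simp, Fin.lastCases ?_ fun i => ?_⟩
    · simpa [hcm] using hm
    · simpa [Fin.succ_castSucc, -Fin.castSucc_succ] using hc i⟩
  left_inv c := Subtype.ext <| by
    obtain ⟨c, -, rfl, -⟩ := c
    exact Fin.snoc_init_self c
  right_inv p := sigma_ext (Fin.init_snoc (α := fun _ => α) b p.2.1)

instance subsingleton_zero (a b : α) : Subsingleton (StepChain r 0 a b) :=
  ⟨fun c c' => Subtype.ext <| funext fun i => by rw [Fin.fin_one_eq_zero i, c.2.1, c'.2.1]⟩

instance finite [∀ b, Finite {m // r m b}] (n : ℕ) (a b : α) : Finite (StepChain r n a b) := by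
  induction n generalizing b with
  | zero => infer_instance
  | succ n ih => exact Finite.of_equiv _ (succEquiv r n a b).symm

lemma card_zero [DecidableEq α] (a b : α) :
    Nat.card (StepChain r 0 a b) = if a = b then 1 else 0 := by
  split_ifs with h
  · exact Nat.card_eq_one_iff_unique.2 ⟨inferInstance, ⟨fun _ => a, rfl, h, fun i => i.elim0⟩⟩
  · have : IsEmpty (StepChain r 0 a b) := ⟨fun c => h (c.2.1.symm.trans c.2.2.1)⟩
    exact Nat.card_of_isEmpty

lemma card_succ [∀ b, Finite {m // r m b}] (n : ℕ) (a b : α) [Fintype {m // r m b}] :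
    Nat.card (StepChain r (n + 1) a b) =
      ∑ m : {m // r m b}, Nat.card (StepChain r n a m) := by
  rw [Nat.card_congr (succEquiv r n a b), Nat.card_sigma]

end StepChain

end Chains

section Parts

lemma partAt_of_length_le {l : List ℕ} {i : ℕ} (h : l.length ≤ i) : partAt l i = 0 :=
  List.getD_eq_default l 0 h

lemma partAt_eq_getElem {l : List ℕ} {i : ℕ} (h : i < l.length) : partAt l i = l[i] :=
  List.getD_eq_getElem l 0 h

lemma sum_range_partAt {l : List ℕ} {k : ℕ} (h : l.length ≤ k) :
    ∑ i ∈ Finset.range k, partAt l i = l.sum := by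
  rw [← Finset.sum_subset (Finset.range_mono h)
      fun i _ hi => partAt_of_length_le (by simpa using hi), Finset.sum_range,
    ← List.sum_ofFn]
  simp [partAt_eq_getElem]

lemma pairwise_ge_iff_antitone_partAt {l : List ℕ} :
    l.Pairwise (· ≥ ·) ↔ Antitone (partAt l) := by
  rw [List.pairwise_iff_getElem]
  refine ⟨fun h i j hij => ?_, fun h i j hi hj hij => ?_⟩
  · rcases lt_or_ge j l.length with hj | hj
    · rcases hij.eq_or_lt with rfl | hij
      · rfl
      · rw [partAt_eq_getElem hj, partAt_eq_getElem (hij.trans hj)]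
        exact h i j _ hj hij
    · simp [partAt_of_length_le hj]
  · rw [← partAt_eq_getElem hi, ← partAt_eq_getElem hj]
    exact h hij.le

lemma partAt_filter_pos {l : List ℕ} (hl : l.Pairwise (· ≥ ·)) :
    partAt (l.filter (0 < ·)) = partAt l := by
  induction l with
  | nil => rfl
  | cons x l ih =>
    rcases Nat.eq_zero_or_pos x with rfl | hx
    · have hzero : ∀ y ∈ l, y = 0 := fun y hy => Nat.le_zero.1 (List.rel_of_pairwise_cons hl hy)
      ext j
      have hfilter : (0 :: l).filter (0 < ·) = [] := by simpa using hzero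
      have hle : partAt (0 :: l) j ≤ partAt (0 :: l) 0 :=
        pairwise_ge_iff_antitone_partAt.1 hl (Nat.zero_le j)
      rw [hfilter]
      simpa [partAt, eq_comm] using hle
    · ext j
      rw [List.filter_cons_of_pos (by simpa using hx)]
      cases j with
      | zero => rfl
      | succ j => exact congrFun (ih hl.of_cons) j

lemma partAt_set {l : List ℕ} {i : ℕ} (hi : i < l.length) (x : ℕ) :
    partAt (l.set i x) = Function.update (partAt l) i x := by
  ext j
  rcases eq_or_ne j i with rfl | hj
  · simp [partAt, hi]
  · simp [partAt, hj, hj.symm, List.getElem?_set_ne]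

namespace IsPartition

variable {l m : List ℕ}

lemma antitone_partAt (hl : IsPartition l) : Antitone (partAt l) :=
  pairwise_ge_iff_antitone_partAt.1 hl.1

lemma partAt_pos_iff (hl : IsPartition l) {i : ℕ} : 0 < partAt l i ↔ i < l.length := by
  refine ⟨fun h => lt_of_not_ge fun hi => h.ne' (partAt_of_length_le hi), fun h => ?_⟩
  rw [partAt_eq_getElem h]
  exact hl.2 _ (List.getElem_mem h)

lemma ext_partAt (hl : IsPartition l) (hm : IsPartition m) (h : partAt l = partAt m) : l = m := by
  refine List.ext_getElem (eq_of_forall_lt_iff fun i => ?_) fun i hil him => ?_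
  · rw [← hl.partAt_pos_iff, ← hm.partAt_pos_iff, h]
  · rw [← partAt_eq_getElem, ← partAt_eq_getElem, h]

lemma of_cons {x : ℕ} (hl : IsPartition (x :: l)) : IsPartition l :=
  ⟨hl.1.of_cons, fun y hy => hl.2 y (List.mem_cons_of_mem x hy)⟩

lemma and_sum_eq_zero_iff : IsPartition l ∧ l.sum = 0 ↔ l = [] := by
  refine ⟨fun ⟨hl, h⟩ => List.eq_nil_iff_forall_not_mem.2 fun x hx => ?_, ?_⟩
  · exact (hl.2 x hx).ne' (List.sum_eq_zero_iff.1 h x hx)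
  · rintro rfl
    simp [IsPartition]

lemma and_sum_eq_one_iff : IsPartition l ∧ l.sum = 1 ↔ l = [1] := by
  refine ⟨fun ⟨hl, h⟩ => ?_, by rintro rfl; simp [IsPartition]⟩
  obtain _ | ⟨x, l⟩ := l
  · simp at h
  · have hx : 0 < x := hl.2 x List.mem_cons_self
    rw [List.sum_cons] at h
    obtain rfl : l = [] := and_sum_eq_zero_iff.1 ⟨hl.of_cons, by omega⟩
    simpa using h

lemma and_sum_eq_two_iff : IsPartition l ∧ l.sum = 2 ↔ l = [2] ∨ l = [1, 1] := by
  refine ⟨fun ⟨hl, h⟩ => ?_, by rintro (rfl | rfl) <;> simp [IsPartition]⟩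
  obtain _ | ⟨x, l⟩ := l
  · simp at h
  · have hx : 0 < x := hl.2 x List.mem_cons_self
    rw [List.sum_cons] at h
    obtain rfl | rfl : x = 2 ∨ x = 1 := by omega
    · exact .inl (by rw [and_sum_eq_zero_iff.1 ⟨hl.of_cons, by omega⟩])
    · exact .inr (by rw [and_sum_eq_one_iff.1 ⟨hl.of_cons, by omega⟩])

end IsPartition

end Parts

section RemoveBox

variable {l m : List ℕ} {i : ℕ}

/-- Row `i` of `l`, counted from `0`, ends in a removable box. -/
abbrev IsRemovable (l : List ℕ) (i : ℕ) : Prop := partAt l (i + 1) < partAt l i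

/-- The partition left after removing the last box of row `i` of `l`; filtering discards the row
if it becomes empty. -/
def removeBox (l : List ℕ) (i : ℕ) : List ℕ := (l.set i (partAt l i - 1)).filter (0 < ·)

/-- The covering relation of Young's lattice, with both ends required to be partitions. -/
def YoungStep (m l : List ℕ) : Prop := IsPartition m ∧ IsPartition l ∧ Covers m l

lemma IsRemovable.lt_length (h : IsRemovable l i) : i < l.length :=
  lt_of_not_ge fun hi => (Nat.zero_le _).not_gt (h.trans_eq (partAt_of_length_le hi))

lemma length_removeBox_le (l : List ℕ) (i : ℕ) : (removeBox l i).length ≤ l.length :=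
  (List.length_filter_le _ _).trans_eq List.length_set

lemma pairwise_ge_set_of_isRemovable (hl : IsPartition l) (h : IsRemovable l i) :
    (l.set i (partAt l i - 1)).Pairwise (· ≥ ·) := by
  rw [pairwise_ge_iff_antitone_partAt, partAt_set h.lt_length]
  refine antitone_nat_of_succ_le fun j => ?_
  have hj : partAt l (j + 1) ≤ partAt l j := hl.antitone_partAt j.le_succ
  simp only [Function.update_apply]
  unfold IsRemovable at h
  split_ifs <;> subst_vars <;> omega

lemma IsPartition.removeBox (hl : IsPartition l) (h : IsRemovable l i) :
    IsPartition (removeBox l i) :=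
  ⟨(pairwise_ge_set_of_isRemovable hl h).filter _, fun x hx => by
    simpa using (List.mem_filter.1 hx).2⟩

lemma partAt_removeBox_add (hl : IsPartition l) (h : IsRemovable l i) (j : ℕ) :
    partAt (removeBox l i) j + (if j = i then 1 else 0) = partAt l j := by
  rw [removeBox, partAt_filter_pos (pairwise_ge_set_of_isRemovable hl h),
    partAt_set h.lt_length, Function.update_apply]
  split_ifs with hj
  · subst hj
    omega
  · rfl

lemma sum_removeBox_add_one (hl : IsPartition l) (h : IsRemovable l i) :
    (removeBox l i).sum + 1 = l.sum := by
  rw [← sum_range_partAt (length_removeBox_le l i), ← sum_range_partAt le_rfl]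
  simp [← partAt_removeBox_add hl h, Finset.sum_add_distrib, h.lt_length]

lemma youngStep_removeBox (hl : IsPartition l) (h : IsRemovable l i) :
    YoungStep (removeBox l i) l :=
  ⟨hl.removeBox h, hl, fun j => by simp [← partAt_removeBox_add hl h j],
    sum_removeBox_add_one hl h⟩

lemma Covers.exists_partAt_add_eq (h : Covers m l) :
    ∃ i, ∀ j, partAt m j + (if j = i then 1 else 0) = partAt l j := by
  obtain ⟨hle, hsum⟩ := h
  set k := max m.length l.length
  rw [← sum_range_partAt (le_max_left m.length l.length),
    ← sum_range_partAt (le_max_right m.length l.length)] at hsum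
  obtain ⟨i, hi, hlt⟩ := Finset.exists_lt_of_sum_lt (Nat.lt_of_succ_le hsum.le)
  refine ⟨i, fun j => ?_⟩
  have hle' (j : ℕ) : partAt m j + (if j = i then 1 else 0) ≤ partAt l j := by
    split_ifs with hj
    · exact hj ▸ hlt
    · exact hle j
  rcases lt_or_ge j k with hj | hj
  · refine (Finset.sum_eq_sum_iff_of_le fun j _ => hle' j).1 ?_ j (Finset.mem_range.2 hj)
    rw [Finset.sum_add_distrib, Finset.sum_ite_eq', if_pos hi]
    exact hsum
  · have hji : j ≠ i := ((Finset.mem_range.1 hi).trans_le hj).ne'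
    rw [if_neg hji, partAt_of_length_le (le_of_max_le_left hj),
      partAt_of_length_le (le_of_max_le_right hj)]

lemma YoungStep.exists_removeBox_eq (h : YoungStep m l) :
    ∃ i, IsRemovable l i ∧ removeBox l i = m := by
  obtain ⟨hm, hl, hcov⟩ := h
  obtain ⟨i, hi⟩ := hcov.exists_partAt_add_eq
  have hrem : IsRemovable l i := by
    have := hm.antitone_partAt i.le_succ
    rw [IsRemovable, ← hi i, ← hi (i + 1)]
    simpa [Nat.lt_succ_iff] using this
  refine ⟨i, hrem, (hl.removeBox hrem).ext_partAt hm (funext fun j => ?_)⟩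
  exact Nat.add_right_cancel ((partAt_removeBox_add hl hrem j).trans (hi j).symm)

lemma removeBox_injOn (hl : IsPartition l) : Set.InjOn (removeBox l) {i | IsRemovable l i} := by
  intro i hi j hj hij
  by_contra hne
  have hi' := partAt_removeBox_add hl hi i
  have hj' := partAt_removeBox_add hl hj i
  rw [if_pos rfl, hij] at hi'
  rw [if_neg hne] at hj'
  omega

/-- The elements covered by a partition `l` in Young's lattice correspond to the removable rows. -/
noncomputable def removableEquiv (hl : IsPartition l) {k : ℕ} (hk : l.length ≤ k) :
    {i : Fin k // IsRemovable l i} ≃ {m // YoungStep m l} :=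
  Equiv.ofBijective (fun i => ⟨removeBox l i, youngStep_removeBox hl i.2⟩)
    ⟨fun i j h => Subtype.ext <| Fin.ext <| removeBox_injOn hl i.2 j.2 <| congrArg Subtype.val h,
      fun ⟨_, hm⟩ => by
        obtain ⟨i, hi, rfl⟩ := hm.exists_removeBox_eq
        exact ⟨⟨⟨i, hi.lt_length.trans_le hk⟩, hi⟩, rfl⟩⟩

instance finite_youngStep (l : List ℕ) : Finite {m // YoungStep m l} := by
  by_cases hl : IsPartition l
  · exact Finite.of_equiv _ (removableEquiv hl le_rfl)
  · have : IsEmpty {m // YoungStep m l} := ⟨fun m => hl m.2.2.1⟩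
    infer_instance

end RemoveBox

section NumPaths

variable {a l : List ℕ}

lemma numPaths_eq_card {n : ℕ} (h : l.sum = a.sum + n) :
    numPaths a l = Nat.card (StepChain YoungStep n a l) := by
  obtain rfl : l.sum - a.sum = n := by omega
  rfl

lemma numPaths_of_sum_eq (h : l.sum = a.sum) : numPaths a l = if a = l then 1 else 0 := by
  rw [numPaths_eq_card (n := 0) h, StepChain.card_zero]

lemma numPaths_eq_sum_removeBox (hl : IsPartition l) {k : ℕ} (hk : l.length ≤ k)
    (h : a.sum < l.sum) :
    numPaths a l = ∑ i : Fin k, if IsRemovable l i then numPaths a (removeBox l i) else 0 := by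
  obtain ⟨n, hn : l.sum = a.sum + (n + 1)⟩ := Nat.exists_eq_add_of_lt h
  have := Fintype.ofFinite {m // YoungStep m l}
  rw [numPaths_eq_card hn, StepChain.card_succ, ← Finset.sum_filter,
    ← Fintype.sum_equiv (removableEquiv hl hk)
      (fun i => Nat.card (StepChain YoungStep n a (removeBox l i))) _ fun _ => rfl,
    ← Finset.sum_subtype (Finset.univ.filter fun i : Fin k => IsRemovable l i) (by simp)
      fun i => Nat.card (StepChain YoungStep n a (removeBox l i))]
  refine Finset.sum_congr rfl fun i hi => (numPaths_eq_card ?_).symm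
  have := sum_removeBox_add_one hl (Finset.mem_filter.1 hi).2
  omega

end NumPaths

section ShiftedParts

variable {k : ℕ} {l : List ℕ}

/-- The vector `(λᵢ - i)ᵢ`, strictly decreasing when `λ` is a partition; rows are counted from
`0`, so the empty partition has coordinates `(0, -1, …, 1 - k)`. -/
def shiftedParts (k : ℕ) (l : List ℕ) : Fin k → ℤ := fun i => (partAt l i : ℤ) - i

lemma shiftedParts_removeBox (hl : IsPartition l) {i : Fin k} (h : IsRemovable l i) :
    shiftedParts k (removeBox l i) = shiftedParts k l - Pi.single i 1 := by
  ext j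
  simp only [shiftedParts, ← partAt_removeBox_add hl h j, Pi.sub_apply, Pi.single_apply,
    Fin.ext_iff]
  push_cast
  ring

lemma two_mul_sum_Icc_sub (n : ℕ) (x : ℤ) :
    2 * ∑ j ∈ Finset.Icc 1 n, ((j : ℤ) - x) = n * (n + 1 - 2 * x) := by
  induction n with
  | zero => simp
  | succ n ih =>
    rw [Finset.sum_Icc_succ_top (by omega), mul_add, ih]
    push_cast
    ring

lemma twiceContent_shiftedParts (hk : l.length ≤ k) :
    twiceContent (shiftedParts k l) = 2 * contentSum l := by
  set g : ℕ → ℤ := fun i => partAt l i * (partAt l i - 1 - 2 * i) with hg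
  have htwice : twiceContent (shiftedParts k l) = ∑ i ∈ Finset.range k, g i := by
    rw [Finset.sum_range]
    refine Finset.sum_congr rfl fun i _ => ?_
    simp only [shiftedParts, hg]
    ring
  have hcontent : 2 * contentSum l = ∑ i ∈ Finset.range l.length, g i := by
    rw [Finset.sum_range, contentSum, Finset.mul_sum]
    refine Finset.sum_congr rfl fun i _ => ?_
    simp only [two_mul_sum_Icc_sub, hg, partAt_eq_getElem i.2, List.get_eq_getElem]
    ring
  rw [htwice, hcontent]
  refine (Finset.sum_subset (Finset.range_mono hk) fun i _ hi => ?_).symm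
  simp [hg, partAt_of_length_le (by simpa using hi : l.length ≤ i)]

-- Either two coordinates coincide or, in the last row, the coordinate drops below `1 - k`.
lemma apply_shiftedParts_sub_single_eq_zero {f : (Fin k → ℤ) → ℤ} (hf : f ∈ skewFunctions k)
    (hl : IsPartition l) (hk : l.length ≤ k) {i : Fin k} (hi : ¬IsRemovable l i) :
    f (shiftedParts k l - Pi.single i 1) = 0 := by
  have heq : partAt l (i + 1) = partAt l i :=
    le_antisymm (hl.antitone_partAt (Nat.le_succ _)) (not_lt.1 hi)
  rcases lt_or_ge (i.1 + 1) k with hik | hik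
  · have hne : (⟨i + 1, hik⟩ : Fin k) ≠ i := by simp [Fin.ext_iff]
    refine eq_zero_of_mem_skewFunctions hf hne.symm ?_
    simp only [Pi.sub_apply, shiftedParts, Pi.single_eq_same, Pi.single_eq_of_ne hne, heq]
    push_cast
    ring
  · refine hf.2 _ i ?_
    rw [partAt_of_length_le (hk.trans hik)] at heq
    simp only [Pi.sub_apply, shiftedParts, Pi.single_eq_same, ← heq]
    omega

lemma powerSumOp_one_pow_apply_shiftedParts {f : (Fin k → ℤ) → ℤ} (hf : f ∈ skewFunctions k)
    {s : ℕ} {S : Finset (List ℕ)} (hS : ∀ μ, μ ∈ S ↔ IsPartition μ ∧ μ.sum = s) {m : ℕ}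
    (hl : IsPartition l) (hk : l.length ≤ k) (hs : l.sum = s + m) :
    (powerSumOp k 1 ^ m) f (shiftedParts k l) =
      ∑ μ ∈ S, (numPaths μ l : ℤ) * f (shiftedParts k μ) := by
  induction m generalizing l with
  | zero =>
    have hlS : l ∈ S := (hS l).2 ⟨hl, hs⟩
    have hpaths : ∀ μ ∈ S, numPaths μ l = if μ = l then 1 else 0 :=
      fun μ hμ => numPaths_of_sum_eq (hs.trans ((hS μ).1 hμ).2.symm)
    rw [Finset.sum_congr rfl fun μ hμ => by rw [hpaths μ hμ]]
    simp [hlS]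
  | succ m ih =>
    have hmem : (powerSumOp k 1 ^ m) f ∈ skewFunctions k :=
      Module.End.pow_apply_mem_of_forall_mem m (fun _ => powerSumOp_mem_skewFunctions 1) f hf
    have hterm (i : Fin k) : (powerSumOp k 1 ^ m) f (shiftedParts k l - Pi.single i 1) =
        ∑ μ ∈ S, ((if IsRemovable l i then numPaths μ (removeBox l i) else 0 : ℕ) : ℤ) *
          f (shiftedParts k μ) := by
      split_ifs with hi
      · rw [← shiftedParts_removeBox hl hi]
        refine ih (hl.removeBox hi) ((length_removeBox_le l i).trans hk) ?_
        have := sum_removeBox_add_one hl hi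
        omega
      · simpa using apply_shiftedParts_sub_single_eq_zero hmem hl hk hi
    rw [pow_succ', Module.End.mul_apply, powerSumOp_apply, Nat.cast_one,
      Finset.sum_congr rfl fun i _ => hterm i, Finset.sum_comm]
    refine Finset.sum_congr rfl fun μ hμ => ?_
    have hlt : μ.sum < l.sum := by
      have := ((hS μ).1 hμ).2
      omega
    rw [numPaths_eq_sum_removeBox hl hk hlt, Nat.cast_sum, Finset.sum_mul]

end ShiftedParts

section Vandermonde

variable {k : ℕ} {l : List ℕ}

lemma vandermondeCoeff_shiftedParts_nil : vandermondeCoeff k (shiftedParts k []) = 1 := by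
  have h : shiftedParts k [] = fun i : Fin k => -(i : ℤ) := by
    ext i
    simp [shiftedParts, partAt]
  rw [h, vandermondeCoeff_neg_val]

lemma lie_vandermondeCoeff_shiftedParts_one :
    ⁅contentOp k, powerSumOp k 1⁆ (vandermondeCoeff k) (shiftedParts k [1]) = 0 := by
  rw [lie_contentOp_powerSumOp_one_apply]
  refine Finset.sum_eq_zero fun i _ => ?_
  rcases Nat.eq_zero_or_pos i with hi | hi
  · simp [shiftedParts, partAt, hi]
  · rw [vandermondeCoeff_eq_zero_of_pos (i := ⟨0, hi.trans i.2⟩), mul_zero]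
    simp [shiftedParts, partAt, Fin.ext_iff, hi.ne]

lemma powerSumOp_two_vandermondeCoeff_shiftedParts_two (hk : 0 < k) :
    powerSumOp k 2 (vandermondeCoeff k) (shiftedParts k [2]) = 1 := by
  rw [powerSumOp_apply, Fintype.sum_eq_single ⟨0, hk⟩]
  · convert vandermondeCoeff_shiftedParts_nil (k := k) using 2
    ext j
    rcases j with ⟨_ | j, hj⟩ <;> simp [shiftedParts, partAt]
  · intro i hi
    refine vandermondeCoeff_eq_zero_of_pos (i := ⟨0, hk⟩) ?_
    simp [shiftedParts, partAt, hi.symm]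

-- Lowering the first coordinate `1` by two gives the coordinates of `∅` with the first two swapped.
lemma powerSumOp_two_vandermondeCoeff_shiftedParts_one_one (hk : 1 < k) :
    powerSumOp k 2 (vandermondeCoeff k) (shiftedParts k [1, 1]) = -1 := by
  have hk₀ : 0 < k := zero_lt_one.trans hk
  rw [powerSumOp_apply, Fintype.sum_eq_single ⟨0, hk₀⟩]
  · have hswap : shiftedParts k [1, 1] - Pi.single ⟨0, hk₀⟩ ((2 : ℕ) : ℤ) =
        shiftedParts k [] ∘ Equiv.swap ⟨0, hk₀⟩ ⟨1, hk⟩ := by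
      ext j
      rcases j with ⟨_ | _ | j, hj⟩ <;>
        simp [shiftedParts, partAt, Equiv.swap_apply_def, Fin.ext_iff]
    rw [hswap, vandermondeCoeff_mem_skewFunctions.1, vandermondeCoeff_shiftedParts_nil,
      Equiv.Perm.sign_swap (by simp)]
    simp
  · intro i hi
    refine vandermondeCoeff_eq_zero_of_pos (i := ⟨0, hk₀⟩) ?_
    simp [shiftedParts, partAt, hi.symm]

lemma powerSumOp_one_pow_vandermondeCoeff (hl : IsPartition l) (hk : l.length ≤ k) :
    (powerSumOp k 1 ^ l.sum) (vandermondeCoeff k) (shiftedParts k l) = numPaths [] l := by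
  rw [powerSumOp_one_pow_apply_shiftedParts vandermondeCoeff_mem_skewFunctions (S := {[]}) (s := 0)
    (by simp [IsPartition.and_sum_eq_zero_iff]) hl hk (by simp)]
  simp [vandermondeCoeff_shiftedParts_nil]

lemma powerSumOp_one_pow_contentOp_vandermondeCoeff (hl : IsPartition l) (hk : l.length ≤ k) :
    (powerSumOp k 1 ^ l.sum) (contentOp k (vandermondeCoeff k)) (shiftedParts k l) = 0 := by
  rw [powerSumOp_one_pow_apply_shiftedParts
    (contentOp_mem_skewFunctions vandermondeCoeff_mem_skewFunctions) (S := {[]}) (s := 0)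
    (by simp [IsPartition.and_sum_eq_zero_iff]) hl hk (by simp)]
  simp [contentOp_apply, twiceContent_shiftedParts, contentSum]

lemma sum_mul_powerSumOp_one_pow_lie_vandermondeCoeff (hl : IsPartition l) (hk : l.length ≤ k) :
    (l.sum : ℤ) * (powerSumOp k 1 ^ (l.sum - 1))
      (⁅contentOp k, powerSumOp k 1⁆ (vandermondeCoeff k)) (shiftedParts k l) = 0 := by
  rcases Nat.eq_zero_or_pos l.sum with h | h
  · simp [h]
  · rw [powerSumOp_one_pow_apply_shiftedParts (lie_contentOp_powerSumOp_mem_skewFunctions 1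
      vandermondeCoeff_mem_skewFunctions) (S := {[1]}) (s := 1)
      (by simp [IsPartition.and_sum_eq_one_iff]) hl hk (by omega)]
    simp [lie_vandermondeCoeff_shiftedParts_one]

lemma choose_mul_powerSumOp_one_pow_powerSumOp_two_vandermondeCoeff (hl : IsPartition l)
    (hk : l.length ≤ k) (hk' : 1 < k) :
    (l.sum.choose 2 : ℤ) * (powerSumOp k 1 ^ (l.sum - 2))
      (powerSumOp k 2 (vandermondeCoeff k)) (shiftedParts k l) =
      l.sum.choose 2 * (numPaths [2] l - numPaths [1, 1] l) := by
  rcases lt_or_ge l.sum 2 with h | h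
  · simp [Nat.choose_eq_zero_of_lt h]
  · rw [powerSumOp_one_pow_apply_shiftedParts (powerSumOp_mem_skewFunctions 2
      vandermondeCoeff_mem_skewFunctions) (S := {[2], [1, 1]}) (s := 2)
      (by simp [IsPartition.and_sum_eq_two_iff]) hl hk (by omega)]
    simp [powerSumOp_two_vandermondeCoeff_shiftedParts_two (zero_lt_one.trans hk'),
      powerSumOp_two_vandermondeCoeff_shiftedParts_one_one hk', sub_eq_add_neg]

end Vandermonde

/-- `F_λ · c(λ) = C(|λ|, 2) · (F_{λ/(2)} − F_{λ/(1,1)})`. -/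
theorem F_mul_contentSum (l : List ℕ) (hl : IsPartition l) :
    (numPaths [] l : ℤ) * contentSum l =
      (l.sum.choose 2 : ℤ) * ((numPaths [2] l : ℤ) - (numPaths [1, 1] l : ℤ)) := by
  have hk : l.length ≤ l.length + 2 := Nat.le_add_right _ _
  have h := twiceContent_mul_powerSumOp_one_pow_apply l.sum (vandermondeCoeff (l.length + 2))
    (shiftedParts (l.length + 2) l)
  rw [twiceContent_shiftedParts hk, powerSumOp_one_pow_vandermondeCoeff hl hk,
    powerSumOp_one_pow_contentOp_vandermondeCoeff hl hk,
    sum_mul_powerSumOp_one_pow_lie_vandermondeCoeff hl hk,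
    choose_mul_powerSumOp_one_pow_powerSumOp_two_vandermondeCoeff hl hk (by omega)] at h
  linarith
end
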